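/- arXiv:1907.02225 — 2 statements merged into one kernel-verified Lean document; each statement's English description precedes it below -/
import Mathlib

section
/- Let n ≥ 2 and let P be a uniformly distributed projection in Proj_𝔽(n,2n). Let P̃ be the top-left 2×2 submatrix of P, with eigenvalues λ₁ ≥ λ₂, and let D_Sep = {(x,y) : 0 ≤ y < 1/2 < x ≤ 1}. Then P((λ₁,λ₂) ∈ D_Sep) = B((n−1)/2,(n−1)/2)/(2^n·B(n−1,n−1)) if 𝔽 = ℝ, and P((λ₁,λ₂) ∈ D_Sep) = 1/2 + (8n−4)/((n−1)²·2^{4n−3}·B(n−1,n−1)²) if 𝔽 = ℂ; moreover these probabilities converge to 1/√2 and to 1/2 + 1/π respectively as n → ∞. -/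
/-!
Let `R = 2P - 1`, a random reflection whose eigenvalues `1` and `-1` have multiplicity `n` each.
The `2 × 2` corner of `P` has its eigenvalues in `[0, 1]`, so they are separated by `1/2` exactly
when the corner of `R`, with diagonal `α`, `γ` and off-diagonal entry `β`, has determinant
`αγ - |β|² < 0`.

Only the unitary invariance of the law of `P` is available, and it is exploited by evaluating `R`
at an independent Gaussian vector `v`, whose law is unitarily invariant too. By Fubini one may
then fix `P` and integrate over `v`, where only the spectrum of a Hermitian form matters. Applied
to `v* R v / |v|²` this shows that `α` is distributed as `(X - Y) / (X + Y)` with `X`, `Y`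
independent Gamma variables, that is, `α` has density proportional to `(1 - c²) ^ (a - 1)` with
`a` half the real dimension of `𝕜 ^ n`. Applied to the form `α v* R v - |e₁* R v|²`, whose
eigenvalues are `0`, `-1`, and `α`, `-α` with multiplicity `n - 1`, it shows that the determinant
has the sign of `α (X - Y) - G` with Gamma variables `X`, `Y`, `G` that are independent of each
other and of `α`.

Over `ℂ` the variable `G` is exponential, so the integral over `G`, `X` and `Y` is elementary, and
the hyperbolic translation `b ↦ (c + b) / (1 + c b)` evaluates the remaining double integral.

Over `ℝ` a Crofton argument is used. Rotating `e₁` in the plane of `e₁` and `e₂` makes `α` sweep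
the interval between the eigenvalues of the corner with speed proportional to `|β|`, so for every
test function `φ` one has `π E[φ(α) |β|] = ∫ φ(s) p(s) ds`, where `p(s)` is the probability that
`s` lies strictly between the eigenvalues. Given `α`, the remaining entries of the first row of
`R` are uniform on a sphere of radius `√(1 - α²)`, so the left-hand side is a constant times
`E[φ(α) √(1 - α²)]`, and the density of `α` determines `p` almost everywhere. Since the
determinant almost surely does not vanish, `p` is continuous at `0`, and `p(0)` is the probability
in question.

Both constants simplify through `g(x) = Γ(x + 1/2) / Γ(x)`, and the limits follow from
`g(x) ~ √x`, a consequence of the log-convexity of `Γ`.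
-/

open MeasureTheory ProbabilityTheory Matrix
open scoped ComplexOrder

noncomputable section

attribute [local instance] Classical.propDecidable

variable {𝕜 : Type} [RCLike 𝕜]

/-- The measurable space structure on matrices (entrywise). -/
instance matrixMeasurableSpace {d : ℕ} : MeasurableSpace (Matrix (Fin d) (Fin d) 𝕜) :=
  inferInstanceAs (MeasurableSpace (Fin d → Fin d → 𝕜))

/-- `β = 1/2` for `𝔽 = ℝ` and `β = 1` for `𝔽 = ℂ`. -/
def fieldBeta (𝕜 : Type) [RCLike 𝕜] : ℝ := (Module.finrank ℝ 𝕜 : ℝ) / 2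

/-- `P` is an orthogonal projection of rank `k`. -/
def IsProjOfRank {d : ℕ} (k : ℕ) (P : Matrix (Fin d) (Fin d) 𝕜) : Prop :=
  P.IsHermitian ∧ P * P = P ∧ P.rank = k

/-- `ν` is the uniform (rotation invariant) probability distribution on the set of
rank-`k` orthogonal projections on `𝔽^d`. -/
def IsUniformProj {d : ℕ} (k : ℕ) (ν : Measure (Matrix (Fin d) (Fin d) 𝕜)) : Prop :=
  IsProbabilityMeasure ν ∧ (∀ᵐ P ∂ν, IsProjOfRank k P) ∧
    ∀ U ∈ Matrix.unitaryGroup (Fin d) 𝕜,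
      ν.map (fun P => U * P * star U) = ν

/-- The real number `tr (P X)`. -/
def traceInner {d : ℕ} (P X : Matrix (Fin d) (Fin d) 𝕜) : ℝ := RCLike.re (P * X).trace

/-- The proximally flipped projection `P̂(X)`. -/
def flipProj {d : ℕ} (P X : Matrix (Fin d) (Fin d) 𝕜) : Matrix (Fin d) (Fin d) 𝕜 :=
  if (1:ℝ)/2 ≤ traceInner P X then P else 1 - P

/-- The empirical average `Q̂_𝒫(X)` of the proximally flipped projections. -/
def Qhat {d m : ℕ} (P : Fin m → Matrix (Fin d) (Fin d) 𝕜)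
    (X : Matrix (Fin d) (Fin d) 𝕜) : Matrix (Fin d) (Fin d) 𝕜 :=
  ((m : 𝕜)⁻¹) • ∑ j, flipProj (P j) X

/-- Entrywise expectation of a random matrix. -/
def matExp {Ω : Type} [MeasurableSpace Ω] (μ : Measure Ω) {d : ℕ}
    (f : Ω → Matrix (Fin d) (Fin d) 𝕜) : Matrix (Fin d) (Fin d) 𝕜 :=
  Matrix.of fun i j => ∫ ω, f ω i j ∂μ

/-- The Euler Beta function. -/
def eulerBeta (a b : ℝ) : ℝ := ∫ t in (0:ℝ)..1, t ^ (a - 1) * (1 - t) ^ (b - 1)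

def mu1R (b : ℝ) (n : ℕ) : ℝ :=
  1/2 + 1 / (b * n * (4:ℝ) ^ (b * n) * eulerBeta (b * n) (b * n))

def mu2R (b : ℝ) (n : ℕ) : ℝ :=
  1/2 - 1 / (b * n * (2 * n - 1) * (4:ℝ) ^ (b * n) * eulerBeta (b * n) (b * n))

def mu1 (𝕜 : Type) [RCLike 𝕜] (n : ℕ) : ℝ := mu1R (fieldBeta 𝕜) n

def mu2 (𝕜 : Type) [RCLike 𝕜] (n : ℕ) : ℝ := mu2R (fieldBeta 𝕜) n

/-- The operator norm (ℓ² → ℓ²) of a matrix. -/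
def opNorm {d : ℕ} (A : Matrix (Fin d) (Fin d) 𝕜) : ℝ :=
  ‖Matrix.toEuclideanCLM (𝕜 := 𝕜) A‖

/-- `Xhat` is a solution of the principal eigenspace program for the matrix `M`:
a rank-one orthogonal projection maximizing `Y ↦ tr (M Y)` over all positive semidefinite
`Y` with `tr Y ≤ 1`. -/
def IsPEP {d : ℕ} (M Xhat : Matrix (Fin d) (Fin d) 𝕜) : Prop :=
  IsProjOfRank 1 Xhat ∧
    ∀ Y : Matrix (Fin d) (Fin d) 𝕜, Y.PosSemidef → RCLike.re Y.trace ≤ 1 →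
      RCLike.re (M * Y).trace ≤ RCLike.re (M * Xhat).trace

/-- The binary question `φ_P` with strict threshold. -/
def phiGT {d : ℕ} (P X : Matrix (Fin d) (Fin d) 𝕜) : Bool := (1:ℝ)/2 < traceInner P X

/-- The binary question `φ_P` with non-strict threshold. -/
def phiGE {d : ℕ} (P X : Matrix (Fin d) (Fin d) 𝕜) : Bool := (1:ℝ)/2 ≤ traceInner P X

/-- The normalized measurement Hamming distance `d_𝒫(X,Y)`. -/
def hamDist {d m : ℕ} (P : Fin m → Matrix (Fin d) (Fin d) 𝕜)
    (X Y : Matrix (Fin d) (Fin d) 𝕜) : ℝ :=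
  (m:ℝ)⁻¹ * ∑ j, if phiGT (P j) X ≠ phiGT (P j) Y then 1 else 0

/-- `P` `t`-separates `X` and `Y`. -/
def softSep {d : ℕ} (t : ℝ) (X Y P : Matrix (Fin d) (Fin d) 𝕜) : Prop :=
  (traceInner P X + t < 1/2 ∧ 1/2 ≤ traceInner P Y - t) ∨
  (traceInner P Y + t < 1/2 ∧ 1/2 ≤ traceInner P X - t)

/-- The `t`-soft Hamming distance `d^t_𝒫(X,Y)`. -/
def softHam {d m : ℕ} (t : ℝ) (P : Fin m → Matrix (Fin d) (Fin d) 𝕜)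
    (X Y : Matrix (Fin d) (Fin d) 𝕜) : ℝ :=
  (m:ℝ)⁻¹ * ∑ j, if softSep t X Y (P j) then 1 else 0

/-- The faulty empirical average built from the bit vector `b`. -/
def Qtilde {d m : ℕ} (P : Fin m → Matrix (Fin d) (Fin d) 𝕜) (b : Fin m → Bool) :
    Matrix (Fin d) (Fin d) 𝕜 :=
  ((m : 𝕜)⁻¹) • ∑ j, (if b j then P j else 1 - P j)

/-- Normalized Hamming distance between bit vectors. -/
def bitHamDist {m : ℕ} (a b : Fin m → Bool) : ℝ :=
  (m:ℝ)⁻¹ * ∑ j, if a j ≠ b j then 1 else 0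

/-- The larger eigenvalue of a `2 × 2` Hermitian matrix. -/
def lam1 {𝕜 : Type} [RCLike 𝕜] (M : Matrix (Fin 2) (Fin 2) 𝕜) : ℝ :=
  (RCLike.re M.trace + Real.sqrt ((RCLike.re M.trace)^2 - 4 * RCLike.re M.det)) / 2

/-- The smaller eigenvalue of a `2 × 2` Hermitian matrix. -/
def lam2 {𝕜 : Type} [RCLike 𝕜] (M : Matrix (Fin 2) (Fin 2) 𝕜) : ℝ :=
  (RCLike.re M.trace - Real.sqrt ((RCLike.re M.trace)^2 - 4 * RCLike.re M.det)) / 2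

/-- The top-left `2 × 2` submatrix. -/
def topLeft2 {𝕜 : Type} [RCLike 𝕜] {d : ℕ} (h : 2 ≤ d) (P : Matrix (Fin d) (Fin d) 𝕜) :
    Matrix (Fin 2) (Fin 2) 𝕜 :=
  Matrix.of fun i j => P (Fin.castLE h i) (Fin.castLE h j)

/-- The event that the eigenvalue pair of the top-left `2 × 2` submatrix lies in
`D_Sep = {(x,y) : 0 ≤ y < 1/2 < x ≤ 1}`. -/
def sepEvent {𝕜 : Type} [RCLike 𝕜] {d : ℕ} (h : 2 ≤ d) : Set (Matrix (Fin d) (Fin d) 𝕜) :=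
  {P | 0 ≤ lam2 (topLeft2 h P) ∧ lam2 (topLeft2 h P) < 1/2 ∧
       1/2 < lam1 (topLeft2 h P) ∧ lam1 (topLeft2 h P) ≤ 1}

/-- Closed form of the probability in the real case. -/
def sepProbR (n : ℕ) : ℝ :=
  eulerBeta (((n:ℝ) - 1)/2) (((n:ℝ) - 1)/2) / (2^n * eulerBeta ((n:ℝ) - 1) ((n:ℝ) - 1))

/-- Closed form of the probability in the complex case. -/
def sepProbC (n : ℕ) : ℝ :=
  1/2 + (8*(n:ℝ) - 4) /
    (((n:ℝ) - 1)^2 * (2:ℝ) ^ ((4:ℝ)*n - 3) * eulerBeta ((n:ℝ) - 1) ((n:ℝ) - 1) ^ 2)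

/-! ### Gamma, Beta and Gaussian laws -/

lemma measurable_gammaPDF (a r : ℝ) : Measurable (gammaPDF a r) := by
  unfold gammaPDF
  fun_prop

lemma measurable_betaPDF (a b : ℝ) : Measurable (betaPDF a b) :=
  (measurable_betaPDFReal a b).ennreal_ofReal

lemma lintegral_gammaMeasure {a r : ℝ} {f : ℝ → ENNReal} (hf : Measurable f) :
    ∫⁻ x, f x ∂gammaMeasure a r = ∫⁻ x, gammaPDF a r x * f x :=
  lintegral_withDensity_eq_lintegral_mul _ (measurable_gammaPDF a r) hf

lemma setLIntegral_Ioi_gammaPDF (a r : ℝ) (f : ℝ → ENNReal) :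
    ∫⁻ x in Set.Ioi 0, gammaPDF a r x * f x = ∫⁻ x, gammaPDF a r x * f x := by
  rw [setLIntegral_congr (Ioi_ae_eq_Ici (a := (0 : ℝ)))]
  refine setLIntegral_eq_of_support_subset fun x hx => Set.mem_Ici.2 (not_lt.1 fun h => hx ?_)
  simp only [gammaPDF_of_neg h, zero_mul]

lemma ae_gammaMeasure_pos (a r : ℝ) : ∀ᵐ x ∂gammaMeasure a r, 0 < x := by
  refine (ae_withDensity_iff (measurable_gammaPDF a r)).2 ?_
  filter_upwards [volume.ae_ne 0] with x hx0 hx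
  exact (le_of_not_gt fun h => hx (gammaPDF_of_neg h)).lt_of_ne' hx0

lemma lintegral_betaMeasure {a b : ℝ} {f : ℝ → ENNReal} (hf : Measurable f) :
    ∫⁻ s, f s ∂betaMeasure a b = ∫⁻ s, betaPDF a b s * f s :=
  lintegral_withDensity_eq_lintegral_mul _ (measurable_betaPDF a b) hf

lemma mul_gammaPDFReal_mul_gammaPDFReal {a b r t s : ℝ} (ha : 0 < a) (hb : 0 < b) (hr : 0 < r)
    (ht : 0 < t) (hs : 0 < s) (hs' : s < 1) :
    t * (gammaPDFReal a r (t * s) * gammaPDFReal b r (t * (1 - s))) =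
      gammaPDFReal (a + b) r t * betaPDFReal a b s := by
  have hs'' : 0 < 1 - s := sub_pos.2 hs'
  have h_exp : Real.exp (-(r * t)) =
      Real.exp (-(r * (t * s))) * Real.exp (-(r * (t * (1 - s)))) := by
    rw [← Real.exp_add]
    congr 1
    ring
  have h_pow : t ^ (a + b - 1) = t * t ^ (a - 1) * t ^ (b - 1) := by
    rw [mul_comm t, ← Real.rpow_add_one ht.ne', ← Real.rpow_add ht]
    congr 1
    ring
  have hΓa := (Real.Gamma_pos_of_pos ha).ne'
  have hΓb := (Real.Gamma_pos_of_pos hb).ne'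
  have hΓab := (Real.Gamma_pos_of_pos (add_pos ha hb)).ne'
  simp only [gammaPDFReal, betaPDFReal, beta, (mul_pos ht hs).le, (mul_pos ht hs'').le, ht.le,
    hs, hs', and_self, if_true, Real.mul_rpow ht.le hs.le, Real.mul_rpow ht.le hs''.le,
    Real.rpow_add hr, h_pow, h_exp]
  field_simp

lemma mul_gammaPDF_mul_gammaPDF {a b r t s : ℝ} (ha : 0 < a) (hb : 0 < b) (hr : 0 < r)
    (ht : t ≠ 0) (hs : s ≠ 0) (hs' : s ≠ 1) :
    ENNReal.ofReal |t| * (gammaPDF a r (t * s) * gammaPDF b r (t * (1 - s))) =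
      gammaPDF (a + b) r t * betaPDF a b s := by
  rcases ht.lt_or_gt with ht | ht
  · rw [gammaPDF_of_neg ht, zero_mul]
    rcases hs.lt_or_gt with hs | hs
    · rw [gammaPDF_of_neg (x := t * (1 - s)) (mul_neg_of_neg_of_pos ht (by linarith)),
        mul_zero, mul_zero]
    · rw [gammaPDF_of_neg (mul_neg_of_neg_of_pos ht hs), zero_mul, mul_zero]
  rcases hs.lt_or_gt with hs | hs
  · rw [gammaPDF_of_neg (mul_neg_of_pos_of_neg ht hs), betaPDF_eq_zero_of_nonpos hs.le, zero_mul,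
      mul_zero, mul_zero]
  rcases hs'.lt_or_gt with hs' | hs'
  · simp only [gammaPDF, betaPDF]
    rw [abs_of_pos ht, ← ENNReal.ofReal_mul (gammaPDFReal_nonneg ha hr _),
      ← ENNReal.ofReal_mul ht.le, ← ENNReal.ofReal_mul (gammaPDFReal_nonneg (add_pos ha hb) hr _),
      mul_gammaPDFReal_mul_gammaPDFReal ha hb hr ht hs hs']
  · rw [gammaPDF_of_neg (mul_neg_of_pos_of_neg ht (sub_neg.2 hs')),
      betaPDF_eq_zero_of_one_le hs'.le, mul_zero, mul_zero, mul_zero]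

lemma lintegral_eq_ofReal_abs_mul_lintegral_comp_mul {t : ℝ} (ht : t ≠ 0) {f : ℝ → ENNReal}
    (hf : Measurable f) : ∫⁻ x, f x = ENNReal.ofReal |t| * ∫⁻ s, f (t * s) := by
  nth_rw 1 [← Real.smul_map_volume_mul_left ht]
  rw [lintegral_smul_measure, lintegral_map hf (by fun_prop), smul_eq_mul]

/-- Lukacs: for independent Gamma variables `X`, `Y` of equal rate, `X + Y` and `X / (X + Y)` are
independent. -/
theorem lintegral_gammaMeasure_lintegral_gammaMeasure {a b r : ℝ} (ha : 0 < a) (hb : 0 < b)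
    (hr : 0 < r) {f : ℝ → ℝ → ENNReal} (hf : Measurable (Function.uncurry f)) :
    ∫⁻ x, ∫⁻ y, f x y ∂gammaMeasure b r ∂gammaMeasure a r =
      ∫⁻ t, ∫⁻ s, f (t * s) (t * (1 - s)) ∂betaMeasure a b ∂gammaMeasure (a + b) r := by
  have hpa := measurable_gammaPDF a r
  have hpb := measurable_gammaPDF b r
  have hpβ := measurable_betaPDF a b
  have hβ := isProbabilityMeasureBeta ha hb
  have hγ := isProbabilityMeasure_gammaMeasure hb hr
  have hinner : Measurable fun t => ∫⁻ s, f (t * s) (t * (1 - s)) ∂betaMeasure a b :=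
    Measurable.lintegral_prod_right' (f := fun p : ℝ × ℝ => f (p.1 * p.2) (p.1 * (1 - p.2)))
      (by fun_prop)
  have hrow (x : ℝ) : Measurable (f x) := by fun_prop
  calc ∫⁻ x, ∫⁻ y, f x y ∂gammaMeasure b r ∂gammaMeasure a r
      = ∫⁻ x, ∫⁻ y, gammaPDF a r x * (gammaPDF b r y * f x y) := by
        rw [lintegral_gammaMeasure (f := fun x => ∫⁻ y, f x y ∂gammaMeasure b r)
          hf.lintegral_prod_right']
        refine lintegral_congr fun x => ?_
        rw [lintegral_gammaMeasure (hrow x), lintegral_const_mul _ (by fun_prop)]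
    _ = ∫⁻ x, ∫⁻ t, gammaPDF a r x * (gammaPDF b r (t - x) * f x (t - x)) :=
        lintegral_congr fun x => (lintegral_sub_right_eq_self
          (fun y => gammaPDF a r x * (gammaPDF b r y * f x y)) x).symm
    _ = ∫⁻ t, ∫⁻ x, gammaPDF a r x * (gammaPDF b r (t - x) * f x (t - x)) :=
        lintegral_lintegral_swap (by fun_prop)
    _ = ∫⁻ t, gammaPDF (a + b) r t * ∫⁻ s, betaPDF a b s * f (t * s) (t * (1 - s)) := by
        refine lintegral_congr_ae ((Measure.ae_ne volume 0).mono fun t ht => ?_)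
        dsimp only
        rw [lintegral_eq_ofReal_abs_mul_lintegral_comp_mul ht (by fun_prop),
          ← lintegral_const_mul _ (by fun_prop), ← lintegral_const_mul _ (by fun_prop)]
        refine lintegral_congr_ae ?_
        filter_upwards [Measure.ae_ne volume 0, Measure.ae_ne volume 1] with s hs hs'
        rw [← mul_assoc (gammaPDF (a + b) r t), ← mul_gammaPDF_mul_gammaPDF ha hb hr ht hs hs',
          show t - t * s = t * (1 - s) by ring]
        ring
    _ = ∫⁻ t, ∫⁻ s, f (t * s) (t * (1 - s)) ∂betaMeasure a b ∂gammaMeasure (a + b) r := by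
        rw [lintegral_gammaMeasure hinner]
        refine lintegral_congr fun t => ?_
        rw [lintegral_betaMeasure (by fun_prop)]

lemma lintegral_gammaMeasure_add {a b r : ℝ} (ha : 0 < a) (hb : 0 < b) (hr : 0 < r)
    {f : ℝ → ENNReal} (hf : Measurable f) :
    ∫⁻ x, ∫⁻ y, f (x + y) ∂gammaMeasure b r ∂gammaMeasure a r =
      ∫⁻ t, f t ∂gammaMeasure (a + b) r := by
  have hβ := isProbabilityMeasureBeta ha hb
  rw [lintegral_gammaMeasure_lintegral_gammaMeasure ha hb hr (by fun_prop)]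
  refine lintegral_congr fun t => ?_
  simp only [← mul_add, add_sub_cancel, mul_one, lintegral_const, measure_univ]

lemma lintegral_pi_gammaMeasure_sum {a r : ℝ} (ha : 0 < a) (hr : 0 < r) (n : ℕ)
    {f : ℝ → ENNReal} (hf : Measurable f) :
    ∫⁻ x, f (∑ i, x i) ∂Measure.pi (fun _ : Fin (n + 1) => gammaMeasure a r) =
      ∫⁻ t, f t ∂gammaMeasure ((n + 1) * a) r := by
  have hγ := isProbabilityMeasure_gammaMeasure ha hr
  induction n generalizing f with
  | zero =>
    simpa using (measurePreserving_eval (fun _ : Fin 1 => gammaMeasure a r) 0).lintegral_comp hf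
  | succ n ih =>
    have hsplit := measurePreserving_piFinSuccAbove (fun _ : Fin (n + 2) => gammaMeasure a r) 0
    calc ∫⁻ x, f (∑ i, x i) ∂Measure.pi (fun _ : Fin (n + 2) => gammaMeasure a r)
        = ∫⁻ p, f (p.1 + ∑ i, p.2 i)
            ∂(gammaMeasure a r).prod (Measure.pi fun _ : Fin (n + 1) => gammaMeasure a r) := by
          rw [← hsplit.lintegral_comp (by fun_prop)]
          refine lintegral_congr fun x => ?_
          rw [Fin.sum_univ_succ]
          rfl
      _ = ∫⁻ x, ∫⁻ t, f (x + t) ∂gammaMeasure ((n + 1) * a) r ∂gammaMeasure a r := by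
          rw [lintegral_prod _ (by fun_prop)]
          exact lintegral_congr fun x => ih (f := fun t => f (x + t)) (by fun_prop)
      _ = ∫⁻ t, f t ∂gammaMeasure (((n + 1 : ℕ) + 1) * a) r := by
          rw [lintegral_gammaMeasure_add ha (by positivity) hr hf]
          push_cast
          congr 2
          ring

lemma lintegral_Ioi_eq_lintegral_comp_sq (f : ℝ → ENNReal) :
    ∫⁻ y in Set.Ioi (0 : ℝ), f y =
      ∫⁻ x in Set.Ioi (0 : ℝ), ENNReal.ofReal (2 * x) * f (x ^ 2) := by
  have h_image : (fun x : ℝ => x ^ 2) '' Set.Ioi 0 = Set.Ioi 0 :=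
    Set.Subset.antisymm (Set.image_subset_iff.2 fun x hx => pow_pos (Set.mem_Ioi.1 hx) 2)
      fun y hy => ⟨√y, Real.sqrt_pos.2 hy, Real.sq_sqrt (Set.mem_Ioi.1 hy).le⟩
  have h_inj : Set.InjOn (fun x : ℝ => x ^ 2) (Set.Ioi 0) := fun x hx y hy h =>
    (pow_left_inj₀ (Set.mem_Ioi.1 hx).le (Set.mem_Ioi.1 hy).le two_ne_zero).1 h
  nth_rw 1 [← h_image]
  rw [lintegral_image_eq_lintegral_abs_deriv_mul measurableSet_Ioi
    (fun x _ => (hasDerivAt_pow 2 x).hasDerivWithinAt) h_inj]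
  refine setLIntegral_congr_fun measurableSet_Ioi fun x hx => ?_
  have hx' : 0 < x := hx
  simp [abs_of_pos hx']

lemma lintegral_eq_setLIntegral_Ioi_add_comp_neg {μ : Measure ℝ} [μ.IsNegInvariant]
    [NullSingletonClass μ] {f : ℝ → ENNReal} (hf : Measurable f) :
    ∫⁻ x, f x ∂μ = ∫⁻ x in Set.Ioi 0, (f x + f (-x)) ∂μ := by
  have h_neg : ∫⁻ x in Set.Ioi 0, f (-x) ∂μ = ∫⁻ x in Set.Iio 0, f x ∂μ := by
    have h := (Measure.measurePreserving_neg μ).setLIntegral_comp_preimage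
      (measurableSet_Iio (a := 0)) hf
    rwa [Set.neg_preimage, Set.neg_Iio, neg_zero] at h
  rw [lintegral_add_left hf, h_neg, setLIntegral_congr Iio_ae_eq_Iic, ← Set.compl_Ioi,
    lintegral_add_compl f measurableSet_Ioi]

lemma two_mul_mul_gammaPDF_half_sq {x : ℝ} (hx : 0 < x) :
    ENNReal.ofReal (2 * x) * gammaPDF (1 / 2) (1 / 2) (x ^ 2) = 2 * gaussianPDF 0 1 x := by
  have h_real : 2 * x * gammaPDFReal (1 / 2) (1 / 2) (x ^ 2) = 2 * gaussianPDFReal 0 1 x := by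
    have h_pow : (x ^ 2) ^ ((1 : ℝ) / 2 - 1) = x⁻¹ := by
      rw [← Real.rpow_natCast, ← Real.rpow_mul hx.le, ← Real.rpow_neg_one]
      norm_num
    have h_exp : -(x - 0) ^ 2 / (2 * (1 : NNReal)) = -(1 / 2 * x ^ 2) := by
      push_cast
      ring
    have h_rpow : ((1 : ℝ) / 2) ^ ((1 : ℝ) / 2) = (√2)⁻¹ := by
      rw [← Real.sqrt_eq_rpow, Real.sqrt_div zero_le_one, Real.sqrt_one, one_div]
    rw [gammaPDFReal, gaussianPDFReal, if_pos (sq_nonneg x), Real.Gamma_one_half_eq, h_pow, h_exp,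
      h_rpow, NNReal.coe_one, mul_one, Real.sqrt_mul zero_le_two]
    field_simp
  rw [gammaPDF, gaussianPDF, ← ENNReal.ofReal_mul (by positivity), h_real,
    ENNReal.ofReal_mul zero_le_two, ENNReal.ofReal_ofNat]

lemma lintegral_gaussianReal_sq {f : ℝ → ENNReal} (hf : Measurable f) :
    ∫⁻ x, f (x ^ 2) ∂gaussianReal 0 1 = ∫⁻ t, f t ∂gammaMeasure (1 / 2) (1 / 2) := by
  have hpdf := measurable_gaussianPDF 0 1
  rw [gaussianReal_of_var_ne_zero 0 one_ne_zero,
    lintegral_withDensity_eq_lintegral_mul _ hpdf (by fun_prop), lintegral_gammaMeasure hf,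
    lintegral_eq_setLIntegral_Ioi_add_comp_neg (by fun_prop),
    ← setLIntegral_Ioi_gammaPDF, lintegral_Ioi_eq_lintegral_comp_sq fun y => _ * f y]
  refine setLIntegral_congr_fun measurableSet_Ioi fun x hx => ?_
  have h_even : gaussianPDF 0 1 (-x) = gaussianPDF 0 1 x := by simp [gaussianPDF, gaussianPDFReal]
  simp only [Pi.mul_apply, neg_sq, h_even, ← two_mul]
  rw [← mul_assoc, ← mul_assoc, two_mul_mul_gammaPDF_half_sq hx]

theorem lintegral_stdGaussian_norm_sq {E : Type*} [NormedAddCommGroup E] [InnerProductSpace ℝ E]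
    [FiniteDimensional ℝ E] [Nontrivial E] [MeasurableSpace E] [BorelSpace E] {f : ℝ → ENNReal}
    (hf : Measurable f) :
    ∫⁻ x, f (‖x‖ ^ 2) ∂stdGaussian E =
      ∫⁻ t, f t ∂gammaMeasure (Module.finrank ℝ E / 2) (1 / 2) := by
  obtain ⟨d, hd⟩ := Nat.exists_eq_succ_of_ne_zero (Module.finrank_pos (R := ℝ) (M := E)).ne'
  let b : OrthonormalBasis (Fin (d + 1)) ℝ E :=
    (stdOrthonormalBasis ℝ E).reindex (finCongr hd)
  have h_sq : MeasurePreserving (fun x : ℝ => x ^ 2) (gaussianReal 0 1)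
      (gammaMeasure (1 / 2) (1 / 2)) :=
    ⟨by fun_prop, Measure.ext_of_lintegral _ fun g hg => by
      rw [lintegral_map hg (by fun_prop), lintegral_gaussianReal_sq hg]⟩
  have hγ := isProbabilityMeasure_gammaMeasure (a := 1 / 2) (r := 1 / 2) (by norm_num) (by norm_num)
  calc ∫⁻ x, f (‖x‖ ^ 2) ∂stdGaussian E
      = ∫⁻ x, f (∑ i, x i ^ 2) ∂Measure.pi fun _ : Fin (d + 1) => gaussianReal 0 1 := by
        rw [stdGaussian_eq_map_pi_orthonormalBasis b, lintegral_map (by fun_prop) (by fun_prop)]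
        refine lintegral_congr fun x => ?_
        rw [← EuclideanSpace.real_norm_sq_eq (WithLp.toLp 2 x), ← b.repr.symm.norm_map,
          ← b.sum_repr_symm]
    _ = ∫⁻ t, f t ∂gammaMeasure (Module.finrank ℝ E / 2) (1 / 2) := by
        rw [(measurePreserving_pi _ _ fun _ => h_sq).lintegral_comp
          (f := fun y => f (∑ i, y i)) (by fun_prop),
          lintegral_pi_gammaMeasure_sum (by norm_num) (by norm_num) d hf, hd]
        push_cast
        ring_nf

/-! ### Gaussian vectors with entries in `𝕜` -/

/-- The squared Euclidean length of a coordinate vector (the norm of `ι → 𝕜` is the sup norm). -/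
def sqLen {ι : Type*} [Fintype ι] (v : ι → 𝕜) : ℝ := ∑ i, ‖v i‖ ^ 2

variable (𝕜) in
/-- The law of a vector of independent standard Gaussian variables in `𝕜`, seen as a real Euclidean
space: if `𝕜 = ℂ`, the real and imaginary parts of each entry have variance `1`. -/
def gauss (ι : Type*) [Fintype ι] : Measure (ι → 𝕜) := Measure.pi fun _ => stdGaussian 𝕜

instance (ι : Type*) [Fintype ι] : IsProbabilityMeasure (gauss 𝕜 ι) :=
  inferInstanceAs (IsProbabilityMeasure (Measure.pi fun _ => stdGaussian 𝕜))

section Gauss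

variable {ι κ : Type*} [Fintype ι] [Fintype κ]

@[fun_prop]
lemma measurable_sqLen : Measurable (sqLen : (ι → 𝕜) → ℝ) := by
  unfold sqLen
  fun_prop

lemma norm_toLp_sq (v : ι → 𝕜) : ‖WithLp.toLp 2 v‖ ^ 2 = sqLen v :=
  EuclideanSpace.norm_sq_eq _

lemma sqLen_eq_zero {v : ι → 𝕜} : sqLen v = 0 ↔ v = 0 := by
  rw [← norm_toLp_sq, sq_eq_zero_iff, norm_eq_zero, WithLp.toLp_eq_zero]

lemma ofReal_sqLen (v : ι → 𝕜) : ((sqLen v : ℝ) : 𝕜) = star v ⬝ᵥ v := by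
  simp [sqLen, dotProduct, RCLike.conj_mul]

lemma sqLen_mulVec_of_conjTranspose_mul_self [DecidableEq ι] {U : Matrix κ ι 𝕜} (hU : Uᴴ * U = 1)
    (v : ι → 𝕜) : sqLen (U *ᵥ v) = sqLen v := by
  have h : ((sqLen (U *ᵥ v) : ℝ) : 𝕜) = (sqLen v : ℝ) := by
    rw [ofReal_sqLen, ofReal_sqLen, star_mulVec, ← dotProduct_mulVec, mulVec_mulVec, hU,
      one_mulVec]
  exact_mod_cast h

lemma map_toLp_gauss : (gauss 𝕜 ι).map (WithLp.toLp 2) = stdGaussian (EuclideanSpace 𝕜 ι) := by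
  have : IsProbabilityMeasure ((gauss 𝕜 ι).map (WithLp.toLp 2)) :=
    Measure.isProbabilityMeasure_map (by fun_prop)
  refine Measure.ext_of_charFun (funext fun t => ?_)
  rw [gauss, charFun_pi]
  simp only [charFun_stdGaussian]
  rw [← Complex.exp_sum]
  congr 1
  rw [← Finset.sum_div, Finset.sum_neg_distrib, ← Complex.ofReal_pow, EuclideanSpace.norm_sq_eq]
  push_cast
  rfl

lemma lintegral_gauss_sqLen [Nonempty ι] {f : ℝ → ENNReal} (hf : Measurable f) :
    ∫⁻ v, f (sqLen v) ∂gauss 𝕜 ι =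
      ∫⁻ t, f t ∂gammaMeasure (fieldBeta 𝕜 * Fintype.card ι) (1 / 2) := by
  have h_rank : (Module.finrank ℝ (EuclideanSpace 𝕜 ι) : ℝ) / 2 =
      fieldBeta 𝕜 * Fintype.card ι := by
    rw [← Module.finrank_mul_finrank ℝ 𝕜, finrank_euclideanSpace, fieldBeta]
    push_cast
    ring
  rw [← h_rank, ← lintegral_stdGaussian_norm_sq hf, ← map_toLp_gauss,
    lintegral_map (by fun_prop) (by fun_prop)]
  simp only [norm_toLp_sq]

lemma measurePreserving_mulVec_gauss [DecidableEq ι] {U : Matrix ι ι 𝕜}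
    (hU : U ∈ unitaryGroup ι 𝕜) :
    MeasurePreserving (fun v => U *ᵥ v) (gauss 𝕜 ι) (gauss 𝕜 ι) := by
  let L : EuclideanSpace 𝕜 ι →ₗᵢ[ℝ] EuclideanSpace 𝕜 ι :=
    { (toLpLin 2 2 U).restrictScalars ℝ with
      norm_map' := fun v => by
        rw [← sq_eq_sq₀ (norm_nonneg _) (norm_nonneg _)]
        exact (norm_toLp_sq _).trans <|
          (sqLen_mulVec_of_conjTranspose_mul_self (mem_unitaryGroup_iff'.1 hU) _).trans
            (norm_toLp_sq _).symm }
  have h_toLp : MeasurePreserving (MeasurableEquiv.toLp 2 (ι → 𝕜)) (gauss 𝕜 ι)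
      (stdGaussian (EuclideanSpace 𝕜 ι)) := ⟨by fun_prop, map_toLp_gauss⟩
  have h_L : MeasurePreserving (L.toLinearIsometryEquiv rfl)
      (stdGaussian (EuclideanSpace 𝕜 ι)) (stdGaussian (EuclideanSpace 𝕜 ι)) :=
    ⟨(L.toLinearIsometryEquiv rfl).continuous.measurable, stdGaussian_map _⟩
  exact (h_toLp.symm.comp h_L).comp h_toLp

lemma measurePreserving_comp_equiv_gauss (e : ι ≃ κ) :
    MeasurePreserving (fun v : κ → 𝕜 => v ∘ e) (gauss 𝕜 κ) (gauss 𝕜 ι) := by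
  have h := measurePreserving_piCongrLeft (fun _ : ι => stdGaussian 𝕜) e.symm
  have h_coe : ⇑(MeasurableEquiv.piCongrLeft (fun _ : ι => 𝕜) e.symm) = fun v => v ∘ e := by
    ext v i
    simpa [MeasurableEquiv.coe_piCongrLeft] using
      Equiv.piCongrLeft_apply_apply (fun _ : ι => 𝕜) e.symm v (e i)
  rwa [h_coe] at h

lemma lintegral_gauss_sum {f : (ι ⊕ κ → 𝕜) → ENNReal} (hf : Measurable f) :
    ∫⁻ v, f v ∂gauss 𝕜 (ι ⊕ κ) =
      ∫⁻ v, ∫⁻ w, f (Sum.elim v w) ∂gauss 𝕜 κ ∂gauss 𝕜 ι := by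
  let e := MeasurableEquiv.sumPiEquivProdPi fun _ : ι ⊕ κ => 𝕜
  have h_split : MeasurePreserving e.symm ((gauss 𝕜 ι).prod (gauss 𝕜 κ)) (gauss 𝕜 (ι ⊕ κ)) :=
    (measurePreserving_sumPiEquivProdPi fun _ : ι ⊕ κ => stdGaussian 𝕜).symm
  rw [← h_split.lintegral_comp hf, lintegral_prod _ (by fun_prop)]
  rfl

lemma exists_equiv_of_map_univ_eq {α : Type*} {e : ι → α} {e' : κ → α}
    (h : Finset.univ.val.map e = Finset.univ.val.map e') : ∃ σ : ι ≃ κ, ∀ i, e' (σ i) = e i := by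
  have h_fiber (x : α) : Nonempty ({i // e i = x} ≃ {k // e' k = x}) := by
    rw [← Fintype.card_eq, Fintype.card_subtype, Fintype.card_subtype]
    simpa [Multiset.count_map, Finset.card_def, eq_comm] using congrArg (Multiset.count x) h
  let σ : ι ≃ κ := (Equiv.sigmaFiberEquiv e).symm.trans
    ((Equiv.sigmaCongrRight fun x => (h_fiber x).some).trans (Equiv.sigmaFiberEquiv e'))
  exact ⟨σ, fun i => ((h_fiber (e i)).some ⟨i, rfl⟩).2⟩

lemma exists_equiv_eigenvalues [DecidableEq ι] {H : Matrix ι ι 𝕜} (hH : H.IsHermitian) {e : κ → ℝ}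
    (he : H.charpoly = ∏ k, (Polynomial.X - Polynomial.C (e k : 𝕜))) :
    ∃ σ : ι ≃ κ, ∀ i, e (σ i) = hH.eigenvalues i := by
  have h_roots : (∏ k, (Polynomial.X - Polynomial.C (e k : 𝕜))).roots =
      Finset.univ.val.map fun k => (e k : 𝕜) := by
    rw [Polynomial.roots_prod _ _ (Finset.prod_ne_zero_iff.2 fun k _ =>
      Polynomial.X_sub_C_ne_zero _)]
    simp [Polynomial.roots_X_sub_C]
  refine exists_equiv_of_map_univ_eq ?_
  have h := hH.roots_charpoly_eq_eigenvalues
  rw [he, h_roots] at h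
  simpa [Multiset.map_map, Function.comp_def] using
    (congrArg (Multiset.map (RCLike.re : 𝕜 → ℝ)) h).symm

lemma dotProduct_mulVec_eigenvectorUnitary [DecidableEq ι] {H : Matrix ι ι 𝕜} (hH : H.IsHermitian)
    (v : ι → 𝕜) :
    star ((hH.eigenvectorUnitary : Matrix ι ι 𝕜) *ᵥ v) ⬝ᵥ
        (H *ᵥ ((hH.eigenvectorUnitary : Matrix ι ι 𝕜) *ᵥ v)) =
      (∑ i, hH.eigenvalues i * ‖v i‖ ^ 2 : ℝ) := by
  have h_diag := hH.conjStarAlgAut_star_eigenvectorUnitary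
  simp only [Unitary.conjStarAlgAut_apply, Unitary.coe_star, star_eq_conjTranspose,
    conjTranspose_conjTranspose] at h_diag
  rw [star_mulVec, ← dotProduct_mulVec, mulVec_mulVec, mulVec_mulVec, h_diag]
  simp only [dotProduct, mulVec_diagonal, Pi.star_apply, RCLike.star_def, Function.comp_apply,
    RCLike.ofReal_sum]
  refine Finset.sum_congr rfl fun i _ => ?_
  rw [mul_left_comm, RCLike.conj_mul]
  push_cast
  rfl

theorem lintegral_gauss_isHermitian [DecidableEq ι] {H : Matrix ι ι 𝕜} (hH : H.IsHermitian)
    {e : κ → ℝ} (he : H.charpoly = ∏ k, (Polynomial.X - Polynomial.C (e k : 𝕜)))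
    {f : ℝ → ℝ → ENNReal} (hf : Measurable (Function.uncurry f)) :
    ∫⁻ v, f (sqLen v) (RCLike.re (star v ⬝ᵥ (H *ᵥ v))) ∂gauss 𝕜 ι =
      ∫⁻ y, f (sqLen y) (∑ k, e k * ‖y k‖ ^ 2) ∂gauss 𝕜 κ := by
  obtain ⟨σ, hσ⟩ := exists_equiv_eigenvalues hH he
  have hU := hH.eigenvectorUnitary.2
  have : Measurable fun v : ι → 𝕜 => RCLike.re (star v ⬝ᵥ (H *ᵥ v)) :=
    Continuous.measurable (by fun_prop)
  rw [← (measurePreserving_mulVec_gauss hU).lintegral_comp (by fun_prop),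
    ← (measurePreserving_comp_equiv_gauss σ.symm).lintegral_comp (by fun_prop)]
  refine lintegral_congr fun y => ?_
  rw [dotProduct_mulVec_eigenvectorUnitary, RCLike.ofReal_re,
    sqLen_mulVec_of_conjTranspose_mul_self (mem_unitaryGroup_iff'.1 hU)]
  congr 1
  · exact (Equiv.sum_comp σ.symm fun k => ‖y k‖ ^ 2).symm
  · rw [← Equiv.sum_comp σ]
    simp [hσ]

end Gauss

/-! ### Reflections and their spectra -/

/-- The reflection `2P - 1` attached to a projection `P`. -/
def reflMat {d : ℕ} (P : Matrix (Fin d) (Fin d) 𝕜) : Matrix (Fin d) (Fin d) 𝕜 := (2 : 𝕜) • P - 1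

/-- The sesquilinear form `u* (2P - 1) v`. -/
def reflForm {d : ℕ} (P : Matrix (Fin d) (Fin d) 𝕜) (u v : Fin d → 𝕜) : 𝕜 :=
  star u ⬝ᵥ (reflMat P *ᵥ v)

/-- The real quadratic form `u* (2P - 1) u`. -/
def reflQuad {d : ℕ} (P : Matrix (Fin d) (Fin d) 𝕜) (u : Fin d → 𝕜) : ℝ :=
  RCLike.re (reflForm P u u)

section Reflection

variable {d : ℕ} {P : Matrix (Fin d) (Fin d) 𝕜}

lemma isHermitian_reflMat (hP : P.IsHermitian) : (reflMat P).IsHermitian := by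
  simp [reflMat, IsHermitian, conjTranspose_smul, hP.eq]

lemma reflMat_mul_self (hP : P * P = P) : reflMat P * reflMat P = 1 := by
  simp only [reflMat, sub_mul, mul_sub, smul_mul_assoc, mul_smul_comm, hP, one_mul, mul_one]
  module

lemma reflForm_single (P : Matrix (Fin d) (Fin d) 𝕜) (i j : Fin d) :
    reflForm P (Pi.single i 1) (Pi.single j 1) = reflMat P i j := by
  simp [reflForm]

lemma star_reflForm (hP : P.IsHermitian) (u v : Fin d → 𝕜) :
    star (reflForm P u v) = reflForm P v u := by
  rw [reflForm, ← star_dotProduct, star_mulVec, (isHermitian_reflMat hP).eq, ← dotProduct_mulVec,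
    reflForm]

lemma ofReal_reflQuad (hP : P.IsHermitian) (v : Fin d → 𝕜) :
    (reflQuad P v : 𝕜) = reflForm P v v :=
  RCLike.conj_eq_iff_re.1 (star_reflForm hP v v)

lemma reflForm_conj (P : Matrix (Fin d) (Fin d) 𝕜) {U : Matrix (Fin d) (Fin d) 𝕜}
    (hU : U ∈ unitaryGroup (Fin d) 𝕜) (u v : Fin d → 𝕜) :
    reflForm (star U * P * U) u v = reflForm P (U *ᵥ u) (U *ᵥ v) := by
  have h_conj : reflMat (star U * P * U) = Uᴴ * reflMat P * U := by
    simp [reflMat, mul_sub, sub_mul, ← star_eq_conjTranspose, mem_unitaryGroup_iff'.1 hU]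
  rw [reflForm, reflForm, h_conj, star_mulVec, ← dotProduct_mulVec, mulVec_mulVec, mulVec_mulVec,
    mul_assoc]

lemma measurable_reflForm {α : Type*} [MeasurableSpace α] {p : α → Matrix (Fin d) (Fin d) 𝕜}
    {u v : α → Fin d → 𝕜} (hp : Measurable p) (hu : Measurable u) (hv : Measurable v) :
    Measurable fun z => reflForm (p z) (u z) (v z) := by
  have h_entry (i j : Fin d) : Measurable fun z => p z i j :=
    (measurable_pi_apply j).comp ((measurable_pi_apply i).comp hp)
  simp only [reflForm, reflMat, dotProduct, mulVec, Pi.star_apply, RCLike.star_def,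
    Matrix.sub_apply, Matrix.smul_apply]
  have h_conj : Measurable (starRingEnd 𝕜) := RCLike.continuous_conj.measurable
  fun_prop

lemma measurable_reflQuad {α : Type*} [MeasurableSpace α] {p : α → Matrix (Fin d) (Fin d) 𝕜}
    {u : α → Fin d → 𝕜} (hp : Measurable p) (hu : Measurable u) :
    Measurable fun z => reflQuad (p z) (u z) :=
  RCLike.measurable_re.comp (measurable_reflForm hp hu hu)

end Reflection

section Spectrum

variable {ι : Type*} [Fintype ι] [DecidableEq ι]

lemma det_smul_one_sub_smul_eq_prod_eigenvalues {H : Matrix ι ι 𝕜} (hH : H.IsHermitian) (a b : 𝕜) :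
    (a • (1 : Matrix ι ι 𝕜) - b • H).det = ∏ i, (a - b * hH.eigenvalues i) := by
  have h_conj : a • (1 : Matrix ι ι 𝕜) - b • H = Unitary.conjStarAlgAut 𝕜 _ hH.eigenvectorUnitary
      (diagonal fun i => a - b * hH.eigenvalues i) := by
    have h_diag : (diagonal fun i => a - b * hH.eigenvalues i : Matrix ι ι 𝕜) =
        a • 1 - b • diagonal (RCLike.ofReal ∘ hH.eigenvalues) := by
      ext i j
      by_cases hij : i = j <;> simp [hij]
    rw [h_diag, map_sub, map_smul, map_smul, map_one, ← hH.spectral_theorem]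
  rw [h_conj, Unitary.conjStarAlgAut_apply, det_mul_right_comm,
    Unitary.mul_star_self_of_mem hH.eigenvectorUnitary.2, one_mul, det_diagonal]

/-- Sylvester's determinant identity for a rank-one perturbation of `c R`, the inverse of
`x - c R` being `(x + c R) / (x ^ 2 - c ^ 2)`. -/
lemma det_smul_one_sub_smul_add_vecMulVec {K : Type*} [Field K] {R : Matrix ι ι K}
    (hR : R * R = 1) {x c : K} (hxc : x ^ 2 - c ^ 2 ≠ 0) (u w : ι → K) :
    (x ^ 2 - c ^ 2) * (x • (1 : Matrix ι ι K) - c • R + vecMulVec u w).det =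
      (x • (1 : Matrix ι ι K) - c • R).det *
        (x ^ 2 - c ^ 2 + (x * (w ⬝ᵥ u) + c * (w ⬝ᵥ (R *ᵥ u)))) := by
  set A := x • (1 : Matrix ι ι K) - c • R
  set B := (x ^ 2 - c ^ 2)⁻¹ • (x • (1 : Matrix ι ι K) + c • R) with hB
  have h_inv : A * B = 1 := by
    have h_mul : A * (x • (1 : Matrix ι ι K) + c • R) = (x ^ 2 - c ^ 2) • 1 := by
      simp only [A, sub_mul, mul_add, smul_mul_assoc, mul_smul_comm, one_mul, mul_one, hR]
      module
    rw [hB, mul_smul_comm, h_mul, smul_smul, inv_mul_cancel₀ hxc, one_smul]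
  have h_dot : w ⬝ᵥ (B *ᵥ u) = (x ^ 2 - c ^ 2)⁻¹ * (x * (w ⬝ᵥ u) + c * (w ⬝ᵥ (R *ᵥ u))) := by
    simp only [hB, smul_mulVec, add_mulVec, one_mulVec, dotProduct_smul, dotProduct_add,
      smul_eq_mul]
  have h_factor : A + vecMulVec u w = A * (1 + vecMulVec (B *ᵥ u) w) := by
    rw [mul_add, mul_one, mul_vecMulVec, mulVec_mulVec, h_inv, one_mulVec]
  rw [h_factor, det_mul, vecMulVec_eq Unit, det_one_add_replicateCol_mul_replicateRow, h_dot]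
  field_simp

lemma charpoly_eq_of_infinite_det_eq {κ K : Type*} [Fintype κ] [Field K] {H : Matrix ι ι K}
    {e : κ → K} {S : Set K} (hS : S.Infinite)
    (h : ∀ x ∈ S, (x • (1 : Matrix ι ι K) - H).det = ∏ k, (x - e k)) :
    H.charpoly = ∏ k, (Polynomial.X - Polynomial.C (e k)) := by
  refine Polynomial.eq_of_infinite_eval_eq _ _ (hS.mono fun x hx => ?_)
  rw [Set.mem_ofPred_eq, Polynomial.eval_prod, eval_charpoly, scalar_apply,
    ← smul_one_eq_diagonal, h x hx]
  simp only [Polynomial.eval_sub, Polynomial.eval_X, Polynomial.eval_C]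

end Spectrum

section Projection

variable {d p q : ℕ} {P : Matrix (Fin d) (Fin d) 𝕜}

lemma eigenvalues_eq_zero_or_one {ι : Type*} [Fintype ι] [DecidableEq ι] {H : Matrix ι ι 𝕜}
    (hH : H.IsHermitian) (h_idem : H * H = H) (i : ι) :
    hH.eigenvalues i = 0 ∨ hH.eigenvalues i = 1 :=
  (show IsIdempotentElem H from h_idem).spectrum_subset ℝ (hH.eigenvalues_mem_spectrum_real i)

lemma IsProjOfRank.det_smul_one_sub_smul (hP : IsProjOfRank p P) (hd : p + q = d) (a b : 𝕜) :
    (a • (1 : Matrix (Fin d) (Fin d) 𝕜) - b • P).det = a ^ q * (a - b) ^ p := by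
  obtain ⟨hH, h_idem, h_rank⟩ := hP
  have h_ne : (Finset.univ.filter fun i => hH.eigenvalues i ≠ 0).card = p := by
    rw [← Fintype.card_subtype, ← hH.rank_eq_card_non_zero_eigs, h_rank]
  have h_eq : (Finset.univ.filter fun i => ¬hH.eigenvalues i ≠ 0).card = q := by
    have h := Finset.card_filter_add_card_filter_not (s := Finset.univ)
      fun i => hH.eigenvalues i ≠ 0
    rw [h_ne, Finset.card_univ, Fintype.card_fin] at h
    omega
  rw [det_smul_one_sub_smul_eq_prod_eigenvalues hH,
    ← Finset.prod_filter_not_mul_prod_filter Finset.univ fun i => hH.eigenvalues i ≠ 0]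
  congr 1
  · rw [← h_eq]
    refine Finset.prod_eq_pow_card fun i hi => ?_
    have h_zero : hH.eigenvalues i = 0 := not_not.1 (Finset.mem_filter.1 hi).2
    simp [h_zero]
  · rw [← h_ne]
    refine Finset.prod_eq_pow_card fun i hi => ?_
    have h_one := (eigenvalues_eq_zero_or_one hH h_idem i).resolve_left (Finset.mem_filter.1 hi).2
    simp [h_one]

lemma IsProjOfRank.det_smul_one_sub_smul_reflMat (hP : IsProjOfRank p P) (hd : p + q = d)
    (x c : 𝕜) :
    (x • (1 : Matrix (Fin d) (Fin d) 𝕜) - c • reflMat P).det = (x + c) ^ q * (x - c) ^ p := by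
  have h_proj : x • (1 : Matrix (Fin d) (Fin d) 𝕜) - c • reflMat P =
      (x + c) • (1 : Matrix (Fin d) (Fin d) 𝕜) - (2 * c) • P := by
    rw [reflMat]
    module
  rw [h_proj, hP.det_smul_one_sub_smul hd]
  ring

lemma IsProjOfRank.charpoly_reflMat (hP : IsProjOfRank p P) (hd : p + q = d) :
    (reflMat P).charpoly = ∏ k : Fin p ⊕ Fin q, (Polynomial.X -
      Polynomial.C ((Sum.elim (fun _ => 1) (fun _ => -1) k : ℝ) : 𝕜)) := by
  refine charpoly_eq_of_infinite_det_eq Set.infinite_univ fun x _ => ?_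
  rw [← one_smul 𝕜 (reflMat P), hP.det_smul_one_sub_smul_reflMat hd, Fintype.prod_sum_type]
  simp [mul_comm]

/-- The Gram determinant of `e` and `v` for the Hermitian form of `R = 2P - 1`; it is negative iff
`R` is indefinite on the span of `e` and `v`. -/
def gramForm (P : Matrix (Fin d) (Fin d) 𝕜) (e v : Fin d → 𝕜) : ℝ :=
  reflQuad P e * reflQuad P v - ‖reflForm P e v‖ ^ 2

/-- The matrix of the Hermitian form `gramForm P e`, a rank-one perturbation of a multiple of
`2P - 1`. -/
def gramMat (P : Matrix (Fin d) (Fin d) 𝕜) (e : Fin d → 𝕜) : Matrix (Fin d) (Fin d) 𝕜 :=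
  (reflQuad P e : 𝕜) • reflMat P - vecMulVec (reflMat P *ᵥ e) (star (reflMat P *ᵥ e))

lemma isHermitian_gramMat (hP : P.IsHermitian) (e : Fin d → 𝕜) : (gramMat P e).IsHermitian := by
  refine IsHermitian.sub ?_ ?_
  · simp [IsHermitian, conjTranspose_smul, (isHermitian_reflMat hP).eq]
  · rw [IsHermitian, conjTranspose_vecMulVec, star_star]

lemma det_smul_one_sub_gramMat {P : Matrix (Fin d) (Fin d) 𝕜}
    (hH : P.IsHermitian) (h_idem : P * P = P) {e : Fin d → 𝕜} (he : sqLen e = 1) {x : 𝕜}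
    (hx : x ^ 2 - (reflQuad P e : 𝕜) ^ 2 ≠ 0) :
    (x ^ 2 - (reflQuad P e : 𝕜) ^ 2) * (x • (1 : Matrix (Fin d) (Fin d) 𝕜) - gramMat P e).det =
      (x • (1 : Matrix (Fin d) (Fin d) 𝕜) - (reflQuad P e : 𝕜) • reflMat P).det *
        (x * (x + 1)) := by
  have hRR := reflMat_mul_self h_idem
  have h_norm : star (reflMat P *ᵥ e) ⬝ᵥ (reflMat P *ᵥ e) = 1 := by
    rw [star_mulVec, ← dotProduct_mulVec, (isHermitian_reflMat hH).eq, mulVec_mulVec, hRR,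
      one_mulVec, ← ofReal_sqLen, he, RCLike.ofReal_one]
  have h_quad : star (reflMat P *ᵥ e) ⬝ᵥ (reflMat P *ᵥ (reflMat P *ᵥ e)) = reflQuad P e := by
    rw [star_mulVec, ← dotProduct_mulVec, (isHermitian_reflMat hH).eq, mulVec_mulVec,
      mulVec_mulVec, hRR, one_mul, ofReal_reflQuad hH, reflForm]
  rw [gramMat, ← sub_add, det_smul_one_sub_smul_add_vecMulVec hRR hx, h_norm, h_quad]
  ring

lemma IsProjOfRank.charpoly_gramMat (hP : IsProjOfRank (p + 1) P) (hd : p + 1 + (q + 1) = d)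
    {e : Fin d → 𝕜} (he : sqLen e = 1) :
    (gramMat P e).charpoly = ∏ k : (Unit ⊕ Unit) ⊕ (Fin p ⊕ Fin q), (Polynomial.X -
      Polynomial.C ((Sum.elim (Sum.elim (fun _ => 0) (fun _ => -1))
        (Sum.elim (fun _ => reflQuad P e) (fun _ => -reflQuad P e)) k : ℝ) : 𝕜)) := by
  set c := reflQuad P e
  have h_infinite : ({(c : 𝕜), -(c : 𝕜)}ᶜ : Set 𝕜).Infinite := (Set.toFinite _).infinite_compl
  refine charpoly_eq_of_infinite_det_eq h_infinite fun x hx => ?_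
  rw [Set.mem_compl_iff, Set.mem_insert_iff, Set.mem_singleton_iff, not_or] at hx
  have hxc : x ^ 2 - (c : 𝕜) ^ 2 ≠ 0 := by
    rw [sq_sub_sq]
    exact mul_ne_zero (fun h => hx.2 (eq_neg_of_add_eq_zero_left h)) (sub_ne_zero.2 hx.1)
  refine mul_left_cancel₀ hxc ?_
  rw [det_smul_one_sub_gramMat hP.1 hP.2.1 he hxc, hP.det_smul_one_sub_smul_reflMat hd]
  simp only [Fintype.prod_sum_type, Sum.elim_inl, Sum.elim_inr, Finset.prod_const,
    Finset.card_univ, Fintype.card_unit, Fintype.card_fin]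
  push_cast
  ring

lemma re_dotProduct_gramMat_mulVec (hP : P.IsHermitian) (e v : Fin d → 𝕜) :
    RCLike.re (star v ⬝ᵥ (gramMat P e *ᵥ v)) = gramForm P e v := by
  have h_star : star (reflMat P *ᵥ e) ⬝ᵥ v = reflForm P e v := by
    rw [star_mulVec, (isHermitian_reflMat hP).eq, ← dotProduct_mulVec, reflForm]
  have h_expand : star v ⬝ᵥ (gramMat P e *ᵥ v) =
      reflQuad P e * reflForm P v v - reflForm P e v * reflForm P v e := by
    rw [gramMat, sub_mulVec, smul_mulVec, vecMulVec_mulVec, h_star, dotProduct_sub,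
      dotProduct_smul, smul_eq_mul, op_smul_eq_smul, dotProduct_smul, smul_eq_mul]
    rfl
  rw [h_expand, ← star_reflForm hP e v, RCLike.star_def, RCLike.mul_conj, map_sub,
    RCLike.re_ofReal_mul, ← RCLike.ofReal_pow, RCLike.ofReal_re, gramForm, reflQuad, reflQuad]

end Projection

/-! ### Rotation invariance and the separation event -/

section GramForm

variable {d : ℕ}

lemma measurable_gramForm {α : Type*} [MeasurableSpace α] {p : α → Matrix (Fin d) (Fin d) 𝕜}
    {u v : α → Fin d → 𝕜} (hp : Measurable p) (hu : Measurable u) (hv : Measurable v) :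
    Measurable fun z => gramForm (p z) (u z) (v z) :=
  ((measurable_reflQuad hp hu).mul (measurable_reflQuad hp hv)).sub
    ((measurable_reflForm hp hu hv).norm.pow_const 2)

lemma reflQuad_smul (P : Matrix (Fin d) (Fin d) 𝕜) (r : 𝕜) (v : Fin d → 𝕜) :
    reflQuad P (r • v) = ‖r‖ ^ 2 * reflQuad P v := by
  have h : reflForm P (r • v) (r • v) = ((‖r‖ ^ 2 : ℝ) : 𝕜) * reflForm P v v := by
    simp only [reflForm, star_smul, mulVec_smul, smul_dotProduct, dotProduct_smul, smul_eq_mul,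
      RCLike.ofReal_pow, ← RCLike.conj_mul, RCLike.star_def]
    ring
  rw [reflQuad, h, RCLike.re_ofReal_mul, reflQuad]

lemma gramForm_add_smul {P : Matrix (Fin d) (Fin d) 𝕜} (hP : P.IsHermitian) (e u : Fin d → 𝕜)
    (a r : 𝕜) : gramForm P e (a • e + r • u) = ‖r‖ ^ 2 * gramForm P e u := by
  have h_det (v : Fin d → 𝕜) : (gramForm P e v : 𝕜) =
      reflForm P e e * reflForm P v v - reflForm P e v * reflForm P v e := by
    rw [← star_reflForm hP e v, RCLike.star_def, RCLike.mul_conj, ← ofReal_reflQuad hP,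
      ← ofReal_reflQuad hP, gramForm]
    push_cast
    rfl
  have h : (gramForm P e (a • e + r • u) : 𝕜) = (‖r‖ ^ 2 * gramForm P e u : ℝ) := by
    rw [RCLike.ofReal_mul, h_det, h_det, RCLike.ofReal_pow, ← RCLike.conj_mul, ← RCLike.star_def]
    simp only [reflForm, star_add, star_smul, mulVec_add, mulVec_smul, add_dotProduct,
      dotProduct_add, smul_dotProduct, dotProduct_smul, smul_eq_mul]
    ring
  exact_mod_cast h

end GramForm

section Invariance

variable {d k : ℕ} {ν : Measure (Matrix (Fin d) (Fin d) 𝕜)}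

lemma inner_toLp (u v : Fin d → 𝕜) :
    inner 𝕜 (WithLp.toLp 2 u) (WithLp.toLp 2 v) = star u ⬝ᵥ v := by
  rw [EuclideanSpace.inner_eq_star_dotProduct, dotProduct_comm]

lemma norm_toLp_eq_one {u : Fin d → 𝕜} (hu : sqLen u = 1) : ‖WithLp.toLp 2 u‖ = 1 := by
  rw [← sq_eq_sq₀ (norm_nonneg _) zero_le_one, norm_toLp_sq, hu, one_pow]

lemma exists_unitary_mulVec_single_eq {s : Set (Fin d)} {w : Fin d → EuclideanSpace 𝕜 (Fin d)}
    (hw : Orthonormal 𝕜 (s.domRestrict w)) :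
    ∃ U ∈ unitaryGroup (Fin d) 𝕜, ∀ l ∈ s, U *ᵥ Pi.single l 1 = w l := by
  obtain ⟨b, hb⟩ := hw.exists_orthonormalBasis_extension_of_card_eq finrank_euclideanSpace
  refine ⟨Matrix.of fun k l => b l k, mem_unitaryGroup_iff'.2 ?_, fun l hl => ?_⟩
  · ext k l
    have h := orthonormal_iff_ite.1 b.orthonormal k l
    rw [EuclideanSpace.inner_eq_star_dotProduct] at h
    rw [one_apply, ← h, dotProduct_comm]
    rfl
  · rw [← hb l hl]
    ext
    simp

lemma exists_unitary_mulVec_single_eq_of_unit (i : Fin d) {u : Fin d → 𝕜} (hu : sqLen u = 1) :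
    ∃ U ∈ unitaryGroup (Fin d) 𝕜, U *ᵥ Pi.single i 1 = u := by
  have h_orth : Orthonormal 𝕜 (({i} : Set (Fin d)).domRestrict fun _ => WithLp.toLp 2 u) :=
    ⟨fun _ => norm_toLp_eq_one hu, fun a b hab => (hab (Subsingleton.elim a b)).elim⟩
  obtain ⟨U, hU, h⟩ := exists_unitary_mulVec_single_eq h_orth
  exact ⟨U, hU, h i rfl⟩

lemma exists_unitary_mulVec_single_eq_of_orthonormal {i j : Fin d} (hij : i ≠ j) {u v : Fin d → 𝕜}
    (hu : sqLen u = 1) (hv : sqLen v = 1) (huv : star u ⬝ᵥ v = 0) :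
    ∃ U ∈ unitaryGroup (Fin d) 𝕜, U *ᵥ Pi.single i 1 = u ∧ U *ᵥ Pi.single j 1 = v := by
  have hvu : star v ⬝ᵥ u = 0 := by rw [star_dotProduct, huv, star_zero]
  have h_orth : Orthonormal 𝕜 (({i, j} : Set (Fin d)).domRestrict fun l =>
      WithLp.toLp 2 (if l = i then u else v)) := by
    rw [orthonormal_iff_ite]
    rintro ⟨a, rfl | rfl⟩ ⟨b, rfl | rfl⟩ <;>
      simp [inner_toLp, norm_toLp_eq_one, huv, hvu, hij, hij.symm, hu, hv, Subtype.ext_iff]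
  obtain ⟨U, hU, h⟩ := exists_unitary_mulVec_single_eq h_orth
  exact ⟨U, hU, by simpa using h i (by simp), by simpa [hij.symm] using h j (by simp)⟩

lemma IsUniformProj.lintegral_conj (hν : IsUniformProj k ν) {U : Matrix (Fin d) (Fin d) 𝕜}
    (hU : U ∈ unitaryGroup (Fin d) 𝕜) {f : Matrix (Fin d) (Fin d) 𝕜 → ENNReal}
    (hf : Measurable f) : ∫⁻ P, f (star U * P * U) ∂ν = ∫⁻ P, f P ∂ν := by
  have h_meas : Measurable fun P : Matrix (Fin d) (Fin d) 𝕜 => star U * P * U := by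
    refine measurable_pi_iff.2 fun i => measurable_pi_iff.2 fun j => ?_
    have (a b : Fin d) : Measurable fun P : Matrix (Fin d) (Fin d) 𝕜 => P a b :=
      (measurable_pi_apply b).comp (measurable_pi_apply a)
    simp only [mul_apply]
    fun_prop
  conv_rhs => rw [← hν.2.2 (star U) (Unitary.star_mem hU), star_star, lintegral_map hf h_meas]

lemma IsUniformProj.lintegral_reflQuad_single (hν : IsUniformProj k ν) (i : Fin d)
    {u : Fin d → 𝕜} (hu : sqLen u = 1) {f : ℝ → ENNReal} (hf : Measurable f) :
    ∫⁻ P, f (reflQuad P (Pi.single i 1)) ∂ν = ∫⁻ P, f (reflQuad P u) ∂ν := by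
  obtain ⟨U, hU, rfl⟩ := exists_unitary_mulVec_single_eq_of_unit i hu
  rw [← hν.lintegral_conj hU]
  · simp only [reflQuad, reflForm_conj _ hU]
  · exact hf.comp (measurable_reflQuad measurable_id measurable_const)

lemma IsUniformProj.lintegral_single_single (hν : IsUniformProj k ν) {i j : Fin d} (hij : i ≠ j)
    {u v : Fin d → 𝕜} (hu : sqLen u = 1) (hv : sqLen v = 1) (huv : star u ⬝ᵥ v = 0)
    {f : ℝ → 𝕜 → ℝ → ENNReal} (hf : Measurable fun z : ℝ × 𝕜 × ℝ => f z.1 z.2.1 z.2.2) :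
    ∫⁻ P, f (reflQuad P (Pi.single i 1)) (reflForm P (Pi.single i 1) (Pi.single j 1))
        (reflQuad P (Pi.single j 1)) ∂ν =
      ∫⁻ P, f (reflQuad P u) (reflForm P u v) (reflQuad P v) ∂ν := by
  obtain ⟨U, hU, rfl, rfl⟩ := exists_unitary_mulVec_single_eq_of_orthonormal hij hu hv huv
  rw [← hν.lintegral_conj hU]
  · simp only [reflQuad, reflForm_conj _ hU]
  · exact hf.comp <| (measurable_reflQuad measurable_id measurable_const).prodMk <|
      (measurable_reflForm measurable_id measurable_const measurable_const).prodMk <|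
        measurable_reflQuad measurable_id measurable_const

end Invariance

section SepEvent

variable {d k : ℕ} {P : Matrix (Fin d) (Fin d) 𝕜}

lemma norm_sq_apply_le_of_posSemidef {M : Matrix (Fin d) (Fin d) 𝕜} (hM : M.PosSemidef)
    (i j : Fin d) : ‖M i j‖ ^ 2 ≤ RCLike.re (M i i) * RCLike.re (M j j) := by
  have h_det := (hM.submatrix ![i, j]).det_nonneg
  simp only [det_fin_two, submatrix_apply, cons_val_zero, cons_val_one] at h_det
  rw [← hM.1.apply j i, RCLike.star_def, RCLike.mul_conj, ← hM.1.coe_re_apply_self i,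
    ← hM.1.coe_re_apply_self j] at h_det
  have h_real : 0 ≤ RCLike.re (M i i) * RCLike.re (M j j) - ‖M i j‖ ^ 2 := by exact_mod_cast h_det
  linarith

lemma IsProjOfRank.posSemidef (hP : IsProjOfRank k P) : P.PosSemidef := by
  have h := posSemidef_conjTranspose_mul_self P
  rwa [hP.1, hP.2.1] at h

lemma IsProjOfRank.posSemidef_one_sub (hP : IsProjOfRank k P) : (1 - P).PosSemidef := by
  have h := posSemidef_conjTranspose_mul_self (1 - P)
  rwa [conjTranspose_sub, conjTranspose_one, hP.1, mul_sub, mul_one, sub_mul, one_mul, hP.2.1,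
    sub_self, sub_zero] at h

lemma re_apply_nonneg_of_posSemidef {M : Matrix (Fin d) (Fin d) 𝕜} (hM : M.PosSemidef)
    (i : Fin d) : 0 ≤ RCLike.re (M i i) :=
  (RCLike.nonneg_iff.1 hM.diag_nonneg).1

lemma gramForm_single (P : Matrix (Fin d) (Fin d) 𝕜) {i j : Fin d} (hij : i ≠ j) :
    gramForm P (Pi.single i 1) (Pi.single j 1) =
      (2 * RCLike.re (P i i) - 1) * (2 * RCLike.re (P j j) - 1) - 4 * ‖P i j‖ ^ 2 := by
  have h_diag (l : Fin d) : reflQuad P (Pi.single l 1) = 2 * RCLike.re (P l l) - 1 := by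
    simp [reflQuad, reflForm_single, reflMat, RCLike.mul_re]
  have h_off : ‖reflForm P (Pi.single i 1) (Pi.single j 1)‖ = 2 * ‖P i j‖ := by
    simp [reflForm_single, reflMat, one_apply_ne hij]
  rw [gramForm, h_diag, h_diag, h_off]
  ring

lemma re_trace_topLeft2 (h : 2 ≤ d) (P : Matrix (Fin d) (Fin d) 𝕜) :
    RCLike.re (topLeft2 h P).trace =
      RCLike.re (P (Fin.castLE h 0) (Fin.castLE h 0)) +
        RCLike.re (P (Fin.castLE h 1) (Fin.castLE h 1)) := by
  simp [topLeft2, trace_fin_two]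

lemma re_det_topLeft2 (h : 2 ≤ d) (hP : P.IsHermitian) :
    RCLike.re (topLeft2 h P).det =
      RCLike.re (P (Fin.castLE h 0) (Fin.castLE h 0)) *
        RCLike.re (P (Fin.castLE h 1) (Fin.castLE h 1)) -
          ‖P (Fin.castLE h 0) (Fin.castLE h 1)‖ ^ 2 := by
  simp only [topLeft2, det_fin_two, of_apply]
  rw [← hP.apply (Fin.castLE h 1) (Fin.castLE h 0), RCLike.star_def, RCLike.mul_conj,
    ← hP.coe_re_apply_self (Fin.castLE h 0), ← hP.coe_re_apply_self (Fin.castLE h 1)]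
  exact_mod_cast RCLike.ofReal_re (K := 𝕜) _

lemma roots_separated_iff {a b s : ℝ} (ha : a ∈ Set.Icc 0 1) (hb : b ∈ Set.Icc 0 1)
    (h_zero : s ≤ a * b) (h_one : s ≤ (1 - a) * (1 - b)) :
    (0 ≤ (a + b - √((a + b) ^ 2 - 4 * (a * b - s))) / 2 ∧
        (a + b - √((a + b) ^ 2 - 4 * (a * b - s))) / 2 < 1 / 2 ∧
        1 / 2 < (a + b + √((a + b) ^ 2 - 4 * (a * b - s))) / 2 ∧
        (a + b + √((a + b) ^ 2 - 4 * (a * b - s))) / 2 ≤ 1) ↔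
      (2 * a - 1) * (2 * b - 1) - 4 * s < 0 := by
  obtain ⟨ha_zero, ha_one⟩ := ha
  obtain ⟨hb_zero, hb_one⟩ := hb
  set D := (a + b) ^ 2 - 4 * (a * b - s)
  constructor
  · rintro ⟨-, h_lt, h_gt, -⟩
    have h_pos : 0 < √D := by linarith
    have h_sq : √D ^ 2 = D := Real.sq_sqrt (Real.sqrt_pos.1 h_pos).le
    nlinarith
  · intro h_neg
    have h_lt : |a + b - 1| < √D := by
      rw [← Real.sqrt_sq_eq_abs]
      exact Real.sqrt_lt_sqrt (sq_nonneg _) (by nlinarith)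
    have h_le_add : √D ≤ a + b := Real.sqrt_le_iff.2 ⟨by linarith, by nlinarith⟩
    have h_le_sub : √D ≤ 2 - (a + b) := Real.sqrt_le_iff.2 ⟨by linarith, by nlinarith⟩
    obtain ⟨h_left, h_right⟩ := abs_lt.1 h_lt
    exact ⟨by linarith, by linarith, by linarith, by linarith⟩

theorem IsProjOfRank.mem_sepEvent_iff (hP : IsProjOfRank k P) (h : 2 ≤ d) :
    P ∈ sepEvent h ↔
      gramForm P (Pi.single (Fin.castLE h 0) 1) (Pi.single (Fin.castLE h 1) 1) < 0 := by
  have hij : Fin.castLE h 0 ≠ Fin.castLE h 1 := by simp [Fin.ext_iff]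
  have h_diag (i : Fin d) : RCLike.re (P i i) ∈ Set.Icc 0 1 := by
    have h_nonneg := re_apply_nonneg_of_posSemidef hP.posSemidef_one_sub i
    rw [Matrix.sub_apply, one_apply_eq, map_sub, RCLike.one_re, sub_nonneg] at h_nonneg
    exact ⟨re_apply_nonneg_of_posSemidef hP.posSemidef i, h_nonneg⟩
  have h_one := norm_sq_apply_le_of_posSemidef hP.posSemidef_one_sub
    (Fin.castLE h 0) (Fin.castLE h 1)
  simp only [Matrix.sub_apply, one_apply_eq, one_apply_ne hij, map_sub, RCLike.one_re, zero_sub,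
    norm_neg] at h_one
  rw [gramForm_single P hij, ← roots_separated_iff (h_diag _) (h_diag _)
    (norm_sq_apply_le_of_posSemidef hP.posSemidef _ _) h_one]
  simp only [sepEvent, Set.mem_ofPred_eq, lam1, lam2, re_trace_topLeft2, re_det_topLeft2 h hP.1]

end SepEvent

/-! ### Averaging over an independent Gaussian vector -/

section Averaging

variable {d k p q : ℕ} {ν : Measure (Matrix (Fin d) (Fin d) 𝕜)}

lemma fieldBeta_pos : 0 < fieldBeta 𝕜 :=
  div_pos (Nat.cast_pos.2 Module.finrank_pos) two_pos

lemma fieldBeta_mul_natCast_pos (n : ℕ) [NeZero n] : 0 < fieldBeta 𝕜 * n :=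
  mul_pos fieldBeta_pos (Nat.cast_pos.2 (NeZero.pos n))

lemma ae_gauss_apply_ne_zero {ι : Type*} [Fintype ι] (j : ι) : ∀ᵐ v ∂gauss 𝕜 ι, v j ≠ 0 := by
  have h_eval : MeasurePreserving (fun v : ι → 𝕜 => v j) (gauss 𝕜 ι) (stdGaussian 𝕜) :=
    measurePreserving_eval (fun _ : ι => stdGaussian 𝕜) j
  have h_norm : ∫⁻ z, ({0} : Set ℝ).indicator 1 (‖z‖ ^ 2) ∂stdGaussian 𝕜 = 0 := by
    rw [lintegral_stdGaussian_norm_sq (measurable_one.indicator (measurableSet_singleton _)),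
      lintegral_indicator_one (measurableSet_singleton _), ← nonpos_iff_eq_zero]
    exact (measure_mono fun x hx => not_lt.2 (le_of_eq hx)).trans_eq (ae_gammaMeasure_pos _ _)
  have h_zero : ∀ᵐ z ∂stdGaussian 𝕜, z ≠ 0 := by
    have : Measurable (({0} : Set ℝ).indicator (1 : ℝ → ENNReal)) :=
      measurable_one.indicator (measurableSet_singleton 0)
    filter_upwards [(lintegral_eq_zero_iff (by fun_prop)).1 h_norm] with z hz hz0
    simp [hz0] at hz
  exact h_eval.quasiMeasurePreserving.ae h_zero

lemma lintegral_gauss_sum_sqLen {ι κ : Type*} [Fintype ι] [Fintype κ] [Nonempty ι] [Nonempty κ]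
    {f : ℝ → ℝ → ENNReal} (hf : Measurable (Function.uncurry f)) :
    ∫⁻ v, f (sqLen fun i => v (Sum.inl i)) (sqLen fun i => v (Sum.inr i)) ∂gauss 𝕜 (ι ⊕ κ) =
      ∫⁻ x, ∫⁻ y, f x y ∂gammaMeasure (fieldBeta 𝕜 * Fintype.card κ) (1 / 2)
        ∂gammaMeasure (fieldBeta 𝕜 * Fintype.card ι) (1 / 2) := by
  have := isProbabilityMeasure_gammaMeasure (r := 1 / 2)
    (mul_pos (fieldBeta_pos (𝕜 := 𝕜)) (Nat.cast_pos.2 (Fintype.card_pos (α := κ)))) (by norm_num)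
  rw [lintegral_gauss_sum (by fun_prop)]
  simp only [Sum.elim_inl, Sum.elim_inr]
  simp only [fun v : ι → 𝕜 => lintegral_gauss_sqLen (𝕜 := 𝕜) (ι := κ) (f := f (sqLen v))
    hf.of_uncurry_left]
  exact lintegral_gauss_sqLen hf.lintegral_prod_right'

lemma sqLen_smul {ι : Type*} [Fintype ι] (r : 𝕜) (v : ι → 𝕜) :
    sqLen (r • v) = ‖r‖ ^ 2 * sqLen v := by
  simp [sqLen, mul_pow, Finset.mul_sum]

lemma sqLen_nonneg {ι : Type*} [Fintype ι] (v : ι → 𝕜) : 0 ≤ sqLen v :=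
  Finset.sum_nonneg fun _ _ => sq_nonneg _

lemma sqLen_pos {ι : Type*} [Fintype ι] {v : ι → 𝕜} (hv : v ≠ 0) : 0 < sqLen v :=
  (sqLen_nonneg v).lt_of_ne' (sqLen_eq_zero.not.2 hv)

lemma norm_sq_ofReal_inv_sqrt_sqLen {ι : Type*} [Fintype ι] (v : ι → 𝕜) :
    ‖(((√(sqLen v))⁻¹ : ℝ) : 𝕜)‖ ^ 2 = (sqLen v)⁻¹ := by
  rw [RCLike.norm_ofReal, sq_abs, inv_pow, Real.sq_sqrt (sqLen_nonneg v)]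

lemma sqLen_normalize {ι : Type*} [Fintype ι] {v : ι → 𝕜} (hv : v ≠ 0) :
    sqLen ((((√(sqLen v))⁻¹ : ℝ) : 𝕜) • v) = 1 := by
  rw [sqLen_smul, norm_sq_ofReal_inv_sqrt_sqLen, inv_mul_cancel₀ (sqLen_pos hv).ne']

lemma IsUniformProj.lintegral_reflQuad_single_eq_div (hν : IsUniformProj k ν) (i : Fin d)
    {v : Fin d → 𝕜} (hv : v ≠ 0) {f : ℝ → ENNReal} (hf : Measurable f) :
    ∫⁻ P, f (reflQuad P (Pi.single i 1)) ∂ν = ∫⁻ P, f (reflQuad P v / sqLen v) ∂ν := by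
  rw [hν.lintegral_reflQuad_single i (sqLen_normalize hv) hf]
  simp only [reflQuad_smul, norm_sq_ofReal_inv_sqrt_sqLen, div_eq_inv_mul]

lemma lintegral_eq_lintegral_lintegral_of_ae {α β : Type*} [MeasurableSpace α] [MeasurableSpace β]
    {μ : Measure α} {ρ : Measure β} [IsProbabilityMeasure μ] [SFinite ρ] {f : α → β → ENNReal}
    (hf : Measurable (Function.uncurry f)) {c : ENNReal} (h : ∀ᵐ a ∂μ, c = ∫⁻ b, f a b ∂ρ) :
    c = ∫⁻ b, ∫⁻ a, f a b ∂μ ∂ρ := by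
  rw [← lintegral_lintegral_swap hf.aemeasurable, ← lintegral_congr_ae h, lintegral_const,
    measure_univ, mul_one]

theorem IsUniformProj.lintegral_reflQuad_single_eq_lintegral_betaMeasure [NeZero p] [NeZero q]
    (hν : IsUniformProj p ν) (hd : p + q = d) (i : Fin d) {f : ℝ → ENNReal} (hf : Measurable f) :
    ∫⁻ P, f (reflQuad P (Pi.single i 1)) ∂ν =
      ∫⁻ s, f (2 * s - 1) ∂betaMeasure (fieldBeta 𝕜 * p) (fieldBeta 𝕜 * q) := by
  have := hν.1
  have hp := fieldBeta_mul_natCast_pos (𝕜 := 𝕜) p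
  have hq := fieldBeta_mul_natCast_pos (𝕜 := 𝕜) q
  have h_fixed (P : Matrix (Fin d) (Fin d) 𝕜) (hP : IsProjOfRank p P) :
      ∫⁻ v, f (reflQuad P v / sqLen v) ∂gauss 𝕜 (Fin d) =
        ∫⁻ s, f (2 * s - 1) ∂betaMeasure (fieldBeta 𝕜 * p) (fieldBeta 𝕜 * q) := by
    have h_sum (y : Fin p ⊕ Fin q → 𝕜) :
        f ((∑ k, Sum.elim (fun _ => (1 : ℝ)) (fun _ => -1) k * ‖y k‖ ^ 2) / sqLen y) =
          f (((sqLen fun k => y (Sum.inl k)) - sqLen fun k => y (Sum.inr k)) /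
            ((sqLen fun k => y (Sum.inl k)) + sqLen fun k => y (Sum.inr k))) := by
      simp [sqLen, Fintype.sum_sum_type, sub_eq_add_neg]
    refine (lintegral_gauss_isHermitian (isHermitian_reflMat hP.1) (hP.charpoly_reflMat hd)
      (f := fun s t => f (t / s)) (by fun_prop)).trans ?_
    simp only [h_sum]
    rw [lintegral_gauss_sum_sqLen (f := fun x y => f ((x - y) / (x + y))) (by fun_prop),
      Fintype.card_fin, Fintype.card_fin,
      lintegral_gammaMeasure_lintegral_gammaMeasure hp hq (by norm_num) (by fun_prop)]
    have := isProbabilityMeasure_gammaMeasure (add_pos hp hq) (r := 1 / 2) (by norm_num)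
    rw [lintegral_congr_ae (g := fun _ => ∫⁻ s, f (2 * s - 1)
      ∂betaMeasure (fieldBeta 𝕜 * p) (fieldBeta 𝕜 * q)), lintegral_const, measure_univ, mul_one]
    filter_upwards [ae_gammaMeasure_pos _ _] with t ht
    refine lintegral_congr fun s => congrArg f ?_
    field
  refine lintegral_eq_lintegral_lintegral_of_ae (μ := gauss 𝕜 (Fin d)) (ρ := ν)
    (f := fun v P => f (reflQuad P v / sqLen v)) ?_ ?_ |>.trans ?_
  · exact hf.comp ((measurable_reflQuad measurable_snd measurable_fst).div
      (measurable_sqLen.comp measurable_fst))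
  · filter_upwards [ae_gauss_apply_ne_zero i] with v hv
    exact hν.lintegral_reflQuad_single_eq_div i (fun h => hv (congrFun h i)) hf
  · rw [lintegral_congr_ae (hν.2.1.mono h_fixed), lintegral_const, measure_univ, mul_one]

lemma IsUniformProj.lintegral_gramForm_single_eq (hν : IsUniformProj k ν) {i j : Fin d}
    (hij : i ≠ j) {v : Fin d → 𝕜} (hv : v j ≠ 0) {φ : ℝ → ENNReal} (hφ : Measurable φ)
    (h_cone : ∀ r x : ℝ, 0 < r → φ (r * x) = φ x) :
    ∫⁻ P, φ (gramForm P (Pi.single i 1) (Pi.single j 1)) ∂ν =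
      ∫⁻ P, φ (gramForm P (Pi.single i 1) v) ∂ν := by
  set e : Fin d → 𝕜 := Pi.single i 1 with he
  set w : Fin d → 𝕜 := v - v i • e with hw
  have hw0 : w ≠ 0 := fun h => hv (by simpa [hw, he, hij.symm] using congrFun h j)
  set r : 𝕜 := (((√(sqLen w))⁻¹ : ℝ) : 𝕜) with hr
  have hr_pos : 0 < ‖r‖ ^ 2 := by
    rw [hr, norm_sq_ofReal_inv_sqrt_sqLen]
    exact inv_pos.2 (sqLen_pos hw0)
  have h_unit : sqLen e = 1 := by simp [sqLen, he, Pi.single_apply, apply_ite]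
  have h_orth : star e ⬝ᵥ (r • w) = 0 := by simp [hw, he]
  refine (hν.lintegral_single_single hij h_unit (sqLen_normalize hw0) h_orth
    (f := fun x z y => φ (x * y - ‖z‖ ^ 2)) (by fun_prop)).trans (lintegral_congr_ae ?_)
  filter_upwards [hν.2.1] with P hP
  have h_decomp : r • w = (-(r * v i)) • e + r • v := by
    rw [hw]
    module
  have h_gram := gramForm_add_smul hP.1 e v (-(r * v i)) r
  rw [← h_decomp, gramForm] at h_gram
  rw [h_gram, h_cone _ _ hr_pos]

lemma IsProjOfRank.lintegral_gramForm_gauss [NeZero p] [NeZero q]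
    {P : Matrix (Fin d) (Fin d) 𝕜} (hP : IsProjOfRank (p + 1) P) (hd : p + 1 + (q + 1) = d)
    {e : Fin d → 𝕜} (he : sqLen e = 1) {φ : ℝ → ENNReal} (hφ : Measurable φ) :
    ∫⁻ v, φ (gramForm P e v) ∂gauss 𝕜 (Fin d) =
      ∫⁻ g, ∫⁻ x, ∫⁻ y, φ (reflQuad P e * (x - y) - g) ∂gammaMeasure (fieldBeta 𝕜 * q) (1 / 2)
        ∂gammaMeasure (fieldBeta 𝕜 * p) (1 / 2) ∂gammaMeasure (fieldBeta 𝕜) (1 / 2) := by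
  set c := reflQuad P e with hc
  have := isProbabilityMeasure_gammaMeasure (r := 1 / 2) (fieldBeta_pos (𝕜 := 𝕜)) (by norm_num)
  have := isProbabilityMeasure_gammaMeasure (r := 1 / 2) (fieldBeta_mul_natCast_pos (𝕜 := 𝕜) p)
    (by norm_num)
  have := isProbabilityMeasure_gammaMeasure (r := 1 / 2) (fieldBeta_mul_natCast_pos (𝕜 := 𝕜) q)
    (by norm_num)
  have h_form (y : (Unit ⊕ Unit) ⊕ (Fin p ⊕ Fin q) → 𝕜) :
      ∑ k, Sum.elim (Sum.elim (fun _ => (0 : ℝ)) (fun _ => -1))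
        (Sum.elim (fun _ => c) (fun _ => -c)) k * ‖y k‖ ^ 2 =
      c * ((sqLen fun k => y (Sum.inr (Sum.inl k))) - sqLen fun k => y (Sum.inr (Sum.inr k))) -
        sqLen fun k => y (Sum.inl (Sum.inr k)) := by
    simp only [Fintype.sum_sum_type, Sum.elim_inl, Sum.elim_inr, sqLen, Finset.univ_unique,
      Finset.sum_singleton, ← Finset.mul_sum]
    ring
  have h_inner (g : ℝ) := lintegral_gauss_sum_sqLen (𝕜 := 𝕜) (ι := Fin p) (κ := Fin q)
    (f := fun x y => φ (c * (x - y) - g)) (by fun_prop)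
  have : Measurable fun g : ℝ => ∫⁻ x, ∫⁻ y, φ (c * (x - y) - g)
      ∂gammaMeasure (fieldBeta 𝕜 * q) (1 / 2) ∂gammaMeasure (fieldBeta 𝕜 * p) (1 / 2) := by
    fun_prop
  have h_outer := lintegral_gauss_sum_sqLen (𝕜 := 𝕜) (ι := Unit) (κ := Unit) (f := fun _ g =>
    ∫⁻ x, ∫⁻ y, φ (c * (x - y) - g) ∂gammaMeasure (fieldBeta 𝕜 * q) (1 / 2)
      ∂gammaMeasure (fieldBeta 𝕜 * p) (1 / 2)) (by fun_prop)
  simp only [Fintype.card_fin, Fintype.card_unit, Nat.cast_one, mul_one, lintegral_const,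
    measure_univ] at h_inner h_outer
  simp only [← re_dotProduct_gramMat_mulVec hP.1]
  rw [lintegral_gauss_isHermitian (isHermitian_gramMat hP.1 e) (hP.charpoly_gramMat hd he)
    (f := fun _ t => φ t) (by fun_prop), ← h_outer]
  simp only [← hc, h_form]
  rw [lintegral_gauss_sum (by fun_prop)]
  simp only [Sum.elim_inl, Sum.elim_inr, h_inner]

theorem IsUniformProj.lintegral_gramForm_single [NeZero p] [NeZero q]
    (hν : IsUniformProj (p + 1) ν) (hd : p + 1 + (q + 1) = d) {i j : Fin d} (hij : i ≠ j)
    {φ : ℝ → ENNReal} (hφ : Measurable φ) (h_cone : ∀ r x : ℝ, 0 < r → φ (r * x) = φ x) :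
    ∫⁻ P, φ (gramForm P (Pi.single i 1) (Pi.single j 1)) ∂ν =
      ∫⁻ P, ∫⁻ g, ∫⁻ x, ∫⁻ y, φ (reflQuad P (Pi.single i 1) * (x - y) - g)
        ∂gammaMeasure (fieldBeta 𝕜 * q) (1 / 2) ∂gammaMeasure (fieldBeta 𝕜 * p) (1 / 2)
        ∂gammaMeasure (fieldBeta 𝕜) (1 / 2) ∂ν := by
  have := hν.1
  have h_unit : sqLen (Pi.single i 1 : Fin d → 𝕜) = 1 := by
    simp [sqLen, Pi.single_apply, apply_ite]
  refine lintegral_eq_lintegral_lintegral_of_ae (μ := gauss 𝕜 (Fin d)) (ρ := ν)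
    (f := fun v P => φ (gramForm P (Pi.single i 1) v)) ?_ ?_ |>.trans ?_
  · exact hφ.comp (measurable_gramForm measurable_snd measurable_const measurable_fst)
  · filter_upwards [ae_gauss_apply_ne_zero j] with v hv
    exact hν.lintegral_gramForm_single_eq hij hv hφ h_cone
  · exact lintegral_congr_ae (hν.2.1.mono fun P hP => hP.lintegral_gramForm_gauss hd h_unit hφ)

end Averaging

/-! ### The symmetric Beta law on `(-1, 1)` -/

/-- The law of `2 * S - 1` for `S` distributed according to `Β(a, a)`; equivalently, the law of
`(X - Y) / (X + Y)` for independent `X` and `Y` with the same Gamma law of shape `a`. -/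
def symBeta (a : ℝ) : Measure ℝ := (betaMeasure a a).map fun s => 2 * s - 1

/-- The normalizing constant of the density `(1 - c ^ 2) ^ (a - 1)` of `symBeta a`. -/
def symBetaConst (a : ℝ) : ℝ := Real.Gamma (2 * a) / (Real.Gamma a ^ 2 * 2 ^ (2 * a - 1))

section SymBeta

variable {a : ℝ}

lemma symBetaConst_pos (ha : 0 < a) : 0 < symBetaConst a :=
  div_pos (Real.Gamma_pos_of_pos (by positivity))
    (mul_pos (pow_pos (Real.Gamma_pos_of_pos ha) 2) (Real.rpow_pos_of_pos two_pos _))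

lemma isProbabilityMeasure_symBeta (ha : 0 < a) : IsProbabilityMeasure (symBeta a) :=
  have := isProbabilityMeasureBeta ha ha
  Measure.isProbabilityMeasure_map (by fun_prop)

lemma lintegral_symBeta_eq_lintegral_betaMeasure {f : ℝ → ENNReal} (hf : Measurable f) :
    ∫⁻ c, f c ∂symBeta a = ∫⁻ s, f (2 * s - 1) ∂betaMeasure a a :=
  lintegral_map hf (by fun_prop)

lemma betaPDFReal_self_half_one_add (ha : 0 < a) {c : ℝ} (hc : c ∈ Set.Ioo (-1) 1) :
    2⁻¹ * betaPDFReal a a (2⁻¹ * (1 + c)) = symBetaConst a * (1 - c ^ 2) ^ (a - 1) := by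
  have hc0 : 0 < 1 + c := by linarith [hc.1]
  have hc1 : 0 < 1 - c := by linarith [hc.2]
  have h_mem : 0 < 2⁻¹ * (1 + c) ∧ 2⁻¹ * (1 + c) < 1 := ⟨by positivity, by linarith⟩
  have h_two : (2 : ℝ) ^ (2 * a - 1) = 2 * (2 ^ (a - 1) * 2 ^ (a - 1)) := by
    rw [← Real.rpow_add two_pos, mul_comm 2 (2 ^ _), ← Real.rpow_add_one two_ne_zero]
    ring_nf
  have hΓ := (Real.Gamma_pos_of_pos ha).ne'
  rw [betaPDFReal, if_pos h_mem, show 1 - 2⁻¹ * (1 + c) = 2⁻¹ * (1 - c) by ring,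
    Real.mul_rpow (by positivity) hc0.le, Real.mul_rpow (by positivity) hc1.le,
    Real.inv_rpow two_pos.le, show 1 - c ^ 2 = (1 + c) * (1 - c) by ring,
    Real.mul_rpow hc0.le hc1.le, beta, symBetaConst, h_two, ← two_mul]
  field

lemma lintegral_symBeta (ha : 0 < a) {f : ℝ → ENNReal} (hf : Measurable f) :
    ∫⁻ c, f c ∂symBeta a = ENNReal.ofReal (symBetaConst a) *
      ∫⁻ c in Set.Ioo (-1) 1, ENNReal.ofReal ((1 - c ^ 2) ^ (a - 1)) * f c := by
  have hpdf := measurable_betaPDF a a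
  have h_dens (c : ℝ) : ENNReal.ofReal |2⁻¹| * (betaPDF a a (2⁻¹ * (1 + c)) * f c) =
      (Set.Ioo (-1) 1).indicator (fun c => ENNReal.ofReal (symBetaConst a) *
        (ENNReal.ofReal ((1 - c ^ 2) ^ (a - 1)) * f c)) c := by
    by_cases hc : c ∈ Set.Ioo (-1) 1
    · rw [Set.indicator_of_mem hc, ← mul_assoc, ← mul_assoc, betaPDF,
        ← ENNReal.ofReal_mul (by positivity), ← ENNReal.ofReal_mul (symBetaConst_pos ha).le,
        abs_of_pos (by positivity), betaPDFReal_self_half_one_add ha hc]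
    · have h_mem : ¬ (0 < 2⁻¹ * (1 + c) ∧ 2⁻¹ * (1 + c) < 1) := fun h =>
        hc ⟨by linarith [h.1], by linarith [h.2]⟩
      rw [Set.indicator_of_notMem hc, betaPDF_eq, if_neg h_mem]
      simp
  rw [lintegral_symBeta_eq_lintegral_betaMeasure hf, lintegral_betaMeasure (by fun_prop),
    lintegral_eq_ofReal_abs_mul_lintegral_comp_mul (inv_ne_zero two_ne_zero) (by fun_prop),
    ← lintegral_add_left_eq_self _ 1, ← lintegral_const_mul _ (by fun_prop)]
  simp only [mul_inv_cancel_left₀ (two_ne_zero' ℝ), add_sub_cancel_left, h_dens]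
  rw [lintegral_indicator measurableSet_Ioo, lintegral_const_mul _ (by fun_prop)]

lemma setLIntegral_symBeta (ha : 0 < a) {s : Set ℝ} (hs : MeasurableSet s) {f : ℝ → ENNReal}
    (hf : Measurable f) : ∫⁻ c in s, f c ∂symBeta a = ENNReal.ofReal (symBetaConst a) *
      ∫⁻ c in s ∩ Set.Ioo (-1) 1, ENNReal.ofReal ((1 - c ^ 2) ^ (a - 1)) * f c := by
  rw [← lintegral_indicator hs, lintegral_symBeta ha (hf.indicator hs), ← setLIntegral_indicator hs]
  simp only [Set.indicator_mul_right s fun c => ENNReal.ofReal ((1 - c ^ 2) ^ (a - 1))]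

lemma symBeta_absolutelyContinuous (ha : 0 < a) : symBeta a ≪ volume := by
  refine Measure.AbsolutelyContinuous.mk fun s hs hs0 => ?_
  rw [← setLIntegral_one, setLIntegral_symBeta ha hs measurable_const,
    Measure.restrict_eq_zero.2 (measure_mono_null Set.inter_subset_left hs0),
    lintegral_zero_measure, mul_zero]

lemma nullSingletonClass_symBeta (ha : 0 < a) : NullSingletonClass (symBeta a) :=
  ⟨fun x => symBeta_absolutelyContinuous ha (measure_singleton x)⟩

lemma isNegInvariant_symBeta (ha : 0 < a) : (symBeta a).IsNegInvariant := by
  refine ⟨Measure.ext_of_lintegral _ fun f hf => ?_⟩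
  have h_neg := (Measure.measurePreserving_neg (volume : Measure ℝ)).setLIntegral_comp_preimage
    (measurableSet_Ioo (a := -1) (b := 1))
    (f := fun c => ENNReal.ofReal ((1 - c ^ 2) ^ (a - 1)) * f c) (by fun_prop)
  simp only [Set.neg_preimage, Set.neg_Ioo, neg_neg, neg_sq] at h_neg
  rw [Measure.neg, lintegral_map hf measurable_neg, lintegral_symBeta ha (by fun_prop),
    lintegral_symBeta ha hf, h_neg]

lemma symBeta_Ioi_zero (ha : 0 < a) : symBeta a (Set.Ioi 0) = 2⁻¹ := by
  have := isProbabilityMeasure_symBeta ha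
  have := nullSingletonClass_symBeta ha
  have := isNegInvariant_symBeta ha
  have h := lintegral_eq_setLIntegral_Ioi_add_comp_neg (μ := symBeta a) (f := 1) measurable_one
  simp only [Pi.one_apply, lintegral_const, measure_univ, Measure.restrict_apply_univ, one_mul,
    one_add_one_eq_two] at h
  exact ENNReal.eq_inv_of_mul_eq_one_left (by rw [mul_comm, ← h])

lemma lintegral_gammaMeasure_lintegral_gammaMeasure_self {r : ℝ} (ha : 0 < a) (hr : 0 < r)
    {f : ℝ → ℝ → ENNReal} (hf : Measurable (Function.uncurry f)) :
    ∫⁻ x, ∫⁻ y, f x y ∂gammaMeasure a r ∂gammaMeasure a r =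
      ∫⁻ t, ∫⁻ c, f (t * ((1 + c) / 2)) (t * ((1 - c) / 2)) ∂symBeta a
        ∂gammaMeasure (2 * a) r := by
  rw [lintegral_gammaMeasure_lintegral_gammaMeasure ha ha hr hf, two_mul]
  refine lintegral_congr fun t => ?_
  rw [lintegral_symBeta_eq_lintegral_betaMeasure (by fun_prop)]
  refine lintegral_congr fun s => ?_
  ring_nf

end SymBeta

section SepEvent

variable {d k m : ℕ} {ν : Measure (Matrix (Fin d) (Fin d) 𝕜)}

lemma IsUniformProj.lintegral_reflQuad_single_eq_lintegral_symBeta [NeZero k]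
    (hν : IsUniformProj k ν) (hd : k + k = d) (i : Fin d) {f : ℝ → ENNReal} (hf : Measurable f) :
    ∫⁻ P, f (reflQuad P (Pi.single i 1)) ∂ν = ∫⁻ c, f c ∂symBeta (fieldBeta 𝕜 * k) := by
  rw [hν.lintegral_reflQuad_single_eq_lintegral_betaMeasure hd i hf,
    lintegral_symBeta_eq_lintegral_betaMeasure hf]

lemma IsUniformProj.measure_sepEvent (hν : IsUniformProj k ν) (h : 2 ≤ d) :
    ν (sepEvent h) = ∫⁻ P, (Set.Iio (0 : ℝ)).indicator 1
      (gramForm P (Pi.single (Fin.castLE h 0) 1) (Pi.single (Fin.castLE h 1) 1)) ∂ν := by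
  have h_meas : Measurable fun P : Matrix (Fin d) (Fin d) 𝕜 =>
      gramForm P (Pi.single (Fin.castLE h 0) 1) (Pi.single (Fin.castLE h 1) 1) :=
    measurable_gramForm measurable_id measurable_const measurable_const
  have h_ae : sepEvent h =ᵐ[ν] (fun P =>
      gramForm P (Pi.single (Fin.castLE h 0) 1) (Pi.single (Fin.castLE h 1) 1)) ⁻¹' Set.Iio 0 := by
    filter_upwards [hν.2.1] with P hP using propext (hP.mem_sepEvent_iff h)
  rw [measure_congr h_ae, ← lintegral_indicator_one (h_meas measurableSet_Iio)]
  rfl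

lemma IsUniformProj.measure_sepEvent_eq_lintegral_symBeta [NeZero m]
    (hν : IsUniformProj (m + 1) ν) (hd : m + 1 + (m + 1) = d) (h : 2 ≤ d) :
    ν (sepEvent h) = ∫⁻ c, ∫⁻ g, ∫⁻ x, ∫⁻ y, (Set.Iio (0 : ℝ)).indicator 1 (c * (x - y) - g)
      ∂gammaMeasure (fieldBeta 𝕜 * m) (1 / 2) ∂gammaMeasure (fieldBeta 𝕜 * m) (1 / 2)
      ∂gammaMeasure (fieldBeta 𝕜) (1 / 2) ∂symBeta (fieldBeta 𝕜 * (m + 1 : ℕ)) := by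
  have := isProbabilityMeasure_gammaMeasure (r := 1 / 2) (fieldBeta_pos (𝕜 := 𝕜)) (by norm_num)
  have := isProbabilityMeasure_gammaMeasure (r := 1 / 2) (fieldBeta_mul_natCast_pos (𝕜 := 𝕜) m)
    (by norm_num)
  have h_ind : Measurable ((Set.Iio (0 : ℝ)).indicator (1 : ℝ → ENNReal)) :=
    measurable_one.indicator measurableSet_Iio
  have h_cone (r x : ℝ) (hr : 0 < r) : (Set.Iio (0 : ℝ)).indicator (1 : ℝ → ENNReal) (r * x) =
      (Set.Iio (0 : ℝ)).indicator 1 x := by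
    simp only [Set.indicator_apply, Set.mem_Iio, ← smul_eq_mul, smul_neg_iff_of_pos_left hr,
      Pi.one_apply]
  rw [hν.measure_sepEvent h, hν.lintegral_gramForm_single hd (by simp) h_ind h_cone]
  exact hν.lintegral_reflQuad_single_eq_lintegral_symBeta hd _ (f := fun c => ∫⁻ g, ∫⁻ x,
    ∫⁻ y, (Set.Iio (0 : ℝ)).indicator 1 (c * (x - y) - g) ∂gammaMeasure (fieldBeta 𝕜 * m) (1 / 2)
    ∂gammaMeasure (fieldBeta 𝕜 * m) (1 / 2) ∂gammaMeasure (fieldBeta 𝕜) (1 / 2)) (by fun_prop)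

end SepEvent

/-! ### Ratios of Gamma functions -/

/-- The ratio `Γ(x + 1/2) / Γ(x)`, asymptotic to `√x`. Both closed forms, and the normalizing
constants of the symmetric Beta laws, are elementary functions of such ratios. -/
def gammaRatio (x : ℝ) : ℝ := Real.Gamma (x + 1 / 2) / Real.Gamma x

section GammaRatio

variable {x : ℝ}

lemma gammaRatio_pos (hx : 0 < x) : 0 < gammaRatio x :=
  div_pos (Real.Gamma_pos_of_pos (by positivity)) (Real.Gamma_pos_of_pos hx)

lemma gammaRatio_mul_gammaRatio_add_half (hx : 0 < x) :
    gammaRatio x * gammaRatio (x + 1 / 2) = x := by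
  have hΓ := (Real.Gamma_pos_of_pos hx).ne'
  have hΓ_half := (Real.Gamma_pos_of_pos (by positivity : 0 < x + 1 / 2)).ne'
  rw [gammaRatio, gammaRatio, add_assoc, add_halves, Real.Gamma_add_one hx.ne']
  field

lemma gammaRatio_add_one (hx : 0 < x) : gammaRatio (x + 1) = (x + 1 / 2) / x * gammaRatio x := by
  rw [gammaRatio, gammaRatio, add_right_comm, Real.Gamma_add_one hx.ne',
    Real.Gamma_add_one (by positivity), mul_div_mul_comm]

lemma gammaRatio_sq_le (hx : 0 < x) : gammaRatio x ^ 2 ≤ x := by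
  have hΓ := Real.Gamma_pos_of_pos hx
  have hΓ_half := Real.Gamma_pos_of_pos (by positivity : 0 < x + 1 / 2)
  have hΓ_one := Real.Gamma_pos_of_pos (by positivity : 0 < x + 1)
  have h_convex := Real.Gamma_mul_add_mul_le_rpow_Gamma_mul_rpow_Gamma hx
    (by positivity : 0 < x + 1) one_half_pos one_half_pos (add_halves 1)
  rw [← Real.mul_rpow hΓ.le hΓ_one.le, ← Real.sqrt_eq_rpow, Real.Gamma_add_one hx.ne',
    show 1 / 2 * x + 1 / 2 * (x + 1) = x + 1 / 2 by ring, Real.le_sqrt hΓ_half.le (by positivity)]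
    at h_convex
  rw [gammaRatio, div_pow, div_le_iff₀ (by positivity)]
  linarith

lemma one_sub_div_add_half_le_gammaRatio_sq_div_self (hx : 0 < x) :
    1 - 1 / 2 / (x + 1 / 2) ≤ gammaRatio x ^ 2 / x := by
  have h_half : 0 < x + 1 / 2 := by positivity
  have h_pos := gammaRatio_pos h_half
  rw [one_sub_div h_half.ne', add_sub_cancel_right,
    eq_div_of_mul_eq h_pos.ne' (gammaRatio_mul_gammaRatio_add_half hx), div_pow, div_div,
    sq x, mul_div_mul_right _ _ hx.ne']
  exact div_le_div_of_nonneg_left hx.le (by positivity) (gammaRatio_sq_le h_half)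

lemma tendsto_gammaRatio_sq_div_self :
    Filter.Tendsto (fun x => gammaRatio x ^ 2 / x) Filter.atTop (nhds 1) := by
  have h_lower : Filter.Tendsto (fun x : ℝ => 1 - 1 / 2 / (x + 1 / 2)) Filter.atTop (nhds 1) := by
    have h_const := (Filter.tendsto_atTop_add_const_right _ (1 / 2 : ℝ)
      Filter.tendsto_id).const_div_atTop (1 / 2 : ℝ)
    simpa only [sub_zero, id] using h_const.const_sub 1
  refine tendsto_of_tendsto_of_tendsto_of_le_of_le' h_lower tendsto_const_nhds ?_ ?_
  · filter_upwards [Filter.eventually_gt_atTop 0] with x hx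
    exact one_sub_div_add_half_le_gammaRatio_sq_div_self hx
  · filter_upwards [Filter.eventually_gt_atTop 0] with x hx
    exact (div_le_one hx).2 (gammaRatio_sq_le hx)

lemma Gamma_two_mul_mul_sqrt_pi (hx : 0 < x) :
    Real.Gamma (2 * x) * √Real.pi = gammaRatio x * Real.Gamma x ^ 2 * 2 ^ (2 * x - 1) := by
  have := Real.Gamma_pos_of_pos hx
  have h_legendre := Real.Gamma_mul_Gamma_add_half x
  rw [← neg_sub, Real.rpow_neg two_pos.le] at h_legendre
  rw [gammaRatio]
  field_simp at h_legendre ⊢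
  linear_combination -h_legendre

lemma symBetaConst_eq_gammaRatio_div_sqrt_pi (hx : 0 < x) :
    symBetaConst x = gammaRatio x / √Real.pi := by
  have := Real.Gamma_pos_of_pos hx
  rw [symBetaConst, div_eq_div_iff (by positivity) (by positivity), Gamma_two_mul_mul_sqrt_pi hx,
    mul_assoc]

lemma eulerBeta_eq_beta {a b : ℝ} (ha : 0 < a) (hb : 0 < b) : eulerBeta a b = beta a b := by
  have h_cast : ∫ t in (0 : ℝ)..1, (t : ℂ) ^ ((a : ℂ) - 1) * (1 - (t : ℂ)) ^ ((b : ℂ) - 1) =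
      ∫ t in (0 : ℝ)..1, ((t ^ (a - 1) * (1 - t) ^ (b - 1) : ℝ) : ℂ) := by
    refine intervalIntegral.integral_congr fun t ht => ?_
    rw [Set.uIcc_of_le zero_le_one] at ht
    rw [Complex.ofReal_mul, Complex.ofReal_cpow ht.1, Complex.ofReal_cpow (sub_nonneg.2 ht.2)]
    push_cast
    rfl
  rw [beta_eq_betaIntegralReal a b ha hb, Complex.betaIntegral, eulerBeta, h_cast,
    intervalIntegral.integral_ofReal, Complex.ofReal_re]

lemma eulerBeta_self (hx : 0 < x) :
    eulerBeta x x = √Real.pi / (gammaRatio x * 2 ^ (2 * x - 1)) := by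
  have hΓ := (Real.Gamma_pos_of_pos (by positivity : 0 < 2 * x)).ne'
  have h_ratio := gammaRatio_pos hx
  rw [eulerBeta_eq_beta hx hx, beta, ← two_mul, div_eq_div_iff hΓ (by positivity),
    mul_comm √Real.pi, Gamma_two_mul_mul_sqrt_pi hx]
  ring

end GammaRatio

lemma sepProbR_add_one {m : ℕ} (hm : 0 < m) :
    sepProbR (m + 1) = gammaRatio m / (2 * gammaRatio (m / 2)) := by
  have hm' : (0 : ℝ) < m := Nat.cast_pos.2 hm
  have := gammaRatio_pos hm'
  have := gammaRatio_pos (half_pos hm')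
  have h_pow : (2 : ℝ) ^ (2 * (m : ℝ) - 1) * 2 =
      2 ^ (m + 1) * (2 : ℝ) ^ (2 * ((m : ℝ) / 2) - 1) := by
    rw [← Real.rpow_natCast 2 (m + 1), ← Real.rpow_add two_pos, ← Real.rpow_add_one two_ne_zero]
    push_cast
    ring_nf
  rw [sepProbR, Nat.cast_add_one, add_sub_cancel_right, eulerBeta_self hm',
    eulerBeta_self (half_pos hm'), ← mul_div_assoc (2 ^ _), div_div_div_eq,
    div_eq_div_iff (by positivity) (by positivity)]
  linear_combination √Real.pi * gammaRatio m * gammaRatio (m / 2) * h_pow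

lemma sepProbR_add_one_pos {m : ℕ} (hm : 0 < m) : 0 < sepProbR (m + 1) := by
  have hm' : (0 : ℝ) < m := Nat.cast_pos.2 hm
  rw [sepProbR_add_one hm]
  exact div_pos (gammaRatio_pos hm') (mul_pos two_pos (gammaRatio_pos (half_pos hm')))

lemma sepProbC_add_one {m : ℕ} (hm : 0 < m) :
    sepProbC (m + 1) =
      1 / 2 + (1 + 1 / 2 / m) * (gammaRatio m ^ 2 / m) / Real.pi := by
  have hm' : (0 : ℝ) < m := Nat.cast_pos.2 hm
  have := gammaRatio_pos hm'
  have h_pow : (2 : ℝ) ^ (4 * ((m : ℝ) + 1) - 3) = 8 * (2 ^ (2 * (m : ℝ) - 1)) ^ 2 := by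
    rw [← Real.rpow_mul_natCast two_pos.le, show (8 : ℝ) = 2 ^ (3 : ℝ) by norm_num,
      ← Real.rpow_add two_pos]
    push_cast
    ring_nf
  rw [sepProbC, Nat.cast_add_one, add_sub_cancel_right, eulerBeta_self hm', h_pow, div_pow √Real.pi,
    Real.sq_sqrt Real.pi_pos.le]
  field

lemma sepProbC_add_one_pos {m : ℕ} (hm : 0 < m) : 0 < sepProbC (m + 1) := by
  rw [sepProbC_add_one hm]
  positivity

lemma tendsto_sepProbC : Filter.Tendsto sepProbC Filter.atTop (nhds (1 / 2 + 1 / Real.pi)) := by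
  have h_cast : Filter.Tendsto (Nat.cast : ℕ → ℝ) Filter.atTop Filter.atTop :=
    tendsto_natCast_atTop_atTop
  have h_ratio := tendsto_gammaRatio_sq_div_self.comp h_cast
  have h_factor := (h_cast.const_div_atTop (1 / 2)).const_add 1
  have h_lim := ((h_factor.mul h_ratio).div_const Real.pi).const_add (1 / 2)
  rw [add_zero, one_mul] at h_lim
  refine (Filter.tendsto_add_atTop_iff_nat 1).1 (h_lim.congr' ?_)
  filter_upwards [Filter.eventually_gt_atTop 0] with m hm
  exact (sepProbC_add_one hm).symm

lemma tendsto_sepProbR : Filter.Tendsto sepProbR Filter.atTop (nhds (1 / √2)) := by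
  have h_cast : Filter.Tendsto (Nat.cast : ℕ → ℝ) Filter.atTop Filter.atTop :=
    tendsto_natCast_atTop_atTop
  have h_ratio := tendsto_gammaRatio_sq_div_self.comp h_cast
  have h_ratio_half := tendsto_gammaRatio_sq_div_self.comp (h_cast.atTop_div_const two_pos)
  have h_lim := ((h_ratio.div h_ratio_half one_ne_zero).div_const 2).sqrt
  rw [div_one, Real.sqrt_div zero_le_one, Real.sqrt_one] at h_lim
  refine (Filter.tendsto_add_atTop_iff_nat 1).1 (h_lim.congr' ?_)
  filter_upwards [Filter.eventually_gt_atTop 0] with m hm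
  have hm' : (0 : ℝ) < m := Nat.cast_pos.2 hm
  have := gammaRatio_pos hm'
  have := gammaRatio_pos (half_pos hm')
  simp only [Function.comp_apply, Pi.div_apply]
  rw [sepProbR_add_one hm, Real.sqrt_eq_iff_eq_sq (by positivity) (by positivity)]
  field

/-! ### The complex case -/

section Complex

variable {a r : ℝ}

lemma gammaMeasure_one_Ioi (hr : 0 < r) (y : ℝ) :
    gammaMeasure 1 r (Set.Ioi y) = ENNReal.ofReal (Real.exp (-(r * max y 0))) := by
  have : IsProbabilityMeasure (gammaMeasure 1 r) := isProbabilityMeasure_gammaMeasure one_pos hr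
  have h_cdf : (gammaMeasure 1 r).real (Set.Iic y) = 1 - Real.exp (-(r * max y 0)) := by
    rw [← cdf_eq_real]
    refine (cdf_expMeasure_eq hr y).trans ?_
    split_ifs with hy
    · rw [max_eq_left hy]
    · rw [max_eq_right (not_le.1 hy).le, mul_zero, neg_zero, Real.exp_zero, sub_self]
  rw [← ofReal_measureReal, ← Set.compl_Iic, probReal_compl_eq_one_sub measurableSet_Iic, h_cdf,
    sub_sub_cancel]

lemma lintegral_indicator_Iio_sub (μ : Measure ℝ) (y : ℝ) :
    ∫⁻ g, (Set.Iio (0 : ℝ)).indicator 1 (y - g) ∂μ = μ (Set.Ioi y) := by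
  rw [← lintegral_indicator_one measurableSet_Ioi]
  simp only [Set.indicator_apply, Set.mem_Iio, Set.mem_Ioi, sub_neg, Pi.one_apply]

lemma gammaPDF_mul_exp_neg_mul (ha : 0 < a) (hr : 0 < r) {s : ℝ} (hs : 0 ≤ s) (t : ℝ) :
    gammaPDF a r t * ENNReal.ofReal (Real.exp (-(t * s))) =
      ENNReal.ofReal ((r / (r + s)) ^ a) * gammaPDF a (r + s) t := by
  rw [gammaPDF, gammaPDF, ← ENNReal.ofReal_mul' (Real.exp_pos _).le,
    ← ENNReal.ofReal_mul (by positivity)]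
  refine congrArg ENNReal.ofReal ?_
  have hΓ := (Real.Gamma_pos_of_pos ha).ne'
  have hrs := (Real.rpow_pos_of_pos (by positivity : 0 < r + s) a).ne'
  rw [gammaPDFReal, gammaPDFReal, Real.div_rpow hr.le (by positivity)]
  split_ifs
  · rw [mul_assoc, ← Real.exp_add, show -(r * t) + -(t * s) = -((r + s) * t) by ring]
    field
  · simp

lemma lintegral_exp_neg_mul_gammaMeasure (ha : 0 < a) (hr : 0 < r) {s : ℝ} (hs : 0 ≤ s) :
    ∫⁻ t, ENNReal.ofReal (Real.exp (-(t * s))) ∂gammaMeasure a r =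
      ENNReal.ofReal ((r / (r + s)) ^ a) := by
  have := measurable_gammaPDF a (r + s)
  rw [lintegral_gammaMeasure (by fun_prop)]
  simp only [gammaPDF_mul_exp_neg_mul ha hr hs]
  rw [lintegral_const_mul _ this, lintegral_gammaPDF_eq_one ha (by positivity), mul_one]

lemma lintegral_indicator_Iio_gammaMeasure_one (ha : 0 < a) (hr : 0 < r) (c : ℝ) :
    ∫⁻ g, ∫⁻ x, ∫⁻ y, (Set.Iio (0 : ℝ)).indicator 1 (c * (x - y) - g)
      ∂gammaMeasure a r ∂gammaMeasure a r ∂gammaMeasure 1 r =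
      ∫⁻ b, ENNReal.ofReal ((1 + max (c * b) 0) ^ (-(2 * a))) ∂symBeta a := by
  have := isProbabilityMeasure_gammaMeasure ha hr
  have := isProbabilityMeasure_gammaMeasure one_pos hr
  have := isProbabilityMeasure_gammaMeasure (a := 2 * a) (by positivity) hr
  have := isProbabilityMeasure_symBeta ha
  have : Measurable ((Set.Iio (0 : ℝ)).indicator (1 : ℝ → ENNReal)) :=
    measurable_one.indicator measurableSet_Iio
  have h_swap (x : ℝ) : ∫⁻ g, ∫⁻ y, (Set.Iio (0 : ℝ)).indicator 1 (c * (x - y) - g)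
      ∂gammaMeasure a r ∂gammaMeasure 1 r =
      ∫⁻ y, ENNReal.ofReal (Real.exp (-(r * max (c * (x - y)) 0))) ∂gammaMeasure a r := by
    rw [lintegral_lintegral_swap (by fun_prop)]
    simp only [lintegral_indicator_Iio_sub, gammaMeasure_one_Ioi hr]
  have h_scale (b : ℝ) : ∀ᵐ t ∂gammaMeasure (2 * a) r,
      ENNReal.ofReal (Real.exp (-(r * max (c * (t * ((1 + b) / 2) - t * ((1 - b) / 2))) 0))) =
        ENNReal.ofReal (Real.exp (-(t * (r * max (c * b) 0)))) := by
    filter_upwards [ae_gammaMeasure_pos _ _] with t ht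
    rw [mul_left_comm t, mul_max_of_nonneg _ _ ht.le, mul_zero]
    ring_nf
  have h_laplace (b : ℝ) : ∫⁻ t, ENNReal.ofReal (Real.exp (-(t * (r * max (c * b) 0))))
      ∂gammaMeasure (2 * a) r = ENNReal.ofReal ((1 + max (c * b) 0) ^ (-(2 * a))) := by
    have h_pos : 0 < 1 + max (c * b) 0 := by positivity
    rw [lintegral_exp_neg_mul_gammaMeasure (by positivity) hr (by positivity), ← mul_one_add,
      ← div_div, div_self hr.ne', one_div, Real.inv_rpow h_pos.le, Real.rpow_neg h_pos.le]
  rw [lintegral_lintegral_swap (by fun_prop)]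
  simp only [h_swap]
  rw [lintegral_gammaMeasure_lintegral_gammaMeasure_self ha hr (by fun_prop),
    lintegral_lintegral_swap (by fun_prop)]
  exact lintegral_congr fun b => (lintegral_congr_ae (h_scale b)).trans (h_laplace b)

/-- The hyperbolic translation of `(-1, 1)` that moves `0` to `c`. -/
def hypShift (c b : ℝ) : ℝ := (c + b) / (1 + c * b)

lemma one_sub_hypShift_sq {c b : ℝ} (h : 1 + c * b ≠ 0) :
    1 - hypShift c b ^ 2 = (1 - c ^ 2) * (1 - b ^ 2) / (1 + c * b) ^ 2 := by
  rw [hypShift]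
  field

lemma hasDerivAt_hypShift {c b : ℝ} (h : 1 + c * b ≠ 0) :
    HasDerivAt (hypShift c) ((1 - c ^ 2) / (1 + c * b) ^ 2) b := by
  refine (((hasDerivAt_id b).const_add c).div (((hasDerivAt_id b).const_mul c).const_add 1)
    h).congr_deriv ?_
  simp only [id]
  ring

lemma hypShift_neg_hypShift {c b : ℝ} (hc : c ^ 2 ≠ 1) (h : 1 + c * b ≠ 0) :
    hypShift (-c) (hypShift c b) = b := by
  have h_num : -c + hypShift c b = (1 - c ^ 2) * b / (1 + c * b) := by
    rw [hypShift]
    field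
  have h_den : 1 + -c * hypShift c b = (1 - c ^ 2) / (1 + c * b) := by
    rw [hypShift]
    field
  rw [hypShift, h_num, h_den, div_div_div_cancel_right₀ h,
    mul_div_cancel_left₀ b (sub_ne_zero.2 hc.symm)]

lemma bijOn_hypShift {c : ℝ} (hc : c ∈ Set.Ioo (0 : ℝ) 1) :
    Set.BijOn (hypShift c) (Set.Ioo 0 1) (Set.Ioo c 1) := by
  obtain ⟨hc0, hc1⟩ := hc
  have h_add {b : ℝ} (hb : b ∈ Set.Ioo (0 : ℝ) 1) : 0 < 1 + c * b := by
    have := mul_pos hc0 hb.1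
    positivity
  have h_sub {w : ℝ} (hw : w ∈ Set.Ioo c 1) : 0 < 1 + -c * w := by
    nlinarith [mul_lt_one_of_nonneg_of_lt_one_left hc0.le hc1 hw.2.le]
  have h_sq : c ^ 2 ≠ 1 := (pow_lt_one₀ hc0.le hc1 two_ne_zero).ne
  refine Set.InvOn.bijOn (f' := hypShift (-c))
    ⟨fun b hb => hypShift_neg_hypShift h_sq (h_add hb).ne', fun w hw => ?_⟩
    (fun b hb => ⟨?_, ?_⟩) fun w hw => ⟨?_, ?_⟩
  · simpa using hypShift_neg_hypShift (by rwa [neg_sq]) (h_sub hw).ne'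
  · rw [hypShift, lt_div_iff₀ (h_add hb)]
    nlinarith [hb.1, hb.2, mul_pos hc0 hb.1]
  · rw [hypShift, div_lt_one (h_add hb)]
    nlinarith [hb.1, hb.2]
  · exact div_pos (by linarith [hw.1]) (h_sub hw)
  · rw [hypShift, div_lt_one (h_sub hw)]
    nlinarith [hw.1, hw.2]

lemma rpow_mul_rpow_mul_rpow_eq_deriv_mul {c b : ℝ} (hc : 0 < 1 - c ^ 2) (hb : 0 < 1 - b ^ 2)
    (h : 0 < 1 + c * b) :
    (1 - c ^ 2) ^ a * ((1 - b ^ 2) ^ (a - 1) * (1 + c * b) ^ (-(2 * a))) =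
      (1 - c ^ 2) / (1 + c * b) ^ 2 * (1 - hypShift c b ^ 2) ^ (a - 1) := by
  have h_pow : (1 + c * b) ^ (-(2 * a)) = (((1 + c * b) ^ 2) ^ (a - 1) * (1 + c * b) ^ 2)⁻¹ := by
    rw [← Real.rpow_add_one (by positivity), sub_add_cancel, Real.rpow_neg h.le,
      Real.rpow_mul h.le, Real.rpow_two]
  have h_succ : (1 - c ^ 2) ^ a = (1 - c ^ 2) ^ (a - 1) * (1 - c ^ 2) := by
    rw [← Real.rpow_add_one hc.ne', sub_add_cancel]
  rw [one_sub_hypShift_sq h.ne', Real.div_rpow (by positivity) (by positivity),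
    Real.mul_rpow hc.le hb.le, h_pow, h_succ]
  field

lemma lintegral_rpow_mul_rpow_eq_lintegral_Ioo {c : ℝ} (hc : c ∈ Set.Ioo (0 : ℝ) 1) :
    ENNReal.ofReal ((1 - c ^ 2) ^ a) * ∫⁻ b in Set.Ioo (0 : ℝ) 1,
        ENNReal.ofReal ((1 - b ^ 2) ^ (a - 1)) * ENNReal.ofReal ((1 + c * b) ^ (-(2 * a))) =
      ∫⁻ w in Set.Ioo c 1, ENNReal.ofReal ((1 - w ^ 2) ^ (a - 1)) := by
  have h_sq {b : ℝ} (hb : b ∈ Set.Ioo (0 : ℝ) 1) : 0 < 1 - b ^ 2 :=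
    sub_pos.2 (pow_lt_one₀ hb.1.le hb.2 two_ne_zero)
  have h_add {b : ℝ} (hb : b ∈ Set.Ioo (0 : ℝ) 1) : 0 < 1 + c * b := by
    have := mul_pos hc.1 hb.1
    positivity
  rw [← lintegral_const_mul _ (by fun_prop), ← (bijOn_hypShift hc).image_eq,
    lintegral_image_eq_lintegral_abs_deriv_mul measurableSet_Ioo
      (fun b hb => (hasDerivAt_hypShift (h_add hb).ne').hasDerivWithinAt)
      (bijOn_hypShift hc).injOn]
  refine setLIntegral_congr_fun measurableSet_Ioo fun b hb => ?_
  have h_deriv : 0 < (1 - c ^ 2) / (1 + c * b) ^ 2 := div_pos (h_sq hc) (pow_pos (h_add hb) 2)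
  have := h_sq hc
  have := h_sq hb
  have := h_add hb
  rw [abs_of_pos h_deriv, ← ENNReal.ofReal_mul (by positivity),
    ← ENNReal.ofReal_mul (by positivity), ← ENNReal.ofReal_mul h_deriv.le,
    rpow_mul_rpow_mul_rpow_eq_deriv_mul (h_sq hc) (h_sq hb) (h_add hb)]

lemma lintegral_Ioo_lintegral_Ioo {f : ℝ → ENNReal} (hf : Measurable f) :
    ∫⁻ c in Set.Ioo (0 : ℝ) 1, ∫⁻ w in Set.Ioo c 1, f w =
      ∫⁻ w in Set.Ioo (0 : ℝ) 1, ENNReal.ofReal w * f w := by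
  have h_inner : ∀ c ∈ Set.Ioo (0 : ℝ) 1, ∫⁻ w in Set.Ioo c 1, f w =
      ∫⁻ w in Set.Ioo (0 : ℝ) 1, (Set.Ioi c).indicator f w := fun c hc => by
    rw [setLIntegral_indicator measurableSet_Ioi, Set.Ioi_inter_Ioo, max_eq_left hc.1.le]
  have h_meas : Measurable fun z : ℝ × ℝ => (Set.Ioi z.1).indicator f z.2 :=
    (hf.comp measurable_snd).indicator (measurableSet_lt measurable_fst measurable_snd)
  rw [setLIntegral_congr_fun measurableSet_Ioo h_inner,
    lintegral_lintegral_swap h_meas.aemeasurable]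
  refine setLIntegral_congr_fun measurableSet_Ioo fun w hw => ?_
  calc ∫⁻ c in Set.Ioo (0 : ℝ) 1, (Set.Ioi c).indicator f w
      = ∫⁻ c in Set.Ioo (0 : ℝ) 1, (Set.Iio w).indicator (fun _ => f w) c := rfl
    _ = ENNReal.ofReal w * f w := by
        rw [setLIntegral_indicator measurableSet_Iio, Set.inter_comm, Set.Ioo_inter_Iio,
          min_eq_right hw.2.le, setLIntegral_const, Real.volume_Ioo, sub_zero, mul_comm]

lemma lintegral_mul_one_sub_sq_rpow (ha : 0 < a) :
    ∫⁻ w in Set.Ioo (0 : ℝ) 1, ENNReal.ofReal w * ENNReal.ofReal ((1 - w ^ 2) ^ (a - 1)) =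
      ENNReal.ofReal (1 / (2 * a)) := by
  have h_sq {w : ℝ} (hw : w ∈ Set.Ioo (0 : ℝ) 1) : 0 < 1 - w ^ 2 :=
    sub_pos.2 (pow_lt_one₀ hw.1.le hw.2 two_ne_zero)
  have h_cont : ContinuousOn (fun w : ℝ => -((1 - w ^ 2) ^ a / (2 * a))) (Set.Icc 0 1) := by
    fun_prop (disch := positivity)
  have h_deriv : ∀ w ∈ Set.Ioo (0 : ℝ) 1, HasDerivAt (fun w : ℝ => -((1 - w ^ 2) ^ a / (2 * a)))
      (w * (1 - w ^ 2) ^ (a - 1)) w := fun w hw => by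
    refine ((((hasDerivAt_pow 2 w).const_sub 1).rpow_const (Or.inl (h_sq hw).ne')).div_const
      (2 * a)).neg.congr_deriv ?_
    field
  have h_nonneg : ∀ w ∈ Set.Ioo (0 : ℝ) 1, 0 ≤ w * (1 - w ^ 2) ^ (a - 1) := fun w hw =>
    mul_nonneg hw.1.le (Real.rpow_nonneg (h_sq hw).le _)
  have h_int := intervalIntegral.integrableOn_deriv_of_nonneg h_cont h_deriv h_nonneg
  have h_ftc := intervalIntegral.integral_eq_sub_of_hasDerivAt_of_le zero_le_one h_cont h_deriv
    ((intervalIntegrable_iff_integrableOn_Ioc_of_le zero_le_one).2 h_int)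
  rw [intervalIntegral.integral_of_le zero_le_one, integral_Ioc_eq_integral_Ioo] at h_ftc
  rw [setLIntegral_congr_fun measurableSet_Ioo fun w hw => (ENNReal.ofReal_mul hw.1.le).symm,
    ← ofReal_integral_eq_lintegral_ofReal (h_int.mono_set Set.Ioo_subset_Ioc_self)
      (ae_restrict_of_forall_mem measurableSet_Ioo h_nonneg), h_ftc]
  simp [ha.ne']

lemma setLIntegral_Ioi_symBeta (ha : 0 < a) {f : ℝ → ENNReal} (hf : Measurable f) :
    ∫⁻ c in Set.Ioi 0, f c ∂symBeta a = ENNReal.ofReal (symBetaConst a) *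
      ∫⁻ c in Set.Ioo 0 1, ENNReal.ofReal ((1 - c ^ 2) ^ (a - 1)) * f c := by
  rw [setLIntegral_symBeta ha measurableSet_Ioi hf, Set.Ioi_inter_Ioo, max_eq_left (by norm_num)]

lemma setLIntegral_Ioi_symBeta_add_one (ha : 0 < a) :
    ∫⁻ c in Set.Ioi 0, ∫⁻ b in Set.Ioi 0, ENNReal.ofReal ((1 + c * b) ^ (-(2 * a)))
      ∂symBeta a ∂symBeta (a + 1) =
      ENNReal.ofReal (symBetaConst (a + 1) * symBetaConst a / (2 * a)) := by
  have h_const : 0 ≤ symBetaConst (a + 1) := (symBetaConst_pos (by positivity)).le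
  have := isProbabilityMeasure_symBeta ha
  have h_inner : ∀ c ∈ Set.Ioo (0 : ℝ) 1, ENNReal.ofReal ((1 - c ^ 2) ^ (a + 1 - 1)) *
      ∫⁻ b in Set.Ioi 0, ENNReal.ofReal ((1 + c * b) ^ (-(2 * a))) ∂symBeta a =
      ENNReal.ofReal (symBetaConst a) *
        ∫⁻ w in Set.Ioo c 1, ENNReal.ofReal ((1 - w ^ 2) ^ (a - 1)) := fun c hc => by
    rw [setLIntegral_Ioi_symBeta ha (by fun_prop), add_sub_cancel_right, mul_left_comm,
      lintegral_rpow_mul_rpow_eq_lintegral_Ioo hc]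
  rw [setLIntegral_Ioi_symBeta (by positivity) (by fun_prop),
    setLIntegral_congr_fun measurableSet_Ioo h_inner,
    lintegral_const_mul' _ _ ENNReal.ofReal_ne_top, lintegral_Ioo_lintegral_Ioo (by fun_prop),
    lintegral_mul_one_sub_sq_rpow ha, ← ENNReal.ofReal_mul (symBetaConst_pos ha).le,
    ← ENNReal.ofReal_mul h_const]
  ring_nf

lemma lintegral_lintegral_comp_mul {μ ρ : Measure ℝ} [SFinite ρ] [μ.IsNegInvariant]
    [ρ.IsNegInvariant] [NullSingletonClass μ] [NullSingletonClass ρ] {f : ℝ → ENNReal}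
    (hf : Measurable f) :
    ∫⁻ c, ∫⁻ b, f (c * b) ∂ρ ∂μ =
      ∫⁻ c in Set.Ioi 0, ∫⁻ b in Set.Ioi 0, 2 * (f (c * b) + f (-(c * b))) ∂ρ ∂μ := by
  have h_half (c : ℝ) := lintegral_eq_setLIntegral_Ioi_add_comp_neg (μ := ρ)
    (f := fun b => f (c * b)) (by fun_prop)
  rw [lintegral_eq_setLIntegral_Ioi_add_comp_neg (by fun_prop)]
  refine lintegral_congr fun c => ?_
  rw [h_half c, h_half (-c), ← lintegral_add_left (by fun_prop)]
  refine lintegral_congr fun b => ?_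
  rw [mul_neg, neg_mul, neg_mul_neg]
  ring

lemma lintegral_symBeta_add_one (ha : 0 < a) :
    ∫⁻ c, ∫⁻ b, ENNReal.ofReal ((1 + max (c * b) 0) ^ (-(2 * a))) ∂symBeta a ∂symBeta (a + 1) =
      ENNReal.ofReal (1 / 2 + symBetaConst (a + 1) * symBetaConst a / a) := by
  have ha1 : 0 < a + 1 := by positivity
  have := isProbabilityMeasure_symBeta ha
  have := nullSingletonClass_symBeta ha
  have := nullSingletonClass_symBeta ha1
  have := isNegInvariant_symBeta ha
  have := isNegInvariant_symBeta ha1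
  have h_quadrant {c b : ℝ} (hc : 0 < c) (hb : 0 < b) :
      2 * (ENNReal.ofReal ((1 + max (c * b) 0) ^ (-(2 * a))) +
          ENNReal.ofReal ((1 + max (-(c * b)) 0) ^ (-(2 * a)))) =
        2 * ENNReal.ofReal ((1 + c * b) ^ (-(2 * a))) + 2 := by
    have hcb := mul_pos hc hb
    rw [max_eq_left hcb.le, max_eq_right (neg_nonpos.2 hcb.le), add_zero, Real.one_rpow,
      ENNReal.ofReal_one, mul_add, mul_one]
  calc ∫⁻ c, ∫⁻ b, ENNReal.ofReal ((1 + max (c * b) 0) ^ (-(2 * a))) ∂symBeta a ∂symBeta (a + 1)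
      = ∫⁻ c in Set.Ioi 0, ∫⁻ b in Set.Ioi 0,
          (2 * ENNReal.ofReal ((1 + c * b) ^ (-(2 * a))) + 2) ∂symBeta a ∂symBeta (a + 1) := by
        rw [lintegral_lintegral_comp_mul (f := fun x => ENNReal.ofReal ((1 + max x 0) ^ (-(2 * a))))
          (by fun_prop)]
        exact setLIntegral_congr_fun measurableSet_Ioi fun c hc =>
          setLIntegral_congr_fun measurableSet_Ioi fun b hb => h_quadrant hc hb
    _ = 2 * ENNReal.ofReal (symBetaConst (a + 1) * symBetaConst a / (2 * a)) + 2⁻¹ := by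
        simp only [lintegral_add_right _ measurable_const, lintegral_const,
          lintegral_const_mul' _ _ ENNReal.ofNat_ne_top, setLIntegral_Ioi_symBeta_add_one ha,
          Measure.restrict_apply_univ, symBeta_Ioi_zero ha, symBeta_Ioi_zero ha1]
        rw [← mul_assoc, ENNReal.mul_inv_cancel two_ne_zero ENNReal.ofNat_ne_top, one_mul]
    _ = ENNReal.ofReal (1 / 2 + symBetaConst (a + 1) * symBetaConst a / a) := by
        have := symBetaConst_pos ha
        have := symBetaConst_pos ha1
        rw [← ENNReal.ofReal_ofNat, ← ENNReal.ofReal_inv_of_pos two_pos,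
          ← ENNReal.ofReal_mul two_pos.le, ← ENNReal.ofReal_add (by positivity) (by positivity)]
        refine congrArg ENNReal.ofReal ?_
        field

lemma IsUniformProj.measure_sepEvent_complex {m d : ℕ} (hm : 0 < m)
    {ν : Measure (Matrix (Fin d) (Fin d) ℂ)} (hν : IsUniformProj (m + 1) ν)
    (hd : m + 1 + (m + 1) = d) (h : 2 ≤ d) :
    ν (sepEvent h) = ENNReal.ofReal (sepProbC (m + 1)) := by
  have : NeZero m := ⟨hm.ne'⟩
  have hm' : (0 : ℝ) < m := Nat.cast_pos.2 hm
  have h_field : fieldBeta ℂ = 1 := by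
    rw [fieldBeta, Complex.finrank_real_complex, Nat.cast_ofNat, div_self two_ne_zero]
  rw [hν.measure_sepEvent_eq_lintegral_symBeta hd h, h_field, one_mul, one_mul]
  simp only [lintegral_indicator_Iio_gammaMeasure_one hm' one_half_pos]
  rw [Nat.cast_add_one, lintegral_symBeta_add_one hm', sepProbC_add_one hm,
    symBetaConst_eq_gammaRatio_div_sqrt_pi hm',
    symBetaConst_eq_gammaRatio_div_sqrt_pi (by positivity), gammaRatio_add_one hm',
    div_mul_div_comm, Real.mul_self_sqrt Real.pi_pos.le]
  refine congrArg ENNReal.ofReal ?_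
  field

end Complex

/-! ### Crofton averaging over a circle -/

section Circle

lemma lintegral_setLIntegral_preimage_prodMk {Ω α : Type*} [MeasurableSpace Ω] [MeasurableSpace α]
    {μ : Measure Ω} [SFinite μ] {ρ : Measure α} [SFinite ρ] {S : Set (Ω × α)}
    (hS : MeasurableSet S) {φ : α → ENNReal} (hφ : Measurable φ) :
    ∫⁻ ω, ∫⁻ s in Prod.mk ω ⁻¹' S, φ s ∂ρ ∂μ = ∫⁻ s, φ s * μ ((·, s) ⁻¹' S) ∂ρ := by
  have h_indicator (s : α) : φ s * μ ((·, s) ⁻¹' S) =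
      ∫⁻ ω, S.indicator (fun z => φ z.2) (ω, s) ∂μ := by
    rw [← lintegral_indicator_const (hS.preimage measurable_prodMk_right)]
    rfl
  simp_rw [h_indicator, ← lintegral_indicator (hS.preimage measurable_prodMk_left)]
  exact lintegral_lintegral_swap ((hφ.comp measurable_snd).indicator hS).aemeasurable

lemma image_add_mul_cos_Icc {δ : ℝ} (hδ : 0 < δ) (σ : ℝ) :
    (fun t => σ + δ * Real.cos t) '' Set.Icc 0 Real.pi = Set.Icc (σ - δ) (σ + δ) := by
  have h_comp : (fun t => σ + δ * Real.cos t) = (σ + ·) ∘ (δ * ·) ∘ Real.cos := rfl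
  rw [h_comp, Set.image_comp, Set.image_comp, Real.bijOn_cos.image_eq,
    Set.image_mul_left_Icc' hδ, Set.image_const_add_Icc, mul_neg, mul_one, ← sub_eq_add_neg]

lemma setLIntegral_comp_add_mul_cos {δ : ℝ} (hδ : 0 < δ) (σ : ℝ) (φ : ℝ → ENNReal) :
    ∫⁻ t in Set.Ioo 0 Real.pi, φ (σ + δ * Real.cos t) * ENNReal.ofReal |δ * Real.sin t| =
      ∫⁻ s in Set.Icc (σ - δ) (σ + δ), φ s := by
  have h_deriv (t : ℝ) : HasDerivAt (fun t => σ + δ * Real.cos t) (δ * -Real.sin t) t :=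
    ((Real.hasDerivAt_cos t).const_mul δ).const_add σ
  have h_inj : Set.InjOn (fun t => σ + δ * Real.cos t) (Set.Icc 0 Real.pi) := fun x hx y hy hxy =>
    Real.injOn_cos hx hy (mul_left_cancel₀ hδ.ne' (add_left_cancel hxy))
  rw [← image_add_mul_cos_Icc hδ, lintegral_image_eq_lintegral_abs_deriv_mul measurableSet_Icc
    (fun t _ => (h_deriv t).hasDerivWithinAt) h_inj, setLIntegral_congr Ioo_ae_eq_Icc]
  simp only [mul_neg, abs_neg, mul_comm]

lemma setLIntegral_Ioc_comp_sub_of_periodic {T : ℝ} (hT : 0 < T) {f : ℝ → ENNReal}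
    (hf : Function.Periodic f T) (a θ : ℝ) :
    ∫⁻ t in Set.Ioc a (a + T), f (t - θ) = ∫⁻ t in Set.Ioc a (a + T), f t := by
  have : Fact (0 < T) := ⟨hT⟩
  have h_lift (t : ℝ) : f t = hf.lift (t : AddCircle T) := (hf.lift_coe t).symm
  simp only [h_lift, AddCircle.coe_sub]
  rw [AddCircle.lintegral_preimage T a fun x => hf.lift (x - (θ : AddCircle T)),
    AddCircle.lintegral_preimage T a, lintegral_sub_right_eq_self]

lemma setLIntegral_Ioc_neg_eq_two_mul_of_even {f : ℝ → ENNReal} (hf : Measurable f)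
    (h_even : Function.Even f) (a : ℝ) :
    ∫⁻ t in Set.Ioc (-a) a, f t = 2 * ∫⁻ t in Set.Ioo 0 a, f t := by
  have h_inter : Set.Ioo (-a) a ∩ Set.Ioi 0 = Set.Ioo 0 a := by grind
  have h_indicator (t : ℝ) :
      (Set.Ioo (-a) a).indicator f (-t) = (Set.Ioo (-a) a).indicator f t := by
    grind [Set.indicator_apply, Function.Even]
  rw [← setLIntegral_congr Ioo_ae_eq_Ioc, ← lintegral_indicator measurableSet_Ioo,
    lintegral_eq_setLIntegral_Ioi_add_comp_neg (hf.indicator measurableSet_Ioo)]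
  simp only [h_indicator, ← two_mul]
  rw [lintegral_const_mul _ (hf.indicator measurableSet_Ioo),
    setLIntegral_indicator measurableSet_Ioo, h_inter]

lemma exists_polar (p q : ℝ) : ∃ δ θ : ℝ, 0 ≤ δ ∧ p = δ * Real.cos θ ∧ q = δ * Real.sin θ :=
  ⟨‖(⟨p, q⟩ : ℂ)‖, Complex.arg ⟨p, q⟩, norm_nonneg _, (Complex.norm_mul_cos_arg ⟨p, q⟩).symm,
    (Complex.norm_mul_sin_arg ⟨p, q⟩).symm⟩

/-- As `t` runs over the circle, `σ + p cos t + q sin t` covers every value of the interval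
of radius `√(p² + q²)` about `σ` exactly twice. -/
lemma setLIntegral_comp_add_mul_cos_add_mul_sin (σ p q : ℝ) {φ : ℝ → ENNReal}
    (hφ : Measurable φ) :
    ∫⁻ t in Set.Ioc (-Real.pi) Real.pi, φ (σ + (p * Real.cos t + q * Real.sin t)) *
        ENNReal.ofReal |q * Real.cos t - p * Real.sin t| =
      2 * ∫⁻ s in {s | (s - σ) ^ 2 < p ^ 2 + q ^ 2}, φ s := by
  obtain ⟨δ, θ, hδ, rfl, rfl⟩ := exists_polar p q
  set f : ℝ → ENNReal := fun t => φ (σ + δ * Real.cos t) * ENNReal.ofReal |δ * Real.sin t| with hf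
  have h_shift (t : ℝ) : φ (σ + (δ * Real.cos θ * Real.cos t + δ * Real.sin θ * Real.sin t)) *
      ENNReal.ofReal |δ * Real.sin θ * Real.cos t - δ * Real.cos θ * Real.sin t| = f (t - θ) := by
    rw [hf, ← abs_neg]
    simp only [Real.cos_sub, Real.sin_sub]
    ring_nf
  have h_periodic : Function.Periodic f (2 * Real.pi) := fun t => by
    simp only [hf, Real.cos_add_two_pi, Real.sin_add_two_pi]
  have h_even : Function.Even f := fun t => by
    simp only [hf, Real.cos_neg, Real.sin_neg, mul_neg, abs_neg]
  have h_circle : -Real.pi + 2 * Real.pi = Real.pi := by ring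
  have h_set : {s | (s - σ) ^ 2 < (δ * Real.cos θ) ^ 2 + (δ * Real.sin θ) ^ 2} =
      Set.Ioo (σ - δ) (σ + δ) := by
    have h_radius : (δ * Real.cos θ) ^ 2 + (δ * Real.sin θ) ^ 2 = δ ^ 2 := by
      linear_combination δ ^ 2 * Real.sin_sq_add_cos_sq θ
    ext s
    rw [Set.mem_ofPred_eq, h_radius, sq_lt_sq, abs_of_nonneg hδ, abs_lt]
    grind
  have h_rotate := setLIntegral_Ioc_comp_sub_of_periodic Real.two_pi_pos h_periodic (-Real.pi) θ
  rw [h_circle] at h_rotate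
  simp only [h_shift]
  rw [h_rotate, setLIntegral_Ioc_neg_eq_two_mul_of_even (by fun_prop) h_even, h_set]
  rcases hδ.eq_or_lt with rfl | hδ
  · simp [hf]
  · rw [hf, setLIntegral_comp_add_mul_cos hδ, setLIntegral_congr Ioo_ae_eq_Icc]

/-- The eigenvalues of the symmetric matrix with diagonal `α`, `γ` and off-diagonal entry `β` are
the extremal values of the diagonal entry along its orbit under rotations. -/
lemma lintegral_eq_lintegral_mul_measure_of_rotation_invariant {Ω : Type*} [MeasurableSpace Ω]
    {μ : Measure Ω} [SFinite μ] {α β γ : Ω → ℝ} (hα : Measurable α) (hβ : Measurable β)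
    (hγ : Measurable γ) {φ : ℝ → ENNReal} (hφ : Measurable φ) {A : ENNReal}
    (hA : ∀ t : ℝ, A = ∫⁻ ω, φ ((α ω + γ ω) / 2 + ((α ω - γ ω) / 2 * Real.cos t +
        β ω * Real.sin t)) *
      ENNReal.ofReal |β ω * Real.cos t - (α ω - γ ω) / 2 * Real.sin t| ∂μ) :
    ENNReal.ofReal Real.pi * A =
      ∫⁻ s, φ s * μ {ω | (α ω - s) * (γ ω - s) < β ω ^ 2} := by
  have h_set : MeasurableSet {z : Ω × ℝ | (α z.1 - z.2) * (γ z.1 - z.2) < β z.1 ^ 2} :=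
    measurableSet_lt (by fun_prop) (by fun_prop)
  have h_double : 2 * (ENNReal.ofReal Real.pi * A) =
      2 * ∫⁻ s, φ s * μ {ω | (α ω - s) * (γ ω - s) < β ω ^ 2} := by
    calc 2 * (ENNReal.ofReal Real.pi * A)
        = ∫⁻ _ in Set.Ioc (-Real.pi) Real.pi, A := by
          rw [setLIntegral_const, Real.volume_Ioc, sub_neg_eq_add, ← two_mul,
            ENNReal.ofReal_mul two_pos.le, ENNReal.ofReal_ofNat]
          ring
      _ = ∫⁻ ω, (∫⁻ t in Set.Ioc (-Real.pi) Real.pi,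
            φ ((α ω + γ ω) / 2 + ((α ω - γ ω) / 2 * Real.cos t + β ω * Real.sin t)) *
            ENNReal.ofReal |β ω * Real.cos t - (α ω - γ ω) / 2 * Real.sin t|) ∂μ := by
          rw [lintegral_congr hA]
          exact lintegral_lintegral_swap (by fun_prop)
      _ = 2 * ∫⁻ ω, (∫⁻ s in {s | (α ω - s) * (γ ω - s) < β ω ^ 2}, φ s) ∂μ := by
          rw [← lintegral_const_mul' _ _ ENNReal.ofNat_ne_top]
          refine lintegral_congr fun ω => ?_
          rw [setLIntegral_comp_add_mul_cos_add_mul_sin _ _ _ hφ]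
          congr 4 with s
          rw [← sub_neg, ← sub_neg (b := β ω ^ 2)]
          ring_nf
      _ = _ := congrArg (2 * ·) (lintegral_setLIntegral_preimage_prodMk h_set hφ)
  exact (ENNReal.mul_right_inj two_ne_zero ENNReal.ofNat_ne_top).1 h_double

end Circle

/-- The probability that `s` lies strictly between the eigenvalues of the corner of `2P - 1`
spanned by `e_i` and `e_j`. -/
def betweenProb {d : ℕ} (ν : Measure (Matrix (Fin d) (Fin d) 𝕜)) (i j : Fin d) (s : ℝ) : ENNReal :=
  ν {P | (reflQuad P (Pi.single i 1) - s) * (reflQuad P (Pi.single j 1) - s) <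
    ‖reflForm P (Pi.single i 1) (Pi.single j 1)‖ ^ 2}

lemma measurable_betweenProb {d : ℕ} (ν : Measure (Matrix (Fin d) (Fin d) 𝕜)) [SFinite ν]
    (i j : Fin d) : Measurable (betweenProb ν i j) := by
  refine measurable_measure_prodMk_left (s := {z : ℝ × Matrix (Fin d) (Fin d) 𝕜 |
    (reflQuad z.2 (Pi.single i 1) - z.1) * (reflQuad z.2 (Pi.single j 1) - z.1) <
      ‖reflForm z.2 (Pi.single i 1) (Pi.single j 1)‖ ^ 2}) ?_
  have h_quad (i : Fin d) : Measurable fun z : ℝ × Matrix (Fin d) (Fin d) 𝕜 =>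
      reflQuad z.2 (Pi.single i 1) - z.1 :=
    (measurable_reflQuad measurable_snd measurable_const).sub measurable_fst
  exact measurableSet_lt ((h_quad i).mul (h_quad j))
    ((measurable_reflForm measurable_snd measurable_const measurable_const).norm.pow_const 2)

lemma reflForm_smul_single_add_smul_single {d : ℕ} {P : Matrix (Fin d) (Fin d) ℝ}
    (hP : P.IsHermitian) (i j : Fin d) (x y z w : ℝ) :
    reflForm P (x • Pi.single i 1 + y • Pi.single j 1) (z • Pi.single i 1 + w • Pi.single j 1) =
      x * z * reflQuad P (Pi.single i 1) +
        (x * w + y * z) * reflForm P (Pi.single i 1) (Pi.single j 1) +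
        y * w * reflQuad P (Pi.single j 1) := by
  have h_symm : reflForm P (Pi.single j 1) (Pi.single i 1) =
      reflForm P (Pi.single i 1) (Pi.single j 1) :=
    (star_reflForm hP (Pi.single i 1) (Pi.single j 1)).symm
  simp only [reflQuad, RCLike.re_to_real]
  simp only [reflForm, star_trivial, mulVec_add, mulVec_smul, dotProduct_add, add_dotProduct,
    dotProduct_smul, smul_dotProduct, smul_eq_mul] at h_symm ⊢
  rw [h_symm]
  ring

lemma sqLen_smul_single_add_smul_single {d : ℕ} {i j : Fin d} (hij : i ≠ j) (x y : ℝ) :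
    sqLen (x • Pi.single i 1 + y • Pi.single j 1 : Fin d → ℝ) = x ^ 2 + y ^ 2 := by
  have h_dot := ofReal_sqLen (x • Pi.single i 1 + y • Pi.single j 1 : Fin d → ℝ)
  rw [RCLike.ofReal_real_eq_id, id] at h_dot
  rw [h_dot]
  simp [hij, hij.symm, sq]

/-- Under the rotation by the angle `t / 2` in the plane of `e_i` and `e_j`, the trace-free part of
the corner of `2P - 1` turns by the angle `t`. -/
lemma IsUniformProj.lintegral_rotate {d k : ℕ} {ν : Measure (Matrix (Fin d) (Fin d) ℝ)}
    (hν : IsUniformProj k ν) {i j : Fin d} (hij : i ≠ j) {φ : ℝ → ENNReal} (hφ : Measurable φ)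
    (t : ℝ) :
    ∫⁻ P, φ (reflQuad P (Pi.single i 1)) *
        ENNReal.ofReal ‖reflForm P (Pi.single i 1) (Pi.single j 1)‖ ∂ν =
      ∫⁻ P, φ ((reflQuad P (Pi.single i 1) + reflQuad P (Pi.single j 1)) / 2 +
          ((reflQuad P (Pi.single i 1) - reflQuad P (Pi.single j 1)) / 2 * Real.cos t +
            reflForm P (Pi.single i 1) (Pi.single j 1) * Real.sin t)) *
        ENNReal.ofReal |reflForm P (Pi.single i 1) (Pi.single j 1) * Real.cos t -
          (reflQuad P (Pi.single i 1) - reflQuad P (Pi.single j 1)) / 2 * Real.sin t| ∂ν := by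
  set c := Real.cos (t / 2)
  set s := Real.sin (t / 2)
  have h_sq : s ^ 2 + c ^ 2 = 1 := Real.sin_sq_add_cos_sq _
  have h_cos : Real.cos t = c ^ 2 - s ^ 2 := by
    rw [← Real.cos_two_mul', mul_div_cancel₀ t two_ne_zero]
  have h_sin : Real.sin t = 2 * s * c := by rw [← Real.sin_two_mul, mul_div_cancel₀ t two_ne_zero]
  rw [hν.lintegral_single_single hij (u := c • Pi.single i 1 + s • Pi.single j 1)
    (v := (-s) • Pi.single i 1 + c • Pi.single j 1)
    (by rw [sqLen_smul_single_add_smul_single hij, add_comm, h_sq])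
    (by rw [sqLen_smul_single_add_smul_single hij, neg_sq, h_sq])
    (by simp [hij, hij.symm]; ring)
    (f := fun x y _ => φ x * ENNReal.ofReal ‖y‖) (by fun_prop)]
  refine lintegral_congr_ae ?_
  filter_upwards [hν.2.1] with P hP
  simp only [reflQuad, RCLike.re_to_real, reflForm_smul_single_add_smul_single hP.1,
    Real.norm_eq_abs, h_cos, h_sin]
  congr 2
  · linear_combination (reflForm P (Pi.single i 1) (Pi.single i 1) +
      reflForm P (Pi.single j 1) (Pi.single j 1)) / 2 * h_sq
  · congr 1
    ring

lemma IsUniformProj.lintegral_mul_norm_reflForm_eq_lintegral_mul_betweenProb {d k : ℕ}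
    {ν : Measure (Matrix (Fin d) (Fin d) ℝ)} (hν : IsUniformProj k ν) {i j : Fin d} (hij : i ≠ j)
    {φ : ℝ → ENNReal} (hφ : Measurable φ) :
    ENNReal.ofReal Real.pi * ∫⁻ P, φ (reflQuad P (Pi.single i 1)) *
        ENNReal.ofReal ‖reflForm P (Pi.single i 1) (Pi.single j 1)‖ ∂ν =
      ∫⁻ s, φ s * betweenProb ν i j s := by
  have := hν.1
  simp only [betweenProb, Real.norm_eq_abs, sq_abs]
  exact lintegral_eq_lintegral_mul_measure_of_rotation_invariant
    (measurable_reflQuad measurable_id measurable_const)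
    (measurable_reflForm measurable_id measurable_const measurable_const)
    (measurable_reflQuad measurable_id measurable_const) hφ (hν.lintegral_rotate hij hφ)

/-! ### The off-diagonal entry -/

section OffDiagonal

lemma gammaPDF_mul_sqrt {a r t : ℝ} (ha : 0 < a) (hr : 0 < r) (ht : t ≠ 0) :
    gammaPDF a r t * ENNReal.ofReal √t =
      ENNReal.ofReal (gammaRatio a / √r) * gammaPDF (a + 1 / 2) r t := by
  rcases ht.lt_or_gt with ht | ht
  · simp [gammaPDF_of_neg ht]
  have hΓ := (Real.Gamma_pos_of_pos ha).ne'
  have hΓ_half := (Real.Gamma_pos_of_pos (by positivity : 0 < a + 1 / 2)).ne'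
  have := Real.sqrt_pos.2 hr
  rw [gammaPDF_of_nonneg ht.le, gammaPDF_of_nonneg ht.le, ← ENNReal.ofReal_mul (by positivity),
    ← ENNReal.ofReal_mul (by have := gammaRatio_pos ha; positivity), Real.rpow_add hr,
    add_sub_right_comm, Real.rpow_add ht, ← Real.sqrt_eq_rpow, ← Real.sqrt_eq_rpow, gammaRatio]
  congr 1
  field

lemma lintegral_sqrt_gammaMeasure {a r : ℝ} (ha : 0 < a) (hr : 0 < r) :
    ∫⁻ t, ENNReal.ofReal √t ∂gammaMeasure a r = ENNReal.ofReal (gammaRatio a / √r) := by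
  rw [lintegral_gammaMeasure (by fun_prop),
    lintegral_congr_ae ((Measure.ae_ne volume 0).mono fun t => gammaPDF_mul_sqrt ha hr),
    lintegral_const_mul _ (measurable_gammaPDF _ _),
    lintegral_gammaPDF_eq_one (by positivity) hr, mul_one]

variable {d k q : ℕ} {ν : Measure (Matrix (Fin d) (Fin d) 𝕜)}

lemma lintegral_gauss_norm_apply {ι : Type*} [Fintype ι] (i : ι) :
    ∫⁻ v, ENNReal.ofReal ‖v i‖ ∂gauss 𝕜 ι =
      ENNReal.ofReal (gammaRatio (fieldBeta 𝕜) / √(1 / 2)) := by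
  have h_eval : MeasurePreserving (fun v : ι → 𝕜 => v i) (gauss 𝕜 ι) (stdGaussian 𝕜) :=
    measurePreserving_eval (fun _ : ι => stdGaussian 𝕜) i
  rw [h_eval.lintegral_comp (f := fun z => ENNReal.ofReal ‖z‖) (by fun_prop),
    ← lintegral_sqrt_gammaMeasure fieldBeta_pos one_half_pos, fieldBeta,
    ← lintegral_stdGaussian_norm_sq (by fun_prop)]
  simp only [Real.sqrt_sq (norm_nonneg _)]

lemma lintegral_gauss_norm_dotProduct [NeZero d] (z : Fin d → 𝕜) :
    ∫⁻ v, ENNReal.ofReal ‖star z ⬝ᵥ v‖ ∂gauss 𝕜 (Fin d) =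
      ENNReal.ofReal √(sqLen z) * ENNReal.ofReal (gammaRatio (fieldBeta 𝕜) / √(1 / 2)) := by
  rcases eq_or_ne z 0 with rfl | hz
  · simp [sqLen]
  set r : 𝕜 := ((√(sqLen z) : ℝ) : 𝕜) with hr
  have hr0 : r ≠ 0 := RCLike.ofReal_ne_zero.2 (Real.sqrt_pos.2 (sqLen_pos hz)).ne'
  obtain ⟨U, hU, hUz⟩ := exists_unitary_mulVec_single_eq_of_unit 0 (sqLen_normalize hz)
  have h_polar : z = r • (U *ᵥ Pi.single 0 1) := by
    rw [hUz, RCLike.ofReal_inv, smul_inv_smul₀ hr0]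
  have h_norm (v : Fin d → 𝕜) :
      ENNReal.ofReal ‖star z ⬝ᵥ (U *ᵥ v)‖ =
        ENNReal.ofReal √(sqLen z) * ENNReal.ofReal ‖v 0‖ := by
    have h_dot : star z ⬝ᵥ (U *ᵥ v) = star r * v 0 := by
      rw [h_polar, star_smul, star_mulVec, smul_dotProduct, ← dotProduct_mulVec, mulVec_mulVec,
        ← star_eq_conjTranspose, mem_unitaryGroup_iff'.1 hU, one_mulVec]
      simp
    rw [h_dot, norm_mul, norm_star, hr, RCLike.norm_ofReal, abs_of_nonneg (Real.sqrt_nonneg _),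
      ENNReal.ofReal_mul (Real.sqrt_nonneg _)]
  rw [← (measurePreserving_mulVec_gauss hU).lintegral_comp (by unfold dotProduct; fun_prop)]
  simp only [h_norm]
  rw [lintegral_const_mul' _ _ ENNReal.ofReal_ne_top, lintegral_gauss_norm_apply]

lemma star_dotProduct_update_zero (i : Fin d) (u v : Fin d → 𝕜) :
    star u ⬝ᵥ Function.update v i 0 = star (Function.update u i 0) ⬝ᵥ v := by
  refine Finset.sum_congr rfl fun k _ => ?_
  rcases eq_or_ne k i with rfl | hk
  · simp
  · simp [hk]

lemma sqLen_update_zero (i : Fin d) (v : Fin d → 𝕜) :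
    sqLen (Function.update v i 0) = sqLen v - ‖v i‖ ^ 2 := by
  simp only [sqLen, ← Finset.sum_erase_add _ _ (Finset.mem_univ i), Function.update_self]
  rw [Finset.sum_congr rfl fun k hk => by rw [Function.update_of_ne (Finset.ne_of_mem_erase hk)]]
  simp

lemma lintegral_gauss_sqLen_update_zero [NeZero q] (hd : q + 1 = d) (i : Fin d)
    {f : ℝ → ENNReal} (hf : Measurable f) :
    ∫⁻ v, f (sqLen (Function.update v i 0)) ∂gauss 𝕜 (Fin d) =
      ∫⁻ t, f t ∂gammaMeasure (fieldBeta 𝕜 * q) (1 / 2) := by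
  subst hd
  have h_split := measurePreserving_piFinSuccAbove (fun _ : Fin (q + 1) => stdGaussian 𝕜) i
  have h_remove (v : Fin (q + 1) → 𝕜) :
      sqLen (Function.update v i 0) = sqLen (i.removeNth v) := by
    simp [sqLen, Fin.sum_univ_succAbove _ i, Fin.removeNth]
  have h_snd := (measurePreserving_snd (μ := stdGaussian 𝕜) (ν := gauss 𝕜 (Fin q))).comp h_split
  have h_len := lintegral_gauss_sqLen (𝕜 := 𝕜) (ι := Fin q) hf
  rw [Fintype.card_fin] at h_len
  simp only [h_remove]
  rw [← h_len]
  exact h_snd.lintegral_comp (f := fun w : Fin q → 𝕜 => f (sqLen w)) (by fun_prop)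

lemma IsUniformProj.sqrt_sqLen_mul_lintegral_mul_norm_reflForm (hν : IsUniformProj k ν)
    {i j : Fin d} (hij : i ≠ j) {φ : ℝ → ENNReal} (hφ : Measurable φ) {w : Fin d → 𝕜}
    (hw : w i = 0) :
    ENNReal.ofReal √(sqLen w) * ∫⁻ P, φ (reflQuad P (Pi.single i 1)) *
        ENNReal.ofReal ‖reflForm P (Pi.single i 1) (Pi.single j 1)‖ ∂ν =
      ∫⁻ P, φ (reflQuad P (Pi.single i 1)) *
        ENNReal.ofReal ‖reflForm P (Pi.single i 1) w‖ ∂ν := by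
  rcases eq_or_ne w 0 with rfl | hw0
  · simp [sqLen, reflForm]
  have h_len : 0 < √(sqLen w) := Real.sqrt_pos.2 (sqLen_pos hw0)
  have h_norm (P : Matrix (Fin d) (Fin d) 𝕜) : ENNReal.ofReal ‖reflForm P (Pi.single i 1) w‖ =
      ENNReal.ofReal √(sqLen w) *
        ENNReal.ofReal ‖reflForm P (Pi.single i 1) ((((√(sqLen w))⁻¹ : ℝ) : 𝕜) • w)‖ := by
    rw [reflForm, reflForm, mulVec_smul, dotProduct_smul, smul_eq_mul, norm_mul,
      RCLike.norm_ofReal, abs_of_pos (inv_pos.2 h_len), ← ENNReal.ofReal_mul h_len.le,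
      mul_inv_cancel_left₀ h_len.ne']
  rw [hν.lintegral_single_single hij (u := Pi.single i 1)
    (by simp [sqLen, Pi.single_apply, apply_ite])
    (sqLen_normalize hw0) (by simp [hw]) (f := fun x y _ => φ x * ENNReal.ofReal ‖y‖)
    (by fun_prop), ← lintegral_const_mul' _ _ ENNReal.ofReal_ne_top]
  simp only [h_norm, mul_left_comm]

lemma IsProjOfRank.lintegral_norm_reflForm_update_zero [NeZero d]
    {P : Matrix (Fin d) (Fin d) 𝕜} (hP : IsProjOfRank k P) (i : Fin d) :
    ∫⁻ v, ENNReal.ofReal ‖reflForm P (Pi.single i 1) (Function.update v i 0)‖ ∂gauss 𝕜 (Fin d) =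
      ENNReal.ofReal √(1 - reflQuad P (Pi.single i 1) ^ 2) *
        ENNReal.ofReal (gammaRatio (fieldBeta 𝕜) / √(1 / 2)) := by
  set u : Fin d → 𝕜 := reflMat P *ᵥ Pi.single i 1 with hu
  have hR := isHermitian_reflMat hP.1
  have h_form (v : Fin d → 𝕜) : reflForm P (Pi.single i 1) (Function.update v i 0) =
      star (Function.update u i 0) ⬝ᵥ v := by
    rw [← star_dotProduct_update_zero, hu, star_mulVec, hR.eq, ← dotProduct_mulVec, reflForm]
  have h_unit : sqLen u = 1 := by
    rw [sqLen_mulVec_of_conjTranspose_mul_self (by rw [hR.eq, reflMat_mul_self hP.2.1])]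
    simp [sqLen, Pi.single_apply, apply_ite]
  have h_diag : ‖u i‖ ^ 2 = reflQuad P (Pi.single i 1) ^ 2 := by
    have h_apply : u i = reflForm P (Pi.single i 1) (Pi.single i 1) := by
      rw [reflForm_single, hu]
      simp
    rw [h_apply, ← ofReal_reflQuad hP.1, RCLike.norm_ofReal, sq_abs]
  simp only [h_form]
  rw [lintegral_gauss_norm_dotProduct, sqLen_update_zero, h_unit, h_diag]

lemma IsUniformProj.lintegral_lintegral_norm_reflForm_update_zero [NeZero d]
    (hν : IsUniformProj k ν) (i : Fin d) {φ : ℝ → ENNReal} (hφ : Measurable φ) :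
    ∫⁻ v, ∫⁻ P, φ (reflQuad P (Pi.single i 1)) *
        ENNReal.ofReal ‖reflForm P (Pi.single i 1) (Function.update v i 0)‖ ∂ν ∂gauss 𝕜 (Fin d) =
      ENNReal.ofReal (gammaRatio (fieldBeta 𝕜) / √(1 / 2)) *
        ∫⁻ P, φ (reflQuad P (Pi.single i 1)) *
          ENNReal.ofReal √(1 - reflQuad P (Pi.single i 1) ^ 2) ∂ν := by
  have := hν.1
  have h_update : Measurable fun v : Fin d → 𝕜 => Function.update v i 0 := measurable_update_left
  have h_meas : Measurable fun z : (Fin d → 𝕜) × Matrix (Fin d) (Fin d) 𝕜 =>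
      φ (reflQuad z.2 (Pi.single i 1)) *
        ENNReal.ofReal ‖reflForm z.2 (Pi.single i 1) (Function.update z.1 i 0)‖ :=
    (hφ.comp (measurable_reflQuad measurable_snd measurable_const)).mul
      (measurable_reflForm measurable_snd measurable_const
        (h_update.comp measurable_fst)).norm.ennreal_ofReal
  rw [lintegral_lintegral_swap h_meas.aemeasurable,
    ← lintegral_const_mul' _ _ ENNReal.ofReal_ne_top]
  refine lintegral_congr_ae (hν.2.1.mono fun P hP => ?_)
  beta_reduce
  rw [lintegral_const_mul _ ((measurable_reflForm measurable_const measurable_const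
    h_update).norm.ennreal_ofReal), hP.lintegral_norm_reflForm_update_zero i]
  ring

/-- Given the diagonal entry `α` of `2P - 1`, the rest of its row is uniformly distributed on a
sphere of radius `√(1 - α²)`. -/
lemma IsUniformProj.lintegral_mul_norm_reflForm [NeZero q] (hν : IsUniformProj k ν)
    (hd : q + 1 = d) {i j : Fin d} (hij : i ≠ j) {φ : ℝ → ENNReal} (hφ : Measurable φ) :
    ENNReal.ofReal (gammaRatio (fieldBeta 𝕜 * q)) *
        ∫⁻ P, φ (reflQuad P (Pi.single i 1)) *
          ENNReal.ofReal ‖reflForm P (Pi.single i 1) (Pi.single j 1)‖ ∂ν =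
      ENNReal.ofReal (gammaRatio (fieldBeta 𝕜)) *
        ∫⁻ P, φ (reflQuad P (Pi.single i 1)) *
          ENNReal.ofReal √(1 - reflQuad P (Pi.single i 1) ^ 2) ∂ν := by
  have : NeZero d := ⟨by omega⟩
  have h_avg := hν.lintegral_lintegral_norm_reflForm_update_zero i hφ
  simp only [← hν.sqrt_sqLen_mul_lintegral_mul_norm_reflForm hij hφ (Function.update_self ..)]
    at h_avg
  rw [lintegral_mul_const _ (by fun_prop), lintegral_gauss_sqLen_update_zero hd i
    (f := fun t => ENNReal.ofReal √t) (by fun_prop),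
    lintegral_sqrt_gammaMeasure (fieldBeta_mul_natCast_pos q) one_half_pos] at h_avg
  have h_cancel (x : ℝ) : ENNReal.ofReal x =
      ENNReal.ofReal √(1 / 2) * ENNReal.ofReal (x / √(1 / 2)) := by
    rw [← ENNReal.ofReal_mul (Real.sqrt_nonneg _), mul_div_cancel₀ _ (by positivity)]
  rw [h_cancel, h_cancel (gammaRatio _), mul_assoc, mul_assoc, h_avg]

end OffDiagonal

/-! ### The real case -/

section Real

lemma nullSingletonClass_gammaMeasure (a r : ℝ) : NullSingletonClass (gammaMeasure a r) := by
  unfold gammaMeasure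
  infer_instance

lemma lintegral_lintegral_indicator_singleton_zero_sub {α : Type*} [MeasurableSpace α]
    {μ : Measure α} {ρ : Measure ℝ} [SFinite μ] [SFinite ρ] [NullSingletonClass ρ] {f : α → ℝ}
    (hf : Measurable f) :
    ∫⁻ g, ∫⁻ a, ({0} : Set ℝ).indicator (1 : ℝ → ENNReal) (f a - g) ∂μ ∂ρ = 0 := by
  have h_ind : Measurable (({0} : Set ℝ).indicator (1 : ℝ → ENNReal)) :=
    measurable_one.indicator (measurableSet_singleton 0)
  have h_inner (a : α) : ∫⁻ g, ({0} : Set ℝ).indicator (1 : ℝ → ENNReal) (f a - g) ∂ρ = 0 := by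
    rw [lintegral_eq_zero_iff (by fun_prop)]
    filter_upwards [ρ.ae_ne (f a)] with g hg
    exact Set.indicator_of_notMem (s := {0}) (f := (1 : ℝ → ENNReal)) (sub_ne_zero.2 hg.symm)
  rw [lintegral_lintegral_swap (by fun_prop)]
  simp only [h_inner, lintegral_zero]

lemma IsUniformProj.ae_gramForm_single_ne_zero {d m : ℕ} [NeZero m]
    {ν : Measure (Matrix (Fin d) (Fin d) 𝕜)} (hν : IsUniformProj (m + 1) ν)
    (hd : m + 1 + (m + 1) = d) {i j : Fin d} (hij : i ≠ j) :
    ∀ᵐ P ∂ν, gramForm P (Pi.single i 1) (Pi.single j 1) ≠ 0 := by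
  have h_ind : Measurable (({0} : Set ℝ).indicator (1 : ℝ → ENNReal)) :=
    measurable_one.indicator (measurableSet_singleton 0)
  have h_cone (r x : ℝ) (hr : 0 < r) : ({0} : Set ℝ).indicator (1 : ℝ → ENNReal) (r * x) =
      ({0} : Set ℝ).indicator 1 x := by
    simp only [Set.indicator_apply, Set.mem_singleton_iff, mul_eq_zero, hr.ne', false_or,
      Pi.one_apply]
  have := isProbabilityMeasure_gammaMeasure (r := 1 / 2) (fieldBeta_pos (𝕜 := 𝕜)) (by norm_num)
  have := isProbabilityMeasure_gammaMeasure (r := 1 / 2) (fieldBeta_mul_natCast_pos (𝕜 := 𝕜) m)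
    (by norm_num)
  have := nullSingletonClass_gammaMeasure (fieldBeta 𝕜) (1 / 2)
  have h_inner (c : ℝ) (g : ℝ) := lintegral_lintegral
    (μ := gammaMeasure (fieldBeta 𝕜 * m) (1 / 2)) (ν := gammaMeasure (fieldBeta 𝕜 * m) (1 / 2))
    (f := fun x y => ({0} : Set ℝ).indicator (1 : ℝ → ENNReal) (c * (x - y) - g)) (by fun_prop)
  have h_zero : ∫⁻ P, ({0} : Set ℝ).indicator (1 : ℝ → ENNReal)
      (gramForm P (Pi.single i 1) (Pi.single j 1)) ∂ν = 0 := by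
    rw [hν.lintegral_gramForm_single hd hij h_ind h_cone]
    simp only [h_inner]
    exact (lintegral_congr fun P => lintegral_lintegral_indicator_singleton_zero_sub
      (f := fun z : ℝ × ℝ => reflQuad P (Pi.single i 1) * (z.1 - z.2)) (by fun_prop)).trans
      lintegral_zero
  have h_meas : Measurable fun P : Matrix (Fin d) (Fin d) 𝕜 =>
      gramForm P (Pi.single i 1) (Pi.single j 1) :=
    measurable_gramForm measurable_id measurable_const measurable_const
  filter_upwards [(lintegral_eq_zero_iff (h_ind.comp h_meas)).1 h_zero] with P hP h0
  simp [h0] at hP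

lemma IsUniformProj.tendsto_betweenProb_zero {d m : ℕ} [NeZero m]
    {ν : Measure (Matrix (Fin d) (Fin d) 𝕜)} (hν : IsUniformProj (m + 1) ν)
    (hd : m + 1 + (m + 1) = d) {i j : Fin d} (hij : i ≠ j) :
    Filter.Tendsto (betweenProb ν i j) (nhds 0) (nhds (betweenProb ν i j 0)) := by
  have := hν.1
  have h_quad (i : Fin d) : Measurable fun P : Matrix (Fin d) (Fin d) 𝕜 =>
      reflQuad P (Pi.single i 1) := measurable_reflQuad measurable_id measurable_const
  have h_meas (s : ℝ) := measurableSet_lt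
    (((h_quad i).sub_const s).mul ((h_quad j).sub_const s))
    ((measurable_reflForm (𝕜 := 𝕜) measurable_id (measurable_const (a := Pi.single i 1))
      (measurable_const (a := Pi.single j 1))).norm.pow_const 2)
  refine tendsto_measure_of_ae_tendsto_indicator_of_isFiniteMeasure _ (h_meas 0) h_meas ?_
  filter_upwards [hν.ae_gramForm_single_ne_zero hd hij] with P hP
  have h_cont : Continuous fun s =>
      (reflQuad P (Pi.single i 1) - s) * (reflQuad P (Pi.single j 1) - s) := by fun_prop
  have h_ne : (reflQuad P (Pi.single i 1) - 0) * (reflQuad P (Pi.single j 1) - 0) ≠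
      ‖reflForm P (Pi.single i 1) (Pi.single j 1)‖ ^ 2 := by
    simpa only [sub_zero] using sub_ne_zero.1 hP
  rcases h_ne.lt_or_gt with h | h
  · exact (h_cont.tendsto 0 |>.eventually_lt_const h).mono fun s hs => iff_of_true hs h
  · exact (h_cont.tendsto 0 |>.eventually_const_lt h).mono fun s hs =>
      iff_of_false hs.not_gt h.not_gt

lemma IsUniformProj.measure_sepEvent_eq_betweenProb_zero {d k : ℕ}
    {ν : Measure (Matrix (Fin d) (Fin d) 𝕜)} (hν : IsUniformProj k ν) (h : 2 ≤ d) :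
    ν (sepEvent h) = betweenProb ν (Fin.castLE h 0) (Fin.castLE h 1) 0 := by
  refine measure_congr ?_
  filter_upwards [hν.2.1] with P hP
  refine propext ((hP.mem_sepEvent_iff h).trans ?_)
  change _ ↔ (_ - 0) * (_ - 0) < _
  rw [gramForm, sub_neg, sub_zero, sub_zero]

lemma pi_mul_gammaRatio_one_half_mul_symBetaConst {x : ℝ} (hx : 0 < x) :
    Real.pi * (gammaRatio (1 / 2) * symBetaConst x) = gammaRatio x := by
  rw [symBetaConst_eq_gammaRatio_div_sqrt_pi hx, gammaRatio, add_halves, Real.Gamma_one,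
    Real.Gamma_one_half_eq, div_mul_div_comm, one_mul, Real.mul_self_sqrt Real.pi_pos.le,
    mul_div_cancel₀ _ Real.pi_ne_zero]

lemma fieldBeta_real : fieldBeta ℝ = 1 / 2 := by rw [fieldBeta, Module.finrank_self, Nat.cast_one]

variable {d m : ℕ} {ν : Measure (Matrix (Fin d) (Fin d) ℝ)} {i j : Fin d}

lemma IsUniformProj.gammaRatio_mul_lintegral_mul_betweenProb (hν : IsUniformProj (m + 1) ν)
    (hd : m + 1 + (m + 1) = d) (hij : i ≠ j) {φ : ℝ → ENNReal} (hφ : Measurable φ) :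
    ENNReal.ofReal (gammaRatio (m + 1 / 2)) * ∫⁻ s, φ s * betweenProb ν i j s =
      ENNReal.ofReal (gammaRatio ((m + 1) / 2)) *
        ∫⁻ s in Set.Ioo (-1) 1, φ s * ENNReal.ofReal ((1 - s ^ 2) ^ ((m : ℝ) / 2)) := by
  have hm : (0 : ℝ) < (m + 1) / 2 := by positivity
  have h_off := hν.lintegral_mul_norm_reflForm (q := m + 1 + m) hd hij hφ
  have h_shape : fieldBeta ℝ * (m + 1 : ℕ) = (m + 1) / 2 := by
    rw [fieldBeta_real, Nat.cast_add_one]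
    ring
  have h_half : fieldBeta ℝ * (m + 1 + m : ℕ) = m + 1 / 2 := by
    rw [fieldBeta_real]
    push_cast
    ring
  have h_density (s : ℝ) (hs : s ∈ Set.Ioo (-1) 1) :
      ENNReal.ofReal ((1 - s ^ 2) ^ (((m : ℝ) + 1) / 2 - 1)) *
        (φ s * ENNReal.ofReal √(1 - s ^ 2)) =
      φ s * ENNReal.ofReal ((1 - s ^ 2) ^ ((m : ℝ) / 2)) := by
    have h_pos : 0 < 1 - s ^ 2 := by nlinarith [hs.1, hs.2]
    rw [mul_left_comm, ← ENNReal.ofReal_mul (by positivity), Real.sqrt_eq_rpow,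
      ← Real.rpow_add h_pos]
    ring_nf
  rw [hν.lintegral_reflQuad_single_eq_lintegral_symBeta hd i
      (f := fun c => φ c * ENNReal.ofReal √(1 - c ^ 2)) (by fun_prop), h_shape, h_half,
    fieldBeta_real, lintegral_symBeta hm (by fun_prop),
    setLIntegral_congr_fun measurableSet_Ioo h_density] at h_off
  rw [← hν.lintegral_mul_norm_reflForm_eq_lintegral_mul_betweenProb hij hφ, mul_left_comm, h_off,
    ← pi_mul_gammaRatio_one_half_mul_symBetaConst hm, ENNReal.ofReal_mul Real.pi_pos.le,
    ENNReal.ofReal_mul (gammaRatio_pos one_half_pos).le, mul_assoc, mul_assoc]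

lemma IsUniformProj.ae_gammaRatio_mul_betweenProb (hν : IsUniformProj (m + 1) ν)
    (hd : m + 1 + (m + 1) = d) (hij : i ≠ j) :
    ∀ᵐ s, ENNReal.ofReal (gammaRatio (m + 1 / 2)) * betweenProb ν i j s =
      ENNReal.ofReal (gammaRatio ((m + 1) / 2)) * (Set.Ioo (-1) 1).indicator
        (fun s => ENNReal.ofReal ((1 - s ^ 2) ^ ((m : ℝ) / 2))) s := by
  have := hν.1
  have h_between := measurable_betweenProb ν i j
  have h_dens : Measurable ((Set.Ioo (-1) 1).indicator
      fun s => ENNReal.ofReal ((1 - s ^ 2) ^ ((m : ℝ) / 2))) :=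
    Measurable.indicator (by fun_prop) measurableSet_Ioo
  refine ae_eq_of_forall_setLIntegral_eq_of_sigmaFinite (h_between.const_mul _)
    (h_dens.const_mul _) fun S hS _ => ?_
  have h := hν.gammaRatio_mul_lintegral_mul_betweenProb hd hij (measurable_one.indicator hS)
  have h_mul (f : ℝ → ENNReal) (s : ℝ) : S.indicator 1 s * f s = S.indicator f s := by
    rw [← Set.indicator_mul_left, Pi.one_def]
    simp only [one_mul]
  simp only [h_mul (betweenProb ν i j),
    h_mul fun s => ENNReal.ofReal ((1 - s ^ 2) ^ ((m : ℝ) / 2))] at h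
  rw [lintegral_const_mul _ h_between, lintegral_const_mul _ h_dens, ← lintegral_indicator hS, h,
    setLIntegral_indicator hS, setLIntegral_indicator measurableSet_Ioo, Set.inter_comm]

lemma IsUniformProj.gammaRatio_mul_betweenProb_zero [NeZero m] (hν : IsUniformProj (m + 1) ν)
    (hd : m + 1 + (m + 1) = d) (hij : i ≠ j) :
    ENNReal.ofReal (gammaRatio (m + 1 / 2)) * betweenProb ν i j 0 =
      ENNReal.ofReal (gammaRatio ((m + 1) / 2)) := by
  have h_freq := mem_closure_iff_frequently.1
    (Measure.dense_of_ae (hν.ae_gammaRatio_mul_betweenProb hd hij) 0)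
  have h_left := ENNReal.Tendsto.const_mul (a := ENNReal.ofReal (gammaRatio (m + 1 / 2)))
    (hν.tendsto_betweenProb_zero hd hij) (Or.inr ENNReal.ofReal_ne_top)
  have h_right : Continuous fun s : ℝ => ENNReal.ofReal (gammaRatio ((m + 1) / 2)) *
      ENNReal.ofReal ((1 - s ^ 2) ^ ((m : ℝ) / 2)) :=
    (ENNReal.continuous_const_mul ENNReal.ofReal_ne_top).comp (ENNReal.continuous_ofReal.comp
      (Continuous.rpow_const (by fun_prop) fun _ => Or.inr (by positivity)))
  have h_lim := h_right.tendsto 0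
  rw [zero_pow two_ne_zero, sub_zero, Real.one_rpow, ENNReal.ofReal_one, mul_one] at h_lim
  refine tendsto_nhds_unique_of_frequently_eq h_left h_lim ((h_freq.and_eventually
    (Ioo_mem_nhds (neg_one_lt_zero (R := ℝ)) one_pos)).mono fun s ⟨hs, h_mem⟩ => ?_)
  rwa [Set.mem_ofPred_eq, Set.indicator_of_mem (Set.mem_Ioo.2 h_mem)] at hs

lemma IsUniformProj.measure_sepEvent_real (hm : 0 < m) (hν : IsUniformProj (m + 1) ν)
    (hd : m + 1 + (m + 1) = d) (h : 2 ≤ d) :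
    ν (sepEvent h) = ENNReal.ofReal (sepProbR (m + 1)) := by
  have : NeZero m := ⟨hm.ne'⟩
  have hm' : (0 : ℝ) < m := Nat.cast_pos.2 hm
  have h_pos := gammaRatio_pos (by positivity : 0 < (m : ℝ) + 1 / 2)
  have h_dup := gammaRatio_mul_gammaRatio_add_half hm'
  have h_dup_half := gammaRatio_mul_gammaRatio_add_half (half_pos hm')
  have := gammaRatio_pos (half_pos hm')
  have h_value : gammaRatio ((m + 1) / 2) = gammaRatio (m + 1 / 2) * sepProbR (m + 1) := by
    rw [sepProbR_add_one hm, ← mul_div_assoc, eq_div_iff (by positivity), add_div]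
    linear_combination 2 * h_dup_half - h_dup
  have h_zero := hν.gammaRatio_mul_betweenProb_zero hd (i := Fin.castLE h 0)
    (j := Fin.castLE h 1) (by simp)
  rw [h_value, ENNReal.ofReal_mul h_pos.le] at h_zero
  rw [hν.measure_sepEvent_eq_betweenProb_zero h]
  exact (ENNReal.mul_right_inj (ENNReal.ofReal_pos.2 h_pos).ne' ENNReal.ofReal_ne_top).1 h_zero

end Real

theorem statement16 :
    (∀ n : ℕ, ∀ hn : 2 ≤ n, ∀ ν : Measure (Matrix (Fin (2*n)) (Fin (2*n)) ℝ),
        IsUniformProj n ν →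
        (ν (sepEvent (by omega))).toReal = sepProbR n) ∧
    Filter.Tendsto sepProbR Filter.atTop (nhds (1 / Real.sqrt 2)) ∧
    (∀ n : ℕ, ∀ hn : 2 ≤ n, ∀ ν : Measure (Matrix (Fin (2*n)) (Fin (2*n)) ℂ),
        IsUniformProj n ν →
        (ν (sepEvent (by omega))).toReal = sepProbC n) ∧
    Filter.Tendsto sepProbC Filter.atTop (nhds (1/2 + 1/Real.pi)) := by
  refine ⟨fun n hn ν hν => ?_, tendsto_sepProbR, fun n hn ν hν => ?_, tendsto_sepProbC⟩
  · obtain ⟨m, rfl⟩ := Nat.exists_eq_add_of_le' (one_le_two.trans hn)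
    have hm : 0 < m := Nat.le_of_succ_le_succ hn
    rw [hν.measure_sepEvent_real hm (two_mul _).symm,
      ENNReal.toReal_ofReal (sepProbR_add_one_pos hm).le]
  · obtain ⟨m, rfl⟩ := Nat.exists_eq_add_of_le' (one_le_two.trans hn)
    have hm : 0 < m := Nat.le_of_succ_le_succ hn
    rw [hν.measure_sepEvent_complex hm (two_mul _).symm,
      ENNReal.toReal_ofReal (sepProbC_add_one_pos hm).le]

end
end

section
/- Let P be a uniformly distributed projection in Proj_𝔽(n,2n) and let X, Y ∈ Proj_𝔽(1,2n). Then the probability that P separates X and Y satisfies P(φ_P(X) ≠ φ_P(Y)) ≤ ‖X − Y‖. -/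
/-!
Only the invariance of the law of `P` under unitary conjugation matters. Let the unit vectors `x`
and `y` span the ranges of `X` and `Y`; after a change of phase of `y` and a choice of `e ⊥ x`,
they are the points at angles `0` and `θ ∈ [0, π/2]` of the great circle
`u t = cos t • x + sin t • e`. Reflections in points of the circle are unitary and reverse its
orientation, so the probability that `P` separates the projections onto `u s` and `u (s + θ)` does
not depend on `s`. For fixed `P`, `tr (P (u s) (u s)*)` has the form `a + b cos 2s + c sin 2s`,
which, unless it is constant, exceeds the threshold on a single arc; hence in the variable `2s`, of
period `2π`, separation happens on a set of measure at most `4θ`. Averaging over the circle bounds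
the probability by `2θ/π`. Jordan's inequality gives `2θ/π ≤ sin θ`, and `sin θ ≤ ‖X - Y‖` follows
by evaluating `X - Y` at `e`.
-/

open MeasureTheory ProbabilityTheory Matrix
open scoped ComplexOrder

noncomputable section

attribute [local instance] Classical.propDecidable

variable {𝕜 : Type} [RCLike 𝕜]

section SignChange

open Real

variable {κ s : ℝ}

theorem lt_cos_of_abs_lt_arccos (h : |s| < arccos κ) : κ < cos s := by
  by_contra! hs
  have hle : arccos κ ≤ arccos (cos |s|) := arccos_le_arccos ((cos_abs s).le.trans hs)
  rw [arccos_cos (abs_nonneg s) (h.le.trans (arccos_le_pi κ))] at hle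
  exact hle.not_gt h

theorem cos_lt_of_arccos_lt (h₁ : arccos κ < s) (h₂ : s < 2 * π - arccos κ) : cos s < κ := by
  wlog hs : s ≤ π generalizing s
  · rw [← cos_two_pi_sub]
    exact this (by linarith) (by linarith) (by linarith)
  by_contra! hκ
  have hle : arccos (cos s) ≤ arccos κ := arccos_le_arccos hκ
  rw [arccos_cos ((arccos_nonneg κ).trans h₁.le) hs] at hle
  exact hle.not_gt h₁

theorem exists_polar_form (b c : ℝ) :
    ∃ r t₀ : ℝ, 0 ≤ r ∧ ∀ t, cos t * b + sin t * c = r * cos (t - t₀) := by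
  refine ⟨‖(⟨b, c⟩ : ℂ)‖, Complex.arg ⟨b, c⟩, norm_nonneg _, fun t => ?_⟩
  have hb := Complex.norm_mul_cos_arg ⟨b, c⟩
  have hc := Complex.norm_mul_sin_arg ⟨b, c⟩
  rw [cos_sub]
  linear_combination -(cos t) * hb - sin t * hc

theorem volume_inter_Ioc_eq_of_periodic {A : Set ℝ} {T : ℝ} (hA : MeasurableSet A)
    (hper : Function.Periodic (· ∈ A) T) (hT : 0 < T) (a b : ℝ) :
    volume (A ∩ Set.Ioc a (a + T)) = volume (A ∩ Set.Ioc b (b + T)) :=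
  (isAddFundamentalDomain_Ioc hT a volume).measure_set_eq (isAddFundamentalDomain_Ioc hT b volume)
    hA fun g => Set.ext fun t => (hper.map_vadd_zmultiples g t).to_iff

/-- The parameters `t` such that `f t` and `f (t + δ)` lie on different sides of the threshold `κ`.
As in `phiGT`, the value `κ` itself counts as lying below. -/
def crossingSet (f : ℝ → ℝ) (κ δ : ℝ) : Set ℝ := {t | ¬ (κ < f t ↔ κ < f (t + δ))}

theorem measurableSet_crossingSet {f : ℝ → ℝ} (hf : Measurable f) (κ δ : ℝ) :
    MeasurableSet (crossingSet f κ δ) :=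
  ((measurableSet_lt measurable_const hf).iff
    (measurableSet_lt measurable_const (hf.comp (measurable_add_const δ)))).compl

theorem periodic_mem_crossingSet {f : ℝ → ℝ} {T : ℝ} (hf : Function.Periodic f T) (κ δ : ℝ) :
    Function.Periodic (· ∈ crossingSet f κ δ) T := fun t => by
  simp only [crossingSet, Set.mem_ofPred_eq, hf t, add_right_comm t T δ, hf (t + δ)]

/-- On the period that starts at the left end of the arc `|t - t₀| < arccos κ`, where `cos (t - t₀)`
exceeds `κ`, a crossing happens only within `δ` before one of the two ends of that arc. -/
theorem volume_crossingSet_cos_sub_le (κ t₀ : ℝ) {δ : ℝ} (hδ : 0 ≤ δ) :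
    volume (crossingSet (fun t => cos (t - t₀)) κ δ ∩ Set.Ioc 0 (2 * π))
      ≤ ENNReal.ofReal (2 * δ) := by
  set α := arccos κ
  set S := crossingSet (fun t => cos (t - t₀)) κ δ
  have hS : MeasurableSet S := measurableSet_crossingSet (by fun_prop) κ δ
  have hper : Function.Periodic (· ∈ S) (2 * π) :=
    periodic_mem_crossingSet (cos_periodic.sub_const t₀) κ δ
  have hcover : S ∩ Set.Ioc (t₀ - α) (t₀ - α + 2 * π) ⊆
      Set.Icc (t₀ + α - δ) (t₀ + α) ∪ Set.Icc (t₀ - α + 2 * π - δ) (t₀ - α + 2 * π) := by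
    rintro t ⟨ht, hleft, hright⟩
    contrapose! ht
    simp only [Set.mem_union, Set.mem_Icc, not_or, not_and_or, not_le] at ht
    simp only [S, crossingSet, Set.mem_ofPred_eq, not_not]
    by_cases hα : t + δ < t₀ + α
    · exact iff_of_true (lt_cos_of_abs_lt_arccos (abs_lt.mpr ⟨by linarith, by linarith⟩))
        (lt_cos_of_abs_lt_arccos (abs_lt.mpr ⟨by linarith, by linarith⟩))
    · have h₁ : t₀ + α < t := by grind
      have h₂ : t + δ < t₀ - α + 2 * π := by grind
      exact iff_of_false (cos_lt_of_arccos_lt (by linarith) (by linarith)).not_gt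
        (cos_lt_of_arccos_lt (by linarith) (by linarith)).not_gt
  calc volume (S ∩ Set.Ioc 0 (2 * π))
      = volume (S ∩ Set.Ioc (t₀ - α) (t₀ - α + 2 * π)) := by
        simpa only [zero_add] using volume_inter_Ioc_eq_of_periodic hS hper two_pi_pos 0 (t₀ - α)
    _ ≤ ENNReal.ofReal δ + ENNReal.ofReal δ := by
        simpa using (measure_mono (μ := volume) hcover).trans (measure_union_le _ _)
    _ = ENNReal.ofReal (2 * δ) := by rw [← ENNReal.ofReal_add hδ hδ, two_mul]

theorem volume_crossingSet_trig_le (a b c κ : ℝ) {δ : ℝ} (hδ : 0 ≤ δ) :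
    volume (crossingSet (fun t => a + cos t * b + sin t * c) κ δ ∩ Set.Ioc 0 (2 * π))
      ≤ ENNReal.ofReal (2 * δ) := by
  obtain ⟨r, t₀, hr, hpolar⟩ := exists_polar_form b c
  simp only [add_assoc, hpolar]
  rcases hr.eq_or_lt with rfl | hr
  · simp [crossingSet]
  have hscale (t : ℝ) : κ < a + r * cos (t - t₀) ↔ (κ - a) / r < cos (t - t₀) := by
    rw [div_lt_iff₀' hr, sub_lt_iff_lt_add']
  simp only [crossingSet, hscale]
  exact volume_crossingSet_cos_sub_le _ t₀ hδ

end SignChange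

section Averaging

open Real

theorem mul_measure_univ_le_of_prodMk_slices {α Ω : Type*} [MeasurableSpace α] [MeasurableSpace Ω]
    {μ : Measure α} {ν : Measure Ω} [SFinite μ] [SFinite ν] {T : Set (α × Ω)}
    (hT : MeasurableSet T) {m M : ENNReal} (hm : ∀ t, m ≤ ν {ω | (t, ω) ∈ T})
    (hM : ∀ ω, μ {t | (t, ω) ∈ T} ≤ M) : m * μ Set.univ ≤ M * ν Set.univ :=
  calc m * μ Set.univ = ∫⁻ _, m ∂μ := (lintegral_const m).symm
    _ ≤ ∫⁻ t, ν {ω | (t, ω) ∈ T} ∂μ := lintegral_mono hm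
    _ = (μ.prod ν) T := (Measure.prod_apply hT).symm
    _ = ∫⁻ ω, μ {t | (t, ω) ∈ T} ∂ν := Measure.prod_apply_symm hT
    _ ≤ ∫⁻ _, M ∂ν := lintegral_mono hM
    _ = M * ν Set.univ := lintegral_const M

theorem le_of_forall_le_measureReal_mem_crossingSet {Ω : Type*} [MeasurableSpace Ω]
    {ν : Measure Ω} [IsProbabilityMeasure ν] {a b c : Ω → ℝ} (ha : Measurable a)
    (hb : Measurable b) (hc : Measurable c) {κ δ m : ℝ} (hδ : 0 ≤ δ)
    (hm : ∀ t, m ≤ ν.real {ω | t ∈ crossingSet (fun s => a ω + cos s * b ω + sin s * c ω) κ δ}) :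
    m ≤ δ / π := by
  set f : ℝ × Ω → ℝ := fun q => a q.2 + cos q.1 * b q.2 + sin q.1 * c q.2
  have hf : Measurable f := by fun_prop
  have hT : MeasurableSet {q : ℝ × Ω | ¬ (κ < f q ↔ κ < f (q.1 + δ, q.2))} :=
    ((measurableSet_lt measurable_const hf).iff
      (measurableSet_lt measurable_const (hf.comp (by fun_prop)))).compl
  have hslice (ω : Ω) : volume.restrict (Set.Ioc 0 (2 * π))
      (crossingSet (fun s => a ω + cos s * b ω + sin s * c ω) κ δ) ≤ ENNReal.ofReal (2 * δ) := by
    rw [Measure.restrict_apply (measurableSet_crossingSet (by fun_prop) κ δ)]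
    exact volume_crossingSet_trig_le _ _ _ κ hδ
  have hmean : ENNReal.ofReal m * ENNReal.ofReal (2 * π) ≤ ENNReal.ofReal (2 * δ) := by
    simpa using mul_measure_univ_le_of_prodMk_slices hT
      (fun t => (ENNReal.ofReal_le_ofReal (hm t)).trans_eq ofReal_measureReal) hslice
  rw [← ENNReal.ofReal_mul' two_pi_pos.le, ENNReal.ofReal_le_ofReal_iff (by positivity)] at hmean
  rw [le_div_iff₀ pi_pos]
  linarith

end Averaging

section RankOneProj

open InnerProductSpace

variable {ι : Type*}

/-- The matrix `u u*`. For a unit vector `u` it is the orthogonal projection onto the line through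
`u`; otherwise it is not idempotent in general. -/
def rankOneProj (u : EuclideanSpace 𝕜 ι) : Matrix ι ι 𝕜 := vecMulVec u (star u.ofLp)

theorem rankOneProj_smul_of_norm_eq_one {z : 𝕜} (hz : ‖z‖ = 1) (u : EuclideanSpace 𝕜 ι) :
    rankOneProj (z • u) = rankOneProj u := by
  have hzz : z * star z = 1 := by
    rw [RCLike.star_def, RCLike.mul_conj, hz, RCLike.ofReal_one, one_pow]
  simp only [rankOneProj, WithLp.ofLp_smul, star_smul, vecMulVec_smul, smul_vecMulVec, smul_smul,
    mul_comm (star z), hzz, one_smul]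

variable [Fintype ι]

theorem toEuclideanCLM_rankOneProj [DecidableEq ι] (u : EuclideanSpace 𝕜 ι) :
    toEuclideanCLM (𝕜 := 𝕜) (rankOneProj u) = rankOne 𝕜 u u := by
  ext v i
  simp [rankOneProj, vecMulVec_mulVec, EuclideanSpace.inner_eq_star_dotProduct, dotProduct_comm,
    mul_comm]

theorem isStarProjection_rankOneProj {u : EuclideanSpace 𝕜 ι} (hu : ‖u‖ = 1) :
    IsStarProjection (rankOneProj u) := by
  have h := (isStarProjection_rankOne_self (𝕜 := 𝕜) hu).map (toEuclideanCLM (n := ι) (𝕜 := 𝕜)).symm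
  rwa [← toEuclideanCLM_rankOneProj, StarAlgEquiv.symm_apply_apply] at h

theorem conj_rankOneProj [DecidableEq ι] (U : Matrix ι ι 𝕜) (u : EuclideanSpace 𝕜 ι) :
    U * rankOneProj u * star U = rankOneProj (toEuclideanCLM (𝕜 := 𝕜) U u) := by
  simp only [rankOneProj, mul_vecMulVec, vecMulVec_mul, star_eq_conjTranspose, ofLp_toEuclideanCLM,
    star_mulVec]

end RankOneProj

theorem exists_eq_rankOne_of_isStarProjection {E : Type*} [NormedAddCommGroup E]
    [InnerProductSpace 𝕜 E] [CompleteSpace E] {T : E →L[𝕜] E} (hT : IsStarProjection T)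
    (hrank : Module.finrank 𝕜 T.range = 1) :
    ∃ u : E, ‖u‖ = 1 ∧ T = InnerProductSpace.rankOne 𝕜 u u := by
  obtain ⟨_, hT⟩ := isStarProjection_iff_eq_starProjection_range.mp hT
  obtain ⟨v, hv, hv0⟩ := T.range.exists_mem_ne_zero_of_ne_bot
    (fun h => by rw [h, finrank_bot] at hrank; exact zero_ne_one hrank)
  have hu0 : (‖v‖⁻¹ : 𝕜) • v ≠ 0 := by simpa using hv0
  have hu : ‖(‖v‖⁻¹ : 𝕜) • v‖ = 1 := norm_smul_inv_norm hv0
  have hspan := eq_span_singleton_of_mem_of_finrank_eq_one hrank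
    (T.range.smul_mem (‖v‖⁻¹ : 𝕜) hv) hu0
  refine ⟨_, hu, ContinuousLinearMap.ext fun w => ?_⟩
  rw [InnerProductSpace.rankOne_apply, ← Submodule.starProjection_unit_singleton 𝕜 hu, hT]
  simp only [hspan]

theorem IsProjOfRank.exists_eq_rankOneProj {d : ℕ} {X : Matrix (Fin d) (Fin d) 𝕜}
    (hX : IsProjOfRank 1 X) :
    ∃ u : EuclideanSpace 𝕜 (Fin d), ‖u‖ = 1 ∧ X = rankOneProj u := by
  obtain ⟨hherm, hidem, hrank⟩ := hX
  have hstar : IsStarProjection (toEuclideanCLM (𝕜 := 𝕜) X) :=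
    IsStarProjection.map ⟨hidem, hherm⟩ _
  rw [rank_eq_finrank_range_toLin X (EuclideanSpace.basisFun (Fin d) 𝕜).toBasis
    (EuclideanSpace.basisFun (Fin d) 𝕜).toBasis, ← toEuclideanLin_eq_toLin_orthonormal] at hrank
  obtain ⟨u, hu, hXu⟩ := exists_eq_rankOne_of_isStarProjection hstar hrank
  rw [← toEuclideanCLM_rankOneProj] at hXu
  exact ⟨u, hu, (toEuclideanCLM (𝕜 := 𝕜)).injective hXu⟩

section Circle

open Real

variable {E : Type*} [NormedAddCommGroup E] [InnerProductSpace 𝕜 E] {x e : E}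

variable (𝕜) in
/-- The point at angle `t` on the great circle through the orthonormal vectors `x` and `e`. -/
def circlePoint (x e : E) (t : ℝ) : E := (cos t : 𝕜) • x + (sin t : 𝕜) • e

theorem circlePoint_zero (x e : E) : circlePoint 𝕜 x e 0 = x := by simp [circlePoint]

theorem inner_circlePoint (hx : ‖x‖ = 1) (he : ‖e‖ = 1) (hxe : inner 𝕜 x e = 0) (s t : ℝ) :
    inner 𝕜 (circlePoint 𝕜 x e s) (circlePoint 𝕜 x e t) = (cos (s - t) : 𝕜) := by
  have hex : inner 𝕜 e x = 0 := inner_eq_zero_symm.mp hxe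
  simp only [circlePoint, inner_add_left, inner_add_right, inner_smul_left, inner_smul_right,
    RCLike.conj_ofReal, inner_self_eq_one_of_norm_eq_one hx, inner_self_eq_one_of_norm_eq_one he,
    hxe, hex, cos_sub]
  push_cast
  ring

theorem norm_circlePoint (hx : ‖x‖ = 1) (he : ‖e‖ = 1) (hxe : inner 𝕜 x e = 0) (t : ℝ) :
    ‖circlePoint 𝕜 x e t‖ = 1 := by
  rw [norm_eq_sqrt_re_inner (𝕜 := 𝕜), inner_circlePoint hx he hxe]
  simp

theorem two_inner_circlePoint_smul_sub (hx : ‖x‖ = 1) (he : ‖e‖ = 1) (hxe : inner 𝕜 x e = 0)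
    (s t : ℝ) :
    (2 * inner 𝕜 (circlePoint 𝕜 x e s) (circlePoint 𝕜 x e t)) • circlePoint 𝕜 x e s
      - circlePoint 𝕜 x e t = circlePoint 𝕜 x e (2 * s - t) := by
  have hcos : 2 * cos (s - t) * cos s - cos t = cos (2 * s - t) := by
    rw [two_mul_cos_mul_cos, sub_sub_cancel_left, cos_neg, add_sub_cancel_left]
    ring_nf
  have hsin : 2 * cos (s - t) * sin s - sin t = sin (2 * s - t) := by
    rw [mul_right_comm, two_mul_sin_mul_cos, sub_sub_cancel, add_sub_cancel_left]
    ring_nf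
  rw [inner_circlePoint hx he hxe, circlePoint, circlePoint, circlePoint, ← hcos, ← hsin]
  push_cast
  module

theorem exists_smul_eq_circlePoint {x y : E} (hx : ‖x‖ = 1) (hy : ‖y‖ = 1)
    (hxy : y ∉ Submodule.span 𝕜 {x}) :
    ∃ (z : 𝕜) (e : E) (θ : ℝ), ‖z‖ = 1 ∧ ‖e‖ = 1 ∧ inner 𝕜 x e = 0 ∧ 0 ≤ θ ∧ θ ≤ π / 2 ∧
      z • y = circlePoint 𝕜 x e θ := by
  obtain ⟨z, hz, hzxy⟩ := RCLike.exists_norm_eq_mul_self (inner 𝕜 x y)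
  set p := ‖inner 𝕜 x y‖
  have hp0 : 0 ≤ p := norm_nonneg _
  have hp1 : p ≤ 1 := by simpa [hx, hy] using norm_inner_le_norm (𝕜 := 𝕜) x y
  set f := z • y - (p : 𝕜) • x
  have hf0 : f ≠ 0 := by
    intro h
    have hz0 : z ≠ 0 := norm_ne_zero_iff.mp (hz ▸ one_ne_zero)
    refine hxy (Submodule.mem_span_singleton.mpr ⟨z⁻¹ * p, ?_⟩)
    rw [mul_smul, ← sub_eq_zero.mp h, inv_smul_smul₀ hz0]
  have hxf : inner 𝕜 x f = 0 := by
    simp [f, inner_sub_right, inner_smul_right, ← hzxy, hx]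
  have hf : ‖f‖ = sin (arccos p) := by
    have hpyth := norm_add_sq_eq_norm_sq_add_norm_sq_of_inner_eq_zero ((p : 𝕜) • x) f
      (by rw [inner_smul_left, hxf, mul_zero])
    simp only [f, add_sub_cancel, norm_smul, hz, hy, hx, RCLike.norm_ofReal, mul_one,
      abs_mul_abs_self] at hpyth
    rw [sin_arccos, eq_comm, sqrt_eq_iff_mul_self_eq_of_pos (norm_pos_iff.mpr hf0)]
    linarith
  have hf0' : (‖f‖ : 𝕜) ≠ 0 := RCLike.ofReal_ne_zero.mpr (norm_ne_zero_iff.mpr hf0)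
  refine ⟨z, (‖f‖⁻¹ : 𝕜) • f, arccos p, hz, norm_smul_inv_norm hf0,
    by rw [inner_smul_right, hxf, mul_zero], arccos_nonneg p, arccos_le_pi_div_two.mpr hp0, ?_⟩
  rw [circlePoint, cos_arccos (by linarith) hp1, ← hf, smul_inv_smul₀ hf0', add_sub_cancel]

end Circle

section RankOneProjCircle

open Real

variable {ι : Type*} [Fintype ι]

theorem exists_rankOneProj_circlePoint_eq (x e : EuclideanSpace 𝕜 ι) :
    ∃ A B C : Matrix ι ι 𝕜, ∀ t,
      rankOneProj (circlePoint 𝕜 x e t) = A + cos (2 * t) • B + sin (2 * t) • C := by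
  refine ⟨(1 / 2 : ℝ) • (rankOneProj x + rankOneProj e),
    (1 / 2 : ℝ) • (rankOneProj x - rankOneProj e),
    (1 / 2 : ℝ) • (vecMulVec x (star e.ofLp) + vecMulVec e (star x.ofLp)), fun t => ?_⟩
  have hexpand : rankOneProj (circlePoint 𝕜 x e t) = (cos t ^ 2) • rankOneProj x +
      (sin t ^ 2) • rankOneProj e +
      (sin t * cos t) • (vecMulVec x (star e.ofLp) + vecMulVec e (star x.ofLp)) := by
    ext i j
    simp [rankOneProj, circlePoint, vecMulVec_apply, RCLike.real_smul_eq_coe_mul]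
    ring
  rw [hexpand, sin_sq, cos_two_mul, sin_two_mul]
  module

variable [DecidableEq ι] {x e : EuclideanSpace 𝕜 ι}

theorem exists_mem_unitaryGroup_conj_circlePoint (hx : ‖x‖ = 1) (he : ‖e‖ = 1)
    (hxe : inner 𝕜 x e = 0) (s : ℝ) :
    ∃ U ∈ unitaryGroup ι 𝕜, ∀ t, U * rankOneProj (circlePoint 𝕜 x e t) * star U =
      rankOneProj (circlePoint 𝕜 x e (2 * s - t)) := by
  have hw := norm_circlePoint hx he hxe s
  refine ⟨2 * rankOneProj (circlePoint 𝕜 x e s) - 1,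
    (isStarProjection_rankOneProj hw).two_mul_sub_one_mem_unitary, fun t => ?_⟩
  rw [conj_rankOneProj, ← two_inner_circlePoint_smul_sub hx he hxe s t]
  simp [toEuclideanCLM_rankOneProj, two_mul, add_smul]

theorem abs_sin_sub_le_norm_rankOneProj_sub (hx : ‖x‖ = 1) (he : ‖e‖ = 1) (hxe : inner 𝕜 x e = 0)
    (s t : ℝ) : |sin (t - s)| ≤ ‖toEuclideanCLM (𝕜 := 𝕜)
      (rankOneProj (circlePoint 𝕜 x e s) - rankOneProj (circlePoint 𝕜 x e t))‖ := by
  -- evaluate at the unit vector of the circle orthogonal to its point at angle `s`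
  have hcos : cos (t - (s + π / 2)) = sin (t - s) := by
    rw [← sub_sub, cos_sub_pi_div_two]
  have hv := ContinuousLinearMap.unit_le_opNorm (toEuclideanCLM (𝕜 := 𝕜)
    (rankOneProj (circlePoint 𝕜 x e s) - rankOneProj (circlePoint 𝕜 x e t)))
    (circlePoint 𝕜 x e (s + π / 2)) (norm_circlePoint hx he hxe _).le
  simpa [toEuclideanCLM_rankOneProj, inner_circlePoint hx he hxe, hcos, norm_smul,
    norm_circlePoint hx he hxe] using hv

end RankOneProjCircle

section Separation

open Real

variable {d : ℕ}

/-- The matrices `P` that separate `X` and `Y` at the threshold `κ`; for `κ = 1/2` these are the `P`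
with `φ_P(X) ≠ φ_P(Y)`. -/
def separatingSet (κ : ℝ) (X Y : Matrix (Fin d) (Fin d) 𝕜) : Set (Matrix (Fin d) (Fin d) 𝕜) :=
  {P | ¬ (κ < traceInner P X ↔ κ < traceInner P Y)}

/-- Invariance of the law `ν` of a random matrix under conjugation by unitary matrices. -/
def IsUnitarilyInvariant (ν : Measure (Matrix (Fin d) (Fin d) 𝕜)) : Prop :=
  ∀ U ∈ unitaryGroup (Fin d) 𝕜, ν.map (fun P => U * P * star U) = ν

theorem separatingSet_comm (κ : ℝ) (X Y : Matrix (Fin d) (Fin d) 𝕜) :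
    separatingSet κ X Y = separatingSet κ Y X := by
  simp only [separatingSet, iff_comm]

theorem traceInner_add_smul_add_smul (P A B C : Matrix (Fin d) (Fin d) 𝕜) (b c : ℝ) :
    traceInner P (A + b • B + c • C) =
      traceInner P A + b * traceInner P B + c * traceInner P C := by
  simp [traceInner, mul_add, trace_add, trace_smul, RCLike.smul_re]

theorem traceInner_conj (P X U : Matrix (Fin d) (Fin d) 𝕜) :
    traceInner (star U * P * U) X = traceInner P (U * X * star U) := by
  rw [traceInner, traceInner, mul_assoc, mul_assoc, trace_mul_comm]
  simp only [mul_assoc]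

theorem measurable_matrix_apply (i j : Fin d) :
    Measurable fun P : Matrix (Fin d) (Fin d) 𝕜 => P i j :=
  (measurable_pi_apply j).comp (measurable_pi_apply i)

theorem measurable_traceInner (X : Matrix (Fin d) (Fin d) 𝕜) :
    Measurable fun P => traceInner P X := by
  simp only [traceInner, Matrix.trace, diag_apply, mul_apply]
  exact RCLike.measurable_re.comp <| Finset.measurable_sum _ fun i _ =>
    Finset.measurable_sum _ fun j _ => (measurable_matrix_apply i j).mul_const _

theorem measurable_mul_mul (V W : Matrix (Fin d) (Fin d) 𝕜) :
    Measurable fun P : Matrix (Fin d) (Fin d) 𝕜 => V * P * W := by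
  refine measurable_pi_lambda _ fun i => measurable_pi_lambda _ fun j => ?_
  simp only [mul_apply]
  exact Finset.measurable_sum _ fun k _ => (Finset.measurable_sum _ fun l _ =>
    (measurable_matrix_apply l k).const_mul _).mul_const _

theorem measurableSet_separatingSet (κ : ℝ) (X Y : Matrix (Fin d) (Fin d) 𝕜) :
    MeasurableSet (separatingSet κ X Y) :=
  ((measurableSet_lt measurable_const (measurable_traceInner X)).iff
    (measurableSet_lt measurable_const (measurable_traceInner Y))).compl

variable {ν : Measure (Matrix (Fin d) (Fin d) 𝕜)}

theorem IsUnitarilyInvariant.measureReal_separatingSet_conj (hν : IsUnitarilyInvariant ν) (κ : ℝ)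
    (X Y : Matrix (Fin d) (Fin d) 𝕜) {U : Matrix (Fin d) (Fin d) 𝕜}
    (hU : U ∈ unitaryGroup (Fin d) 𝕜) :
    ν.real (separatingSet κ (U * X * star U) (U * Y * star U)) = ν.real (separatingSet κ X Y) := by
  conv_rhs => rw [← hν (star U) (Unitary.star_mem hU), star_star,
    map_measureReal_apply (measurable_mul_mul _ _) (measurableSet_separatingSet κ X Y)]
  simp only [separatingSet, Set.preimage_ofPred_eq, traceInner_conj]

theorem IsUnitarilyInvariant.measureReal_separatingSet_circlePoint_le [IsProbabilityMeasure ν]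
    (hν : IsUnitarilyInvariant ν) (κ : ℝ) {x e : EuclideanSpace 𝕜 (Fin d)} (hx : ‖x‖ = 1)
    (he : ‖e‖ = 1) (hxe : inner 𝕜 x e = 0) (s : ℝ) {θ : ℝ} (hθ : 0 ≤ θ) :
    ν.real (separatingSet κ (rankOneProj (circlePoint 𝕜 x e s))
      (rankOneProj (circlePoint 𝕜 x e (s + θ)))) ≤ 2 * θ / π := by
  obtain ⟨A, B, C, hABC⟩ := exists_rankOneProj_circlePoint_eq x e
  refine le_of_forall_le_measureReal_mem_crossingSet (ν := ν) (κ := κ) (measurable_traceInner A)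
    (measurable_traceInner B) (measurable_traceInner C) (by positivity) fun t => Eq.le ?_
  -- the reflection exchanging the angles `s` and `t / 2 + θ` also exchanges `s + θ` and `t / 2`
  obtain ⟨U, hU, hreflect⟩ :=
    exists_mem_unitaryGroup_conj_circlePoint hx he hxe ((s + θ + t / 2) / 2)
  have hs : 2 * ((s + θ + t / 2) / 2) - s = (t + 2 * θ) / 2 := by ring
  have hsθ : 2 * ((s + θ + t / 2) / 2) - (s + θ) = t / 2 := by ring
  rw [← hν.measureReal_separatingSet_conj κ _ _ hU, hreflect, hreflect, hs, hsθ, separatingSet_comm]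
  simp only [separatingSet, crossingSet, hABC, traceInner_add_smul_add_smul, Set.mem_ofPred_eq,
    mul_div_cancel₀ _ (two_ne_zero (α := ℝ))]

theorem statement17_general [IsProbabilityMeasure ν] (hν : IsUnitarilyInvariant ν) (κ : ℝ)
    {X Y : Matrix (Fin d) (Fin d) 𝕜} (hX : IsProjOfRank 1 X) (hY : IsProjOfRank 1 Y) :
    ν.real (separatingSet κ X Y) ≤ opNorm (X - Y) := by
  obtain ⟨x, hx, rfl⟩ := hX.exists_eq_rankOneProj
  obtain ⟨y, hy, rfl⟩ := hY.exists_eq_rankOneProj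
  by_cases hxy : y ∈ Submodule.span 𝕜 {x}
  · obtain ⟨z, rfl⟩ := Submodule.mem_span_singleton.mp hxy
    have hz : ‖z‖ = 1 := by simpa [norm_smul, hx] using hy
    simp [rankOneProj_smul_of_norm_eq_one hz, separatingSet, opNorm]
  obtain ⟨z, e, θ, hz, he, hxe, hθ₀, hθ, hzy⟩ := exists_smul_eq_circlePoint hx hy hxy
  have hprob := hν.measureReal_separatingSet_circlePoint_le κ hx he hxe 0 hθ₀
  have hnorm := abs_sin_sub_le_norm_rankOneProj_sub hx he hxe 0 θ
  rw [circlePoint_zero, zero_add, ← hzy, rankOneProj_smul_of_norm_eq_one hz] at hprob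
  rw [circlePoint_zero, sub_zero, ← hzy, rankOneProj_smul_of_norm_eq_one hz] at hnorm
  calc ν.real (separatingSet κ (rankOneProj x) (rankOneProj y))
      ≤ 2 / π * θ := hprob.trans_eq (by ring)
    _ ≤ sin θ := mul_le_sin hθ₀ hθ
    _ ≤ |sin θ| := le_abs_self _
    _ ≤ opNorm (rankOneProj x - rankOneProj y) := hnorm

end Separation

theorem statement17 (n : ℕ)
    (ν : Measure (Matrix (Fin (2*n)) (Fin (2*n)) 𝕜)) (hν : IsUniformProj n ν)
    (X Y : Matrix (Fin (2*n)) (Fin (2*n)) 𝕜)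
    (hX : IsProjOfRank 1 X) (hY : IsProjOfRank 1 Y) :
    (ν {P | phiGT P X ≠ phiGT P Y}).toReal ≤ opNorm (X - Y) := by
  have : IsProbabilityMeasure ν := hν.1
  simpa [phiGT, separatingSet, measureReal_def] using statement17_general hν.2.2 (1 / 2) hX hY

end
end
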